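/- There exist a finitely presented group A₁ which is NFQ and has trivial center, a natural number n with a surjective homomorphism f : FreeGroup (Fin n) →* A₁ arising from a finite presentation of A₁, and a computable sequence z : ℕ → List (Fin n × Bool) of words, such that: (1) A₁ has solvable word problem, i.e. there is a computable function p : List (Fin n × Bool) → Bool with p w = true if and only if the element of FreeGroup (Fin n) represented by w lies in the kernel of f; and (2) the torsion problem for the set {z r : r ∈ ℕ} is unsolvable, i.e. there is no computable function q : ℕ → Bool with q r = true if and only if the element of A₁ represented by the word z r has finite order. -/

import Mathlib

/-!
The group is a finitely presented relative of Thompson's group `V`, in the style of Röver and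
Nekrashevych. A germ (`Germ S`) is a permutation of the long binary words with labels in the free
group on the states `S` of a finite automaton `M`. The group `PG M` is generated by
shifts `gX i`, transpositions `gS i` of the strands `1^i 0` and `1^(i+1) 0`, the exchange `gC` of
the two halves, and the labels `gL M i w` which let `w` act below the strand `1^i 0`. It plays the
role of a full group of prefix replacements with finite-state actions below them.

*Presentation.* A finite set of relations (`relSet`) implies an infinite family (`Sat.rels`,
`Sat.crels`) that allows one to compute with fractions `f * t * g⁻¹`, where `f`, `g` are positive
words in the shifts and `t` is a labelled strand permutation. These fractions form a subgroup `B`,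
which fixes the end `1^ω`, and the whole group is `B ∪ B c B` (`Rels.double`). Elements of `B c B`
move `1^ω`. An element of `B` with trivial germ has labels whose deep sections are trivial, so
that it is label-free (`Rels.dies_mem_H`), and then trivial by the Coxeter relations and the normal
form of positive words (`Rels.H_faithful`). So equality in `PG M` is equality of germs
(`theta_injective`), provided that all sections of `M` become trivial along `1^ω`. This faithfulness
also gives the triviality of the center (`Rels.center`).

*No finite quotients.* In a finite quotient the shift `x 1` has finite order, so the commutation of
distant strand transpositions and the braid relation force the transpositions to be trivial; then
the shifts coincide and vanish (`Rels.finite_collapse`). The labels form a commutative family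
in which each letter is the product of its sections, so they vanish when the sections
cancel (`SumZero`, `Rels.finite_trivial`).

*Word problem.* A word of length `n` rewrites a prefix and applies at most `n` letters of labels to
the rest of the input. The sections of a word of `n` states are words of length at most `n`, so a
nontrivial long section, reached after more steps than there are such words, has a repetition on its
path and recurs at arbitrarily deep levels. It is therefore enough to inspect all words of
one computable level (`psi_eq_one_iff`), which is primitive recursive (`primrecPred_psi`).

*Torsion.* The automaton `mAut I` is built from a two-register machine `I` and reads blocks of six
bits, three of which form a counter modulo eight. A configuration `c` is coded by a word `cw c`
increasing this counter, so its order is a multiple of eight. Its eighth power fixes all blocks,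
with sections which are trivial or conjugate to `cw c'` or its inverse, where `c'` is the next
configuration (`pow8_next`); it is trivial if there is no next configuration. Hence the order is
finite exactly if the machine halts (`finOrder_iff`), and the sections cancel in pairs as needed
above. A two-register machine with an undecidable halting problem is obtained by simulating
a Turing machine (`exists_undecidable_machine`), which in turn comes from Mathlib's compilation of
partial recursive functions to Turing machines.
-/

/-- A group is NFQ ('no finite quotients') if it has no proper subgroup of finite index. -/
def NFQ (G : Type*) [Group G] : Prop :=
  ∀ H : Subgroup G, H.index ≠ 0 → H = ⊤

/-- A group is finitely presented if it is isomorphic to the quotient of a free group of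
finite rank by the normal closure of a finite set of relators. -/
def IsFinitelyPresented (G : Type*) [Group G] : Prop :=
  ∃ (n : ℕ) (R : Finset (FreeGroup (Fin n))),
    Nonempty (G ≃* PresentedGroup (R : Set (FreeGroup (Fin n))))

namespace TP

/-! ### Letter-to-letter automata and their action on words -/

/-- A letter-to-letter automaton over the binary alphabet with state set `S`: a state reading the
bit `b` outputs `b` (or its negation, if `flip` holds) and passes to the state `sec s b`, to the
inverse of a state, or (`none`) to the trivial state. -/
structure Automaton (S : Type) where
  flip : S → Bool
  sec : S → Bool → Option (S × Bool)

/-- The element of the free group represented by an optional signed letter. -/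
def optWord {S : Type} : Option (S × Bool) → FreeGroup S
  | none => 1
  | some p => FreeGroup.mk [p]

namespace Automaton

variable {S : Type} (M : Automaton S)

/-- The section of a state, as an element of the free group on the states. -/
def secF (s : S) (b : Bool) : FreeGroup S := optWord (M.sec s b)

/-- One letter of input processed by a single state. -/
def letterPerm (s : S) : Equiv.Perm (Bool × FreeGroup S) where
  toFun p := (p.1 ^^ M.flip s, M.secF s p.1 * p.2)
  invFun p := (p.1 ^^ M.flip s, (M.secF s (p.1 ^^ M.flip s))⁻¹ * p.2)
  left_inv p := by simp
  right_inv p := by simp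

/-- One letter of input processed by a word of states. -/
def step : FreeGroup S →* Equiv.Perm (Bool × FreeGroup S) := FreeGroup.lift M.letterPerm

/-- Output bit of `w` on the input bit `b`. -/
def bit (w : FreeGroup S) (b : Bool) : Bool := (M.step w (b, 1)).1

/-- First-level section of `w` at the bit `b`. -/
def sec1 (w : FreeGroup S) (b : Bool) : FreeGroup S := (M.step w (b, 1)).2

lemma step_mul_right (w : FreeGroup S) : ∀ (b : Bool) (h k : FreeGroup S),
    M.step w (b, h * k) = ((M.step w (b, h)).1, (M.step w (b, h)).2 * k) := by
  induction w using FreeGroup.induction_on with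
  | C1 => intro b h k; simp
  | of s => intro b h k; simp [step, letterPerm, mul_assoc]
  | inv_of s ih =>
    intro b h k
    simp only [step, map_inv, FreeGroup.lift_apply_of]
    simp [letterPerm, Equiv.Perm.inv_def, Equiv.symm, mul_assoc]
  | mul w1 w2 h1 h2 =>
    intro b h k
    simp only [map_mul, Equiv.Perm.mul_apply]
    rw [h2, h1]

lemma step_apply (w : FreeGroup S) (b : Bool) (h : FreeGroup S) :
    M.step w (b, h) = (M.bit w b, M.sec1 w b * h) := by
  have := M.step_mul_right w b 1 h
  rw [one_mul] at this
  exact this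

@[simp] lemma bit_one (b : Bool) : M.bit 1 b = b := by simp [bit]
@[simp] lemma sec1_one (b : Bool) : M.sec1 1 b = 1 := by simp [sec1]

lemma bit_mul (w1 w2 : FreeGroup S) (b : Bool) : M.bit (w1 * w2) b = M.bit w1 (M.bit w2 b) := by
  have := M.step_apply (w1 * w2) b 1
  rw [map_mul, Equiv.Perm.mul_apply, step_apply, step_apply] at this
  exact (congrArg Prod.fst this).symm

lemma sec1_mul (w1 w2 : FreeGroup S) (b : Bool) :
    M.sec1 (w1 * w2) b = M.sec1 w1 (M.bit w2 b) * M.sec1 w2 b := by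
  have := M.step_apply (w1 * w2) b 1
  rw [map_mul, Equiv.Perm.mul_apply, step_apply, step_apply] at this
  simpa using (congrArg Prod.snd this).symm

@[simp] lemma bit_of (s : S) (b : Bool) : M.bit (FreeGroup.of s) b = (b ^^ M.flip s) := by
  simp [bit, step, letterPerm]
@[simp] lemma sec1_of (s : S) (b : Bool) : M.sec1 (FreeGroup.of s) b = M.secF s b := by
  simp [sec1, step, letterPerm]

lemma bit_inv_bit (w : FreeGroup S) (b : Bool) : M.bit w⁻¹ (M.bit w b) = b := by
  rw [← bit_mul]; simp
lemma bit_bit_inv (w : FreeGroup S) (b : Bool) : M.bit w (M.bit w⁻¹ b) = b := by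
  rw [← bit_mul]; simp

lemma sec1_inv (w : FreeGroup S) (b : Bool) : M.sec1 w⁻¹ (M.bit w b) = (M.sec1 w b)⁻¹ := by
  have := M.sec1_mul w⁻¹ w b
  rw [inv_mul_cancel, sec1_one] at this
  exact eq_inv_of_mul_eq_one_left this.symm

lemma sec1_inv' (w : FreeGroup S) (b : Bool) :
    M.sec1 w⁻¹ b = (M.sec1 w (M.bit w⁻¹ b))⁻¹ := by
  rw [← sec1_inv, bit_bit_inv]

lemma bit_eq (w : FreeGroup S) (b : Bool) : M.bit w b = (b ^^ M.bit w false) := by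
  induction w using FreeGroup.induction_on generalizing b with
  | C1 => simp
  | of s => simp
  | inv_of s ih =>
    have h1 := M.bit_bit_inv (FreeGroup.of s) b
    have h2 := M.bit_bit_inv (FreeGroup.of s) false
    simp only [bit_of] at h1 h2
    revert h1 h2
    cases M.bit (FreeGroup.of s)⁻¹ b <;> cases M.bit (FreeGroup.of s)⁻¹ false <;>
      cases M.flip s <;> cases b <;> simp
  | mul w1 w2 h1 h2 =>
    rw [bit_mul, bit_mul, h1, h2, h1 (M.bit w2 false)]
    simp

/-- Output of `w` on a word. -/
def out : FreeGroup S → List Bool → List Bool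
  | _, [] => []
  | w, b :: v => M.bit w b :: out (M.sec1 w b) v

/-- Section of `w` at a word. -/
def sect : FreeGroup S → List Bool → FreeGroup S
  | w, [] => w
  | w, b :: v => sect (M.sec1 w b) v

@[simp] lemma out_nil (w : FreeGroup S) : M.out w [] = [] := rfl
@[simp] lemma out_cons (w : FreeGroup S) (b : Bool) (v : List Bool) :
    M.out w (b :: v) = M.bit w b :: M.out (M.sec1 w b) v := rfl
@[simp] lemma sect_nil (w : FreeGroup S) : M.sect w [] = w := rfl
@[simp] lemma sect_cons (w : FreeGroup S) (b : Bool) (v : List Bool) :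
    M.sect w (b :: v) = M.sect (M.sec1 w b) v := rfl

@[simp] lemma length_out (w : FreeGroup S) (v : List Bool) : (M.out w v).length = v.length := by
  induction v generalizing w with
  | nil => rfl
  | cons b v ih => simp [ih]

@[simp] lemma out_one (v : List Bool) : M.out 1 v = v := by
  induction v with
  | nil => rfl
  | cons b v ih => simp [ih]

@[simp] lemma sect_one (v : List Bool) : M.sect 1 v = 1 := by
  induction v with
  | nil => rfl
  | cons b v ih => simp [ih]

lemma out_mul (w1 w2 : FreeGroup S) (v : List Bool) :
    M.out (w1 * w2) v = M.out w1 (M.out w2 v) := by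
  induction v generalizing w1 w2 with
  | nil => rfl
  | cons b v ih => simp [ih, bit_mul, sec1_mul]

lemma sect_mul (w1 w2 : FreeGroup S) (v : List Bool) :
    M.sect (w1 * w2) v = M.sect w1 (M.out w2 v) * M.sect w2 v := by
  induction v generalizing w1 w2 with
  | nil => rfl
  | cons b v ih => simp [ih, sec1_mul]

lemma sect_append (w : FreeGroup S) (u v : List Bool) :
    M.sect w (u ++ v) = M.sect (M.sect w u) v := by
  induction u generalizing w with
  | nil => rfl
  | cons b u ih => simp [ih]

lemma out_append (w : FreeGroup S) (u v : List Bool) :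
    M.out w (u ++ v) = M.out w u ++ M.out (M.sect w u) v := by
  induction u generalizing w with
  | nil => rfl
  | cons b u ih => simp [ih]

lemma out_out_inv (w : FreeGroup S) (v : List Bool) : M.out w (M.out w⁻¹ v) = v := by
  rw [← out_mul]; simp
lemma out_inv_out (w : FreeGroup S) (v : List Bool) : M.out w⁻¹ (M.out w v) = v := by
  rw [← out_mul]; simp

lemma sect_inv (w : FreeGroup S) (v : List Bool) : M.sect w⁻¹ (M.out w v) = (M.sect w v)⁻¹ := by
  have := M.sect_mul w⁻¹ w v
  rw [inv_mul_cancel, sect_one] at this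
  exact eq_inv_of_mul_eq_one_left this.symm

/-- The words all of whose sections at some level are trivial. -/
def Dies (w : FreeGroup S) : Prop := ∃ N, ∀ v : List Bool, v.length = N → M.sect w v = 1

/-- The action of a word of states on pairs (binary word, accumulated section). -/
def lab : FreeGroup S →* Equiv.Perm (List Bool × FreeGroup S) where
  toFun w :=
    { toFun := fun p => (M.out w p.1, M.sect w p.1 * p.2)
      invFun := fun p => (M.out w⁻¹ p.1, M.sect w⁻¹ p.1 * p.2)
      left_inv := fun p => by
        simp only [out_inv_out, ← mul_assoc, sect_inv, inv_mul_cancel, one_mul]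
      right_inv := fun p => by
        have := M.sect_inv w⁻¹ p.1
        rw [inv_inv] at this
        simp only [out_out_inv, ← mul_assoc, this, inv_mul_cancel, one_mul] }
  map_one' := by ext p : 1; simp
  map_mul' w1 w2 := by
    ext p : 1
    simp [out_mul, sect_mul, mul_assoc]

@[simp] lemma lab_apply (w : FreeGroup S) (v : List Bool) (h : FreeGroup S) :
    M.lab w (v, h) = (M.out w v, M.sect w v * h) := rfl

end Automaton

end TP

namespace TP

/-! ### Permutations of labelled words up to agreement on long words -/

/-- Pairs of a binary word and a group element labelling it. -/
abbrev Pt (S : Type) := List Bool × FreeGroup S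

section Germs

variable {S : Type}

/-- Agreement on all sufficiently long words. -/
def Ev (p q : Equiv.Perm (Pt S)) : Prop :=
  ∃ N, ∀ (v : List Bool) (h : FreeGroup S), N ≤ v.length → p (v, h) = q (v, h)

/-- Permutations changing the length of words by a bounded amount. -/
def BD (S : Type) : Subgroup (Equiv.Perm (Pt S)) where
  carrier := {p | ∃ D, ∀ x, x.1.length ≤ (p x).1.length + D ∧ (p x).1.length ≤ x.1.length + D}
  one_mem' := ⟨0, fun x => by simp⟩
  mul_mem' := by
    rintro p q ⟨D, hD⟩ ⟨D', hD'⟩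
    refine ⟨D + D', fun x => ?_⟩
    have h1 := hD (q x)
    have h2 := hD' x
    rw [Equiv.Perm.mul_apply]
    omega
  inv_mem' := by
    rintro p ⟨D, hD⟩
    refine ⟨D, fun x => ?_⟩
    have h1 := hD (p⁻¹ x)
    have h2 : p (p⁻¹ x) = x := p.apply_symm_apply x
    rw [h2] at h1
    omega

lemma BD_bound {p : Equiv.Perm (Pt S)} (hp : p ∈ BD S) :
    ∃ D, ∀ (v : List Bool) (h : FreeGroup S), v.length ≤ (p (v, h)).1.length + D ∧
      (p (v, h)).1.length ≤ v.length + D :=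
  hp.imp fun _ hD v h => hD (v, h)

lemma Ev.refl (p : Equiv.Perm (Pt S)) : Ev p p := ⟨0, fun _ _ _ => rfl⟩

lemma Ev.symm {p q : Equiv.Perm (Pt S)} (h : Ev p q) : Ev q p :=
  h.imp fun _ hN v x hv => (hN v x hv).symm

lemma Ev.trans {p q r : Equiv.Perm (Pt S)} (h : Ev p q) (h' : Ev q r) : Ev p r := by
  obtain ⟨N, hN⟩ := h
  obtain ⟨N', hN'⟩ := h'
  exact ⟨max N N', fun v x hv => (hN v x (le_of_max_le_left hv)).trans
    (hN' v x (le_of_max_le_right hv))⟩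

lemma Ev.mul_left {p q : Equiv.Perm (Pt S)} (r : Equiv.Perm (Pt S)) (h : Ev p q) :
    Ev (r * p) (r * q) :=
  h.imp fun _ hN v x hv => congrArg r (hN v x hv)

lemma Ev.mul_right {p q r : Equiv.Perm (Pt S)} (hr : r ∈ BD S) (h : Ev p q) :
    Ev (p * r) (q * r) := by
  obtain ⟨N, hN⟩ := h
  obtain ⟨D, hD⟩ := BD_bound hr
  refine ⟨N + D, fun v x hv => ?_⟩
  have := (hD v x).1
  exact hN (r (v, x)).1 (r (v, x)).2 (by
    omega)

/-- The normal subgroup of permutations fixing all long words. -/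
def EvTriv (S : Type) : Subgroup (BD S) where
  carrier := {p | Ev (p : Equiv.Perm (Pt S)) 1}
  one_mem' := Ev.refl 1
  mul_mem' := by
    intro p q hp hq
    have h1 := Ev.mul_right q.2 hp
    rw [one_mul] at h1
    exact h1.trans hq
  inv_mem' := by
    intro p hp
    have h1 := Ev.mul_left (p : Equiv.Perm (Pt S))⁻¹ hp
    rw [inv_mul_cancel, mul_one] at h1
    exact h1.symm

instance : (EvTriv S).Normal where
  conj_mem := by
    intro p hp g
    have h1 := Ev.mul_right (g⁻¹).2 (Ev.mul_left (g : Equiv.Perm (Pt S)) hp)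
    have h2 : (g : Equiv.Perm (Pt S)) * 1 * ((g⁻¹ : BD S) : Equiv.Perm (Pt S)) = 1 := by simp
    rw [h2] at h1
    exact h1

/-- Germs at infinity of length-quasi-preserving permutations of labelled words. -/
abbrev Germ (S : Type) := BD S ⧸ EvTriv S

/-- The germ of a permutation. -/
def germ : BD S →* Germ S := QuotientGroup.mk' (EvTriv S)

lemma germ_eq {p q : BD S} :
    germ p = germ q ↔ Ev (p : Equiv.Perm (Pt S)) (q : Equiv.Perm (Pt S)) := by
  have : germ p = germ q ↔ p⁻¹ * q ∈ EvTriv S := QuotientGroup.eq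
  rw [this]
  constructor
  · intro h
    have h1 := Ev.mul_left (p : Equiv.Perm (Pt S)) h
    simp only [Subgroup.coe_mul, Subgroup.coe_inv, mul_inv_cancel_left, mul_one] at h1
    exact h1.symm
  · intro h
    have h1 := Ev.mul_left (p : Equiv.Perm (Pt S))⁻¹ h
    rw [inv_mul_cancel] at h1
    exact h1.symm

lemma germ_surjective : Function.Surjective (germ (S := S)) := QuotientGroup.mk'_surjective _

/-- The permutation `p` of labelled words acting below the letter `b`. -/
def underFun (b : Bool) (p : Pt S → Pt S) : Pt S → Pt S
  | ([], h) => ([], h)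
  | (a :: v, h) => if a = b then (a :: (p (v, h)).1, (p (v, h)).2) else (a :: v, h)

lemma underFun_comp (b : Bool) (p q : Pt S → Pt S) (x : Pt S) :
    underFun b p (underFun b q x) = underFun b (fun y => p (q y)) x := by
  obtain ⟨v, h⟩ := x
  cases v with
  | nil => rfl
  | cons a v =>
    by_cases hab : a = b <;> simp [underFun, hab]

lemma underFun_id (b : Bool) (p : Pt S → Pt S) (hp : ∀ x, p x = x) (x : Pt S) :
    underFun b p x = x := by
  obtain ⟨v, h⟩ := x
  cases v with
  | nil => rfl
  | cons a v => simp [underFun, hp]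

/-- The homomorphism embedding the permutations as those acting below the letter `b`. -/
def underP (b : Bool) : Equiv.Perm (Pt S) →* Equiv.Perm (Pt S) where
  toFun p :=
    { toFun := underFun b p
      invFun := underFun b p.symm
      left_inv := fun x => by
        rw [underFun_comp]; exact underFun_id b _ (fun y => p.symm_apply_apply y) x
      right_inv := fun x => by
        rw [underFun_comp]; exact underFun_id b _ (fun y => p.apply_symm_apply y) x }
  map_one' := by
    ext x : 1
    exact underFun_id b _ (fun y => rfl) x
  map_mul' p q := by
    ext x : 1
    exact (underFun_comp b p q x).symm

@[simp] lemma underP_nil (b : Bool) (p : Equiv.Perm (Pt S)) (h : FreeGroup S) :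
    underP b p ([], h) = ([], h) := rfl
@[simp] lemma underP_same (b : Bool) (p : Equiv.Perm (Pt S)) (v : List Bool) (h : FreeGroup S) :
    underP b p (b :: v, h) = (b :: (p (v, h)).1, (p (v, h)).2) := by
  change underFun b p (b :: v, h) = _
  simp [underFun]
@[simp] lemma underP_tf (p : Equiv.Perm (Pt S)) (v : List Bool) (h : FreeGroup S) :
    underP true p (false :: v, h) = (false :: v, h) := rfl
@[simp] lemma underP_ft (p : Equiv.Perm (Pt S)) (v : List Bool) (h : FreeGroup S) :
    underP false p (true :: v, h) = (true :: v, h) := rfl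

lemma underP_mem (b : Bool) {p : Equiv.Perm (Pt S)} (hp : p ∈ BD S) : underP b p ∈ BD S := by
  obtain ⟨D, hD⟩ := BD_bound hp
  refine ⟨D, fun x => ?_⟩
  obtain ⟨v, h⟩ := x
  have h2 := fun w => hD w h
  rcases v with _ | ⟨a, v⟩
  · simp
  · have := h2 v
    cases a <;> cases b <;> simp <;> omega

/-- `underP` on the permutations of bounded displacement. -/
def under (b : Bool) : BD S →* BD S :=
  ((underP b).comp (BD S).subtype).codRestrict (BD S) fun p => underP_mem b p.2

@[simp] lemma coe_under (b : Bool) (p : BD S) :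
    ((under b p : BD S) : Equiv.Perm (Pt S)) = underP b p := rfl

lemma under_ev (b : Bool) {p q : Equiv.Perm (Pt S)} (h : Ev p q) :
    Ev (underP b p) (underP b q) := by
  obtain ⟨N, hN⟩ := h
  refine ⟨N + 1, fun v x hv => ?_⟩
  rcases v with _ | ⟨a, v⟩
  · simp at hv
  · have := hN v x (by simpa using hv)
    cases a <;> cases b <;> simp [this]

/-- Acting below `1^i`. -/
def U : ℕ → BD S →* BD S
  | 0 => MonoidHom.id _
  | i + 1 => (under true).comp (U i)

@[simp] lemma U_zero (p : BD S) : U 0 p = p := rfl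
lemma U_succ (i : ℕ) (p : BD S) : U (i + 1) p = under true (U i p) := rfl

lemma U_add (i j : ℕ) (p : BD S) : U (i + j) p = U i (U j p) := by
  induction i with
  | zero => simp
  | succ i ih => rw [Nat.succ_add, U_succ, U_succ, ih]

lemma germ_U {p q : BD S} (h : germ p = germ q) (i : ℕ) : germ (U i p) = germ (U i q) := by
  induction i with
  | zero => exact h
  | succ i ih =>
    rw [germ_eq] at *
    exact under_ev true ih

/-- The word `1^i ++ v`. -/
def ones (i : ℕ) (v : List Bool) : List Bool := List.replicate i true ++ v

@[simp] lemma ones_zero (v : List Bool) : ones 0 v = v := rfl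
@[simp] lemma ones_succ (i : ℕ) (v : List Bool) : ones (i + 1) v = true :: ones i v := rfl
@[simp] lemma length_ones (i : ℕ) (v : List Bool) : (ones i v).length = i + v.length := by
  simp [ones]
lemma ones_add (i j : ℕ) (v : List Bool) : ones (i + j) v = ones i (ones j v) := by
  simp only [ones, List.replicate_add, List.append_assoc]
lemma ones_true (i : ℕ) (v : List Bool) : ones i (true :: v) = true :: ones i v := by
  rw [← ones_succ, ones_add]; rfl

lemma U_ones (i : ℕ) (p : BD S) (v : List Bool) (h : FreeGroup S) :
    (U i p : Equiv.Perm (Pt S)) (ones i v, h) = (ones i (p.1 (v, h)).1, (p.1 (v, h)).2) := by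
  induction i with
  | zero => rfl
  | succ i ih => simp [U_succ, ih]

lemma U_strand {i j : ℕ} (hij : j < i) (p : BD S) (v : List Bool) (h : FreeGroup S) :
    (U i p : Equiv.Perm (Pt S)) (ones j (false :: v), h) = (ones j (false :: v), h) := by
  induction i generalizing j with
  | zero => omega
  | succ i ih =>
    rw [U_succ, coe_under]
    cases j with
    | zero => simp
    | succ j => simp [ih (Nat.lt_of_succ_lt_succ hij)]

/-! ### The generating permutations -/

/-- The shift: `0v ↦ 00v`, `10v ↦ 01v`, `11v ↦ 1v`. -/
def x0P : Equiv.Perm (Pt S) where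
  toFun p := match p with
    | ([], h) => ([], h)
    | (false :: v, h) => (false :: false :: v, h)
    | (true :: [], h) => ([false], h)
    | (true :: false :: v, h) => (false :: true :: v, h)
    | (true :: true :: v, h) => (true :: v, h)
  invFun p := match p with
    | ([], h) => ([], h)
    | (false :: false :: v, h) => (false :: v, h)
    | (false :: [], h) => ([true], h)
    | (false :: true :: v, h) => (true :: false :: v, h)
    | (true :: v, h) => (true :: true :: v, h)
  left_inv := by
    rintro ⟨_ | ⟨_ | _, _ | ⟨_ | _, v⟩⟩, h⟩ <;> rfl
  right_inv := by
    rintro ⟨_ | ⟨_ | _, _ | ⟨_ | _, v⟩⟩, h⟩ <;> rfl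

/-- The transposition of the first two strands: `0v ↔ 10v`. -/
def s0P : Equiv.Perm (Pt S) where
  toFun p := match p with
    | (false :: v, h) => (true :: false :: v, h)
    | (true :: false :: v, h) => (false :: v, h)
    | (v, h) => (v, h)
  invFun p := match p with
    | (false :: v, h) => (true :: false :: v, h)
    | (true :: false :: v, h) => (false :: v, h)
    | (v, h) => (v, h)
  left_inv := by
    rintro ⟨_ | ⟨_ | _, _ | ⟨_ | _, v⟩⟩, h⟩ <;> rfl
  right_inv := by
    rintro ⟨_ | ⟨_ | _, _ | ⟨_ | _, v⟩⟩, h⟩ <;> rfl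

/-- The exchange of the two halves: `0v ↔ 1v`. -/
def cP : Equiv.Perm (Pt S) where
  toFun p := match p with
    | ([], h) => ([], h)
    | (b :: v, h) => ((!b) :: v, h)
  invFun p := match p with
    | ([], h) => ([], h)
    | (b :: v, h) => ((!b) :: v, h)
  left_inv := by
    rintro ⟨_ | ⟨_ | _, _ | ⟨_ | _, v⟩⟩, h⟩ <;> rfl
  right_inv := by
    rintro ⟨_ | ⟨_ | _, _ | ⟨_ | _, v⟩⟩, h⟩ <;> rfl

lemma x0P_mem : (x0P : Equiv.Perm (Pt S)) ∈ BD S := by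
  refine ⟨1, ?_⟩
  rintro ⟨_ | ⟨_ | _, _ | ⟨_ | _, v⟩⟩, h⟩ <;> simp [x0P]

lemma s0P_mem : (s0P : Equiv.Perm (Pt S)) ∈ BD S := by
  refine ⟨1, ?_⟩
  rintro ⟨_ | ⟨_ | _, _ | ⟨_ | _, v⟩⟩, h⟩ <;> simp [s0P]

lemma cP_mem : (cP : Equiv.Perm (Pt S)) ∈ BD S := by
  refine ⟨1, ?_⟩
  rintro ⟨_ | ⟨_ | _, v⟩, h⟩ <;> simp [cP]

/-- `x0P`, `s0P`, `cP` as elements of the subgroup of bounded displacement. -/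
def x0B : BD S := ⟨x0P, x0P_mem⟩
/-- See `x0B`. -/
def s0B : BD S := ⟨s0P, s0P_mem⟩
/-- See `x0B`. -/
def cB : BD S := ⟨cP, cP_mem⟩

/-- The label `w` acting below the letter `0`. -/
def lB (M : Automaton S) : FreeGroup S →* BD S :=
  (under false).comp (M.lab.codRestrict (BD S) fun w => ⟨0, fun x => by
    obtain ⟨v, h⟩ := x; simp⟩)

lemma lB_false (M : Automaton S) (w : FreeGroup S) (v : List Bool) (h : FreeGroup S) :
    (lB M w : Equiv.Perm (Pt S)) (false :: v, h) = (false :: M.out w v, M.sect w v * h) := by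
  simp only [lB, MonoidHom.comp_apply, coe_under, underP_same]
  rfl
lemma lB_true (M : Automaton S) (w : FreeGroup S) (v : List Bool) (h : FreeGroup S) :
    (lB M w : Equiv.Perm (Pt S)) (true :: v, h) = (true :: v, h) := by
  simp [lB]
lemma lB_nil (M : Automaton S) (w : FreeGroup S) (h : FreeGroup S) :
    (lB M w : Equiv.Perm (Pt S)) ([], h) = ([], h) := by
  simp [lB]

end Germs
end TP

namespace TP

/-! ### The infinite presentation and its validity for germs -/

/-- The relations between shifts `x i`, strand transpositions `σ i` and labels `ℓ i` on the
strands `1^i0`. -/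
structure Rels {S : Type} (M : Automaton S) {G : Type} [Group G] (x σ : ℕ → G)
    (ℓ : ℕ → FreeGroup S →* G) : Prop where
  xx : ∀ i j, i < j → x j * x i = x i * x (j + 1)
  σx : ∀ i j, i < j → σ j * x i = x i * σ (j + 1)
  lx : ∀ i j w, i < j → ℓ j w * x i = x i * ℓ (j + 1) w
  σσ : ∀ i, σ i * σ i = 1
  braid : ∀ i, σ i * σ (i + 1) * σ i = σ (i + 1) * σ i * σ (i + 1)
  σσ_far : ∀ i j, i + 2 ≤ j → σ i * σ j = σ j * σ i
  σx_far : ∀ i j, i + 2 ≤ j → σ i * x j = x j * σ i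
  σl_far : ∀ i j w, i + 2 ≤ j → σ i * ℓ j w = ℓ j w * σ i
  ll_far : ∀ i j w w', i < j → ℓ i w * ℓ j w' = ℓ j w' * ℓ i w
  lσ_far : ∀ i j w, i < j → ℓ i w * σ j = σ j * ℓ i w
  lx_far : ∀ i j w, i < j → ℓ i w * x j = x j * ℓ i w
  σx_same : ∀ i, σ i * x i = x (i + 1) * (σ i * σ (i + 1))
  σl_same : ∀ i w, σ i * ℓ i w = ℓ (i + 1) w * σ i
  lx_same : ∀ i w, ℓ i w * x i =
    x i * ((if M.bit w false then σ i else 1) * ℓ i (M.sec1 w false) * ℓ (i + 1) (M.sec1 w true))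

/-- The relations between the exchange `c` of the two halves and the other generators. -/
structure CRels {S : Type} {G : Type} [Group G] (x σ : ℕ → G)
    (ℓ : ℕ → FreeGroup S →* G) (c : G) : Prop where
  cc : c * c = 1
  x1 : c * x 1 * c * x 0 * x 1 = x 0 * x 0
  x2 : c * x 2 * c * x 0 * x 1 * x 2 = x 0 * x 1 * x 1
  s1 : c * σ 1 * c * x 0 * x 1 = x 0 * x 1 * σ 0
  s2 : c * σ 2 * c * x 0 * x 1 * x 2 = x 0 * x 1 * x 2 * σ 1
  l1 : ∀ w, c * ℓ 1 w * c * x 0 = x 0 * ℓ 0 w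
  l2 : ∀ w, c * ℓ 2 w * c * x 0 * x 1 = x 0 * x 1 * ℓ 1 w
  xs : c * x 0 * σ 0 * c * x 0 * σ 0 = 1
  s0 : c * σ 0 * c * x 0 = x 0 * σ 0 * (x 0)⁻¹ * c

section
variable {S : Type} (M : Automaton S)

/-- The germ of the shift at strand `i`. -/
def gX (i : ℕ) : Germ S := germ (U i x0B)
/-- The germ of the transposition of the strands `i` and `i + 1`. -/
def gS (i : ℕ) : Germ S := germ (U i s0B)
/-- The germs of labels on strand `i`. -/
def gL (i : ℕ) : FreeGroup S →* Germ S := germ.comp ((U i).comp (lB M))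
/-- The germ of the exchange of the two halves. -/
def gC : Germ S := germ cB

/-- Germs agree if the permutations agree on the words of length at least some `N`. -/
lemma germ_eq_of {p q : BD S} (N : ℕ) (h : ∀ (v : List Bool) (k : FreeGroup S), N ≤ v.length →
    (p : Equiv.Perm (Pt S)) (v, k) = (q : Equiv.Perm (Pt S)) (v, k)) : germ p = germ q :=
  germ_eq.2 ⟨N, h⟩

lemma shift0 (p : BD S) : germ (U 1 p) * gX 0 = gX 0 * germ (U 2 p) := by
  rw [gX, ← map_mul, ← map_mul]
  refine germ_eq_of 2 ?_
  rintro (_ | ⟨_ | _, _ | ⟨_ | _, v⟩⟩) k hv <;>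
    simp at hv <;> simp [x0B, x0P, U_succ]

lemma shiftU {i j : ℕ} (hij : i < j) (p : BD S) :
    germ (U j p) * gX i = gX i * germ (U (j + 1) p) := by
  obtain ⟨k, rfl⟩ : ∃ k, j = i + (1 + k) := ⟨j - i - 1, by omega⟩
  have h := shift0 (U k p)
  rw [gX, ← map_mul, ← map_mul] at h
  have h2 := germ_U h i
  rw [map_mul, map_mul, map_mul, map_mul] at h2
  rw [show i + (1 + k) + 1 = i + (2 + k) by omega, U_add, U_add, U_add, U_add]
  exact h2

lemma far_s (i j : ℕ) (hij : i + 2 ≤ j) (p : BD S) :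
    gS i * germ (U j p) = germ (U j p) * gS i := by
  obtain ⟨k, rfl⟩ : ∃ k, j = i + (2 + k) := ⟨j - i - 2, by omega⟩
  have h : germ (s0B * U 2 (U k p)) = germ (U 2 (U k p) * s0B) := by
    refine germ_eq_of 2 ?_
    rintro (_ | ⟨_ | _, _ | ⟨_ | _, v⟩⟩) k hv <;>
      simp at hv <;> simp [s0B, s0P, U_succ]
  have h2 := germ_U h i
  rw [map_mul, map_mul, map_mul, map_mul] at h2
  rw [U_add, U_add]
  exact h2

lemma far_l (i j : ℕ) (hij : i < j) (w : FreeGroup S) (p : BD S) :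
    gL M i w * germ (U j p) = germ (U j p) * gL M i w := by
  obtain ⟨k, rfl⟩ : ∃ k, j = i + (1 + k) := ⟨j - i - 1, by omega⟩
  have h : germ (lB M w * U 1 (U k p)) = germ (U 1 (U k p) * lB M w) := by
    refine germ_eq_of 2 ?_
    rintro (_ | ⟨_ | _, _ | ⟨_ | _, v⟩⟩) k hv <;>
      simp at hv <;> simp [lB_true, lB_false, U_succ]
  have h2 := germ_U h i
  rw [map_mul, map_mul, map_mul, map_mul] at h2
  rw [U_add, U_add]
  exact h2

lemma germ_rels : Rels M gX gS (gL M) where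
  xx i j h := shiftU h x0B
  σx i j h := shiftU h s0B
  lx i j w h := shiftU h (lB M w)
  σσ i := by
    have h : germ (s0B * s0B) = germ (1 : BD S) := by
      refine germ_eq_of 2 ?_
      rintro (_ | ⟨_ | _, _ | ⟨_ | _, v⟩⟩) k hv <;> simp at hv <;> simp [s0B, s0P]
    have h2 := germ_U h i
    rwa [map_mul, map_mul, map_one, map_one] at h2
  braid i := by
    have h : germ (s0B * U 1 s0B * s0B) = germ (U 1 s0B * s0B * (U 1 s0B : BD S)) := by
      refine germ_eq_of 3 ?_
      rintro (_ | ⟨_ | _, _ | ⟨_ | _, _ | ⟨_ | _, v⟩⟩⟩) k hv <;> simp at hv <;>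
        simp [s0B, s0P, U_succ]
    have h2 := germ_U h i
    simp only [map_mul, ← U_add] at h2
    exact h2
  σσ_far i j h := far_s i j h s0B
  σx_far i j h := far_s i j h x0B
  σl_far i j w h := far_s i j h (lB M w)
  ll_far i j w w' h := far_l M i j h w (lB M w')
  lσ_far i j w h := far_l M i j h w s0B
  lx_far i j w h := far_l M i j h w x0B
  σx_same i := by
    have h : germ (s0B * x0B) = germ (U 1 x0B * (s0B * (U 1 s0B : BD S))) := by
      refine germ_eq_of 3 ?_
      rintro (_ | ⟨_ | _, _ | ⟨_ | _, _ | ⟨_ | _, v⟩⟩⟩) k hv <;> simp at hv <;>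
        simp [s0B, s0P, x0B, x0P, U_succ]
    have h2 := germ_U h i
    simp only [map_mul, ← U_add] at h2
    exact h2
  σl_same i w := by
    have h : germ (s0B * lB M w) = germ (U 1 (lB M w) * s0B) := by
      refine germ_eq_of 3 ?_
      rintro (_ | ⟨_ | _, _ | ⟨_ | _, _ | ⟨_ | _, v⟩⟩⟩) k hv <;> simp at hv <;>
        simp [s0B, s0P, U_succ, lB_true, lB_false]
    have h2 := germ_U h i
    simp only [map_mul, ← U_add] at h2
    exact h2
  lx_same i w := by
    have h : germ (lB M w * x0B) = germ (x0B * ((if M.bit w false then s0B else 1) *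
        lB M (M.sec1 w false) * U 1 (lB M (M.sec1 w true)))) := by
      have hb := M.bit_eq w true
      refine germ_eq_of 3 ?_
      cases hf : M.bit w false <;> rw [hf] at hb <;>
      rintro (_ | ⟨_ | _, _ | ⟨_ | _, _ | ⟨_ | _, v⟩⟩⟩) k hv <;> simp at hv <;>
        simp [s0B, s0P, x0B, x0P, U_succ, lB_true, lB_false, hb, hf]
    have h2 := germ_U h i
    cases hf : M.bit w false
    · simp only [hf, map_mul, ← U_add, Bool.false_eq_true, if_false, map_one] at h2 ⊢
      exact h2
    · simp only [hf, map_mul, ← U_add, if_true] at h2 ⊢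
      exact h2

set_option maxHeartbeats 1000000 in
lemma germ_crels : CRels gX gS (gL M) gC where
  cc := by
    change germ cB * germ cB = 1
    rw [← map_mul, ← map_one germ]
    refine germ_eq_of 2 ?_
    rintro (_ | ⟨_ | _, _ | ⟨_ | _, v⟩⟩) k hv <;> simp at hv <;> simp [cB, cP]
  x1 := by
    simp only [gX, gC, ← map_mul]
    refine germ_eq_of 5 ?_
    rintro (_ | ⟨_ | _, _ | ⟨_ | _, _ | ⟨_ | _, _ | ⟨_ | _, v⟩⟩⟩⟩) k hv <;> simp at hv <;>
      simp [cB, cP, x0B, x0P, U_succ]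
  x2 := by
    simp only [gX, gC, ← map_mul]
    refine germ_eq_of 5 ?_
    rintro (_ | ⟨_ | _, _ | ⟨_ | _, _ | ⟨_ | _, _ | ⟨_ | _, v⟩⟩⟩⟩) k hv <;> simp at hv <;>
      simp [cB, cP, x0B, x0P, U_succ]
  s1 := by
    simp only [gX, gC, gS, ← map_mul]
    refine germ_eq_of 5 ?_
    rintro (_ | ⟨_ | _, _ | ⟨_ | _, _ | ⟨_ | _, _ | ⟨_ | _, v⟩⟩⟩⟩) k hv <;> simp at hv <;>
      simp [cB, cP, x0B, x0P, s0B, s0P, U_succ]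
  s2 := by
    simp only [gX, gC, gS, ← map_mul]
    refine germ_eq_of 5 ?_
    rintro (_ | ⟨_ | _, _ | ⟨_ | _, _ | ⟨_ | _, _ | ⟨_ | _, v⟩⟩⟩⟩) k hv <;> simp at hv <;>
      simp [cB, cP, x0B, x0P, s0B, s0P, U_succ]
  l1 w := by
    simp only [gX, gC, gL, MonoidHom.comp_apply, ← map_mul]
    refine germ_eq_of 4 ?_
    rintro (_ | ⟨_ | _, _ | ⟨_ | _, _ | ⟨_ | _, v⟩⟩⟩) k hv <;> simp at hv <;>
      simp [cB, cP, x0B, x0P, U_succ, lB_true, lB_false]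
  l2 w := by
    simp only [gX, gC, gL, MonoidHom.comp_apply, ← map_mul]
    refine germ_eq_of 4 ?_
    rintro (_ | ⟨_ | _, _ | ⟨_ | _, _ | ⟨_ | _, v⟩⟩⟩) k hv <;> simp at hv <;>
      simp [cB, cP, x0B, x0P, U_succ, lB_true, lB_false]
  xs := by
    simp only [gX, gC, gS, ← map_mul]
    rw [← map_one germ]
    refine germ_eq_of 4 ?_
    rintro (_ | ⟨_ | _, _ | ⟨_ | _, _ | ⟨_ | _, v⟩⟩⟩) k hv <;> simp at hv <;>
      simp [cB, cP, x0B, x0P, s0B, s0P]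
  s0 := by
    simp only [gX, gC, gS, ← map_mul, ← map_inv]
    refine germ_eq_of 4 ?_
    rintro (_ | ⟨_ | _, _ | ⟨_ | _, _ | ⟨_ | _, v⟩⟩⟩) k hv <;> simp at hv <;>
      simp [cB, cP, x0B, x0P, s0B, s0P, Equiv.Perm.inv_def, Equiv.symm]

end
end TP

namespace TP

/-! ### A finite set of relations and its consequences -/

section Words
variable {S : Type} (M : Automaton S)

/-- Generators: `x 0, x 1, σ 0, σ 1, c` and the labels on the strands `0` and `1`. -/
abbrev Gen (S : Type) := Fin 5 ⊕ (S × Bool)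

/-- The generator `x 0` as a word. -/
def wx0 : FreeGroup (Gen S) := FreeGroup.of (Sum.inl 0)
/-- The generator `c` as a word. -/
def wc : FreeGroup (Gen S) := FreeGroup.of (Sum.inl 4)

/-- The sequence with the first two given terms and `y (n + 1) = (x 0)⁻¹ * y n * x 0` for
positive `n`. -/
def fam (a b : Gen S) : ℕ → FreeGroup (Gen S)
  | 0 => FreeGroup.of a
  | 1 => FreeGroup.of b
  | n + 2 => wx0⁻¹ * fam a b (n + 1) * wx0

/-- Words for the elements `x n`. -/
def wx : ℕ → FreeGroup (Gen S) := fam (Sum.inl 0) (Sum.inl 1)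
/-- Words for the elements `σ n`. -/
def ws : ℕ → FreeGroup (Gen S) := fam (Sum.inl 2) (Sum.inl 3)
/-- Words for the label `s` on the strand `n`. -/
def wl (s : S) : ℕ → FreeGroup (Gen S) := fam (Sum.inr (s, false)) (Sum.inr (s, true))
/-- Words for the labels on the strand `n`. -/
def wlh (n : ℕ) : FreeGroup S →* FreeGroup (Gen S) := FreeGroup.lift fun s => wl s n

lemma fam_succ (a b : Gen S) (n : ℕ) (hn : 1 ≤ n) :
    fam a b (n + 1) = wx0⁻¹ * fam a b n * wx0 := by
  obtain ⟨m, rfl⟩ : ∃ m, n = m + 1 := ⟨n - 1, by omega⟩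
  rfl

/-- The three kinds of families, as one family of sequences of words. -/
def wy : Option (Option S) → ℕ → FreeGroup (Gen S)
  | none => wx
  | some none => ws
  | some (some s) => wl s

/-- Relations not involving labels. -/
def relA : List (FreeGroup (Gen S) × FreeGroup (Gen S)) :=
  [(ws 0 * ws 0, 1), (ws 1 * ws 1, 1),
   (ws 0 * ws 1 * ws 0, ws 1 * ws 0 * ws 1), (ws 1 * ws 2 * ws 1, ws 2 * ws 1 * ws 2),
   (ws 0 * wx 0, wx 1 * (ws 0 * ws 1)), (ws 1 * wx 1, wx 2 * (ws 1 * ws 2)),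
   (wc * wc, 1),
   (wc * wx 1 * wc * wx 0 * wx 1, wx 0 * wx 0),
   (wc * wx 2 * wc * wx 0 * wx 1 * wx 2, wx 0 * wx 1 * wx 1),
   (wc * ws 1 * wc * wx 0 * wx 1, wx 0 * wx 1 * ws 0),
   (wc * ws 2 * wc * wx 0 * wx 1 * wx 2, wx 0 * wx 1 * wx 2 * ws 1),
   (wc * wx 0 * ws 0 * wc * wx 0 * ws 0, 1),
   (wc * ws 0 * wc * wx 0, wx 0 * ws 0 * (wx 0)⁻¹ * wc)]

/-- Relations involving one label. -/
def relS (s : S) : List (FreeGroup (Gen S) × FreeGroup (Gen S)) :=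
  [(wl s 0 * wx 0, wx 0 * ((if M.flip s then ws 0 else 1) *
      wlh 0 (M.secF s false) * wlh 1 (M.secF s true))),
   (wl s 1 * wx 1, wx 1 * ((if M.flip s then ws 1 else 1) *
      wlh 1 (M.secF s false) * wlh 2 (M.secF s true))),
   (ws 0 * wl s 0, wl s 1 * ws 0), (ws 1 * wl s 1, wl s 2 * ws 1),
   (wc * wl s 1 * wc * wx 0, wx 0 * wl s 0),
   (wc * wl s 2 * wc * wx 0 * wx 1, wx 0 * wx 1 * wl s 1)]

/-- Shift and far commutation relations of a family with the `x`s and the `σ`s. -/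
def relY (y : Option (Option S)) : List (FreeGroup (Gen S) × FreeGroup (Gen S)) :=
  [(wy y 2 * wx 1, wx 1 * wy y 3), (wy y 3 * wx 1, wx 1 * wy y 4),
   (ws 0 * wy y 2, wy y 2 * ws 0), (ws 0 * wy y 3, wy y 3 * ws 0),
   (ws 1 * wy y 3, wy y 3 * ws 1), (ws 1 * wy y 4, wy y 4 * ws 1)]

/-- Far commutation relations of a family with the labels. -/
def relYS (s : S) (y : Option (Option S)) : List (FreeGroup (Gen S) × FreeGroup (Gen S)) :=
  [(wl s 0 * wy y 1, wy y 1 * wl s 0), (wl s 0 * wy y 2, wy y 2 * wl s 0),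
   (wl s 1 * wy y 2, wy y 2 * wl s 1), (wl s 1 * wy y 3, wy y 3 * wl s 1)]

/-- The defining relations. -/
def relSet : Set (FreeGroup (Gen S) × FreeGroup (Gen S)) :=
  {p | p ∈ relA} ∪ (⋃ s, {p | p ∈ relS M s}) ∪ (⋃ y, {p | p ∈ relY y}) ∪
    (⋃ s, ⋃ y, {p | p ∈ relYS s y})

lemma relSet_finite [Finite S] : (relSet M).Finite := by
  refine (((List.finite_toSet _).union (Set.finite_iUnion fun s => List.finite_toSet _)).union
    (Set.finite_iUnion fun y => List.finite_toSet _)).union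
    (Set.finite_iUnion fun s => Set.finite_iUnion fun y => List.finite_toSet _)

/-- A homomorphism respecting the defining relations. -/
def Sat {G : Type} [Group G] (φ : FreeGroup (Gen S) →* G) : Prop :=
  ∀ p ∈ relSet M, φ p.1 = φ p.2

variable {M}

lemma Sat.comp {G G' : Type} [Group G] [Group G'] {φ : FreeGroup (Gen S) →* G} (h : Sat M φ)
    (f : G →* G') : Sat M (f.comp φ) := fun p hp => by
  simp only [MonoidHom.comp_apply, h p hp]

section consequences
variable {G : Type} [Group G] {φ : FreeGroup (Gen S) →* G} (hs : Sat M φ)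

include hs in
lemma Sat.A {p : FreeGroup (Gen S) × FreeGroup (Gen S)} (hp : p ∈ relA) : φ p.1 = φ p.2 :=
  hs p (Or.inl (Or.inl (Or.inl hp)))
include hs in
lemma Sat.L (s : S) {p : FreeGroup (Gen S) × FreeGroup (Gen S)} (hp : p ∈ relS M s) :
    φ p.1 = φ p.2 :=
  hs p (Or.inl (Or.inl (Or.inr (Set.mem_iUnion.2 ⟨s, hp⟩))))
include hs in
lemma Sat.Y (y : Option (Option S)) {p : FreeGroup (Gen S) × FreeGroup (Gen S)}
    (hp : p ∈ relY y) : φ p.1 = φ p.2 :=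
  hs p (Or.inl (Or.inr (Set.mem_iUnion.2 ⟨y, hp⟩)))
include hs in
lemma Sat.YS (s : S) (y : Option (Option S)) {p : FreeGroup (Gen S) × FreeGroup (Gen S)}
    (hp : p ∈ relYS s y) : φ p.1 = φ p.2 :=
  hs p (Or.inr (Set.mem_iUnion.2 ⟨s, Set.mem_iUnion.2 ⟨y, hp⟩⟩))

lemma wy_succ (y : Option (Option S)) (n : ℕ) (hn : 1 ≤ n) :
    wy y (n + 1) = wx0⁻¹ * wy y n * wx0 := by
  rcases y with _ | _ | s <;> exact fam_succ _ _ n hn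

/-- Conjugation by `x 0` shifts identities between words in families of positive index. -/
lemma phi_succ (φ : FreeGroup (Gen S) →* G) (y : Option (Option S)) (n : ℕ) (hn : 1 ≤ n) :
    φ (wy y (n + 1)) = MulAut.conj (φ (wx 0))⁻¹ (φ (wy y n)) := by
  rw [wy_succ y n hn]
  simp [wx, fam, wx0]

include hs in
lemma Sat.shift1 (y : Option (Option S)) (j : ℕ) (hj : 2 ≤ j) :
    φ (wy y j) * φ (wx 1) = φ (wx 1) * φ (wy y (j + 1)) := by
  induction j using Nat.strong_induction_on with
  | _ j ih =>
    have h2 := hs.Y y (p := (wy y 2 * wx 1, wx 1 * wy y 3)) (by simp [relY])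
    have h3 := hs.Y y (p := (wy y 3 * wx 1, wx 1 * wy y 4)) (by simp [relY])
    simp only [map_mul] at h2 h3
    rcases Nat.lt_or_ge j 4 with h4 | h4
    · interval_cases j
      · exact h2
      · exact h3
    · have hx2 := hs.Y none (p := (wy none 2 * wx 1, wx 1 * wy none 3)) (by simp [relY])
      obtain ⟨k, rfl⟩ : ∃ k, j = k + 2 := ⟨j - 2, by omega⟩
      have e1 := ih k (by omega) (by omega)
      have e2 := ih (k + 1) (by omega) (by omega)
      -- Conjugating the identity for `k` by `x 0`, once and twice.
      have f1 := congrArg (MulAut.conj (φ (wx 0))⁻¹) e1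
      have hxs : ∀ n, 1 ≤ n → φ (wx (n + 1)) = MulAut.conj (φ (wx 0))⁻¹ (φ (wx n)) :=
        phi_succ φ none
      rw [map_mul, map_mul, ← phi_succ φ y _ (by omega), ← phi_succ φ y _ (by omega),
        ← hxs 1 le_rfl] at f1
      have f2 := congrArg (MulAut.conj (φ (wx 0))⁻¹) f1
      rw [map_mul, map_mul, ← phi_succ φ y _ (by omega), ← phi_succ φ y _ (by omega),
        ← hxs 2 (by omega)] at f2
      simp only [map_mul] at hx2
      change φ (wx 2) * φ (wx 1) = φ (wx 1) * φ (wx 3) at hx2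
      have g1 : φ (wy y (k + 2)) = (φ (wx 2))⁻¹ * (φ (wy y (k + 1)) * φ (wx 2)) := by
        rw [f1]; group
      have g2 : φ (wy y (k + 2 + 1)) = (φ (wx 3))⁻¹ * (φ (wy y (k + 2)) * φ (wx 3)) := by
        rw [f2]; group
      have g3 : (φ (wx 2))⁻¹ * φ (wx 1) = φ (wx 1) * (φ (wx 3))⁻¹ := by
        rw [inv_mul_eq_iff_eq_mul, ← mul_assoc, hx2]; group
      calc φ (wy y (k + 2)) * φ (wx 1)
          = (φ (wx 2))⁻¹ * (φ (wy y (k + 1)) * (φ (wx 2) * φ (wx 1))) := by rw [g1]; group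
        _ = (φ (wx 2))⁻¹ * ((φ (wy y (k + 1)) * φ (wx 1)) * φ (wx 3)) := by rw [hx2]; group
        _ = ((φ (wx 2))⁻¹ * φ (wx 1)) * φ (wy y (k + 2)) * φ (wx 3) := by rw [e2]; group
        _ = φ (wx 1) * φ (wy y (k + 2 + 1)) := by rw [g3, g2]; group

include hs in
lemma Sat.shift (y : Option (Option S)) (i j : ℕ) (hij : i < j) :
    φ (wy y j) * φ (wx i) = φ (wx i) * φ (wy y (j + 1)) := by
  rcases i with _ | i
  · rw [phi_succ φ y j (by omega)]; simp only [MulAut.conj_apply]; group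
  · induction i generalizing j with
    | zero => exact hs.shift1 y j (by omega)
    | succ i ih =>
      obtain ⟨k, rfl⟩ : ∃ k, j = k + 1 := ⟨j - 1, by omega⟩
      have f1 := congrArg (MulAut.conj (φ (wx 0))⁻¹) (ih k (by omega))
      have hxs : ∀ n, 1 ≤ n → φ (wx (n + 1)) = MulAut.conj (φ (wx 0))⁻¹ (φ (wx n)) :=
        phi_succ φ none
      rw [map_mul, map_mul, ← phi_succ φ y _ (by omega), ← phi_succ φ y _ (by omega),
        ← hxs _ (by omega)] at f1
      exact f1

include hs in
/-- Far commutation follows from its instances at two small pairs of indices for each of the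
first two indices. -/
lemma Sat.far_aux (z y : Option (Option S)) (w : ℕ) (hw : 1 ≤ w)
    (h0 : φ (wy z 0) * φ (wy y w) = φ (wy y w) * φ (wy z 0))
    (h0' : φ (wy z 0) * φ (wy y (w + 1)) = φ (wy y (w + 1)) * φ (wy z 0))
    (h1 : φ (wy z 1) * φ (wy y (w + 1)) = φ (wy y (w + 1)) * φ (wy z 1))
    (h1' : φ (wy z 1) * φ (wy y (w + 2)) = φ (wy y (w + 2)) * φ (wy z 1))
    (hx0 : φ (wy z 0) * φ (wx w) = φ (wx w) * φ (wy z 0))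
    (hx1 : φ (wy z 1) * φ (wx (w + 1)) = φ (wx (w + 1)) * φ (wy z 1))
    (i j : ℕ) (hij : i + w ≤ j) : φ (wy z i) * φ (wy y j) = φ (wy y j) * φ (wy z i) := by
  have step : ∀ a k j : ℕ, Commute (φ (wy z a)) (φ (wx k)) → k < j →
      Commute (φ (wy z a)) (φ (wy y j)) → Commute (φ (wy z a)) (φ (wy y (j + 1))) := by
    intro a k j hk hkj hj
    have : φ (wy y (j + 1)) = (φ (wx k))⁻¹ * (φ (wy y j) * φ (wx k)) := by
      rw [hs.shift y k j hkj]; group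
    rw [this]
    exact hk.inv_right.mul_right (hj.mul_right hk)
  have c0 : ∀ k, Commute (φ (wy z 0)) (φ (wy y (w + k))) := by
    intro k
    induction k with
    | zero => exact h0
    | succ k ih =>
      rcases k with _ | k
      · exact h0'
      · exact step 0 w (w + (k + 1)) hx0 (by omega) ih
  have c1 : ∀ k, Commute (φ (wy z 1)) (φ (wy y (w + 1 + k))) := by
    intro k
    induction k with
    | zero => exact h1
    | succ k ih =>
      rcases k with _ | k
      · exact h1'
      · exact step 1 (w + 1) (w + 1 + (k + 1)) hx1 (by omega) ih
  rcases i with _ | i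
  · have := c0 (j - w)
    rwa [show w + (j - w) = j by omega] at this
  · induction i generalizing j with
    | zero =>
      have := c1 (j - (w + 1))
      rwa [show w + 1 + (j - (w + 1)) = j by omega] at this
    | succ i ih =>
      obtain ⟨k, rfl⟩ : ∃ k, j = k + 1 := ⟨j - 1, by omega⟩
      have f1 := congrArg (MulAut.conj (φ (wx 0))⁻¹) (ih k (by omega))
      rw [map_mul, map_mul, ← phi_succ φ y _ (by omega), ← phi_succ φ z _ (by omega)] at f1
      exact f1

include hs in
lemma Sat.far_s (y : Option (Option S)) (i j : ℕ) (hij : i + 2 ≤ j) :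
    φ (ws i) * φ (wy y j) = φ (wy y j) * φ (ws i) := by
  have h : ∀ y : Option (Option S), φ (ws 0) * φ (wy y 2) = φ (wy y 2) * φ (ws 0) ∧
      φ (ws 0) * φ (wy y 3) = φ (wy y 3) * φ (ws 0) ∧
      φ (ws 1) * φ (wy y 3) = φ (wy y 3) * φ (ws 1) ∧
      φ (ws 1) * φ (wy y 4) = φ (wy y 4) * φ (ws 1) := by
    intro y
    simp only [← map_mul]
    exact ⟨hs.Y y (p := (ws 0 * wy y 2, wy y 2 * ws 0)) (by simp [relY]),
      hs.Y y (p := (ws 0 * wy y 3, wy y 3 * ws 0)) (by simp [relY]),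
      hs.Y y (p := (ws 1 * wy y 3, wy y 3 * ws 1)) (by simp [relY]),
      hs.Y y (p := (ws 1 * wy y 4, wy y 4 * ws 1)) (by simp [relY])⟩
  exact hs.far_aux (some none) y 2 (by omega) (h y).1 (h y).2.1 (h y).2.2.1 (h y).2.2.2
    (h none).1 (h none).2.2.1 i j hij

include hs in
lemma Sat.far_l (s : S) (y : Option (Option S)) (i j : ℕ) (hij : i + 1 ≤ j) :
    φ (wl s i) * φ (wy y j) = φ (wy y j) * φ (wl s i) := by
  have h : ∀ y : Option (Option S), φ (wl s 0) * φ (wy y 1) = φ (wy y 1) * φ (wl s 0) ∧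
      φ (wl s 0) * φ (wy y 2) = φ (wy y 2) * φ (wl s 0) ∧
      φ (wl s 1) * φ (wy y 2) = φ (wy y 2) * φ (wl s 1) ∧
      φ (wl s 1) * φ (wy y 3) = φ (wy y 3) * φ (wl s 1) := by
    intro y
    simp only [← map_mul]
    exact ⟨hs.YS s y (p := (wl s 0 * wy y 1, wy y 1 * wl s 0)) (by simp [relYS]),
      hs.YS s y (p := (wl s 0 * wy y 2, wy y 2 * wl s 0)) (by simp [relYS]),
      hs.YS s y (p := (wl s 1 * wy y 2, wy y 2 * wl s 1)) (by simp [relYS]),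
      hs.YS s y (p := (wl s 1 * wy y 3, wy y 3 * wl s 1)) (by simp [relYS])⟩
  exact hs.far_aux (some (some s)) y 1 (by omega) (h y).1 (h y).2.1 (h y).2.2.1 (h y).2.2.2
    (h none).1 (h none).2.2.1 i j hij

omit hs in
lemma semiconj_lift {F : Type} (f g : FreeGroup F →* G) (a : G)
    (h : ∀ s, f (FreeGroup.of s) * a = a * g (FreeGroup.of s)) (w : FreeGroup F) :
    f w * a = a * g w := by
  have : SemiconjBy a (g w) (f w) := by
    induction w using FreeGroup.induction_on with
    | C1 => simp
    | of s => exact (h s).symm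
    | inv_of s ih => rw [map_inv, map_inv]; exact ih.inv_right
    | mul w1 w2 h1 h2 => rw [map_mul, map_mul]; exact h1.mul_right h2
  exact this.eq.symm

/-- The homomorphisms `ℓ i` obtained from a homomorphism on words. -/
def phl (φ : FreeGroup (Gen S) →* G) (i : ℕ) : FreeGroup S →* G := φ.comp (wlh i)

@[simp] lemma phl_of (φ : FreeGroup (Gen S) →* G) (i : ℕ) (s : S) :
    phl φ i (FreeGroup.of s) = φ (wl s i) := by simp [phl, wlh]

lemma phl_succ (φ : FreeGroup (Gen S) →* G) (n : ℕ) (hn : 1 ≤ n) (w : FreeGroup S) :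
    phl φ (n + 1) w = MulAut.conj (φ (wx 0))⁻¹ (phl φ n w) := by
  have := semiconj_lift (phl φ n) (phl φ (n + 1)) (φ (wx 0)) (fun s => by
    rw [phl_of, phl_of, show φ (wl s (n + 1)) = _ from phi_succ φ (some (some s)) n hn]
    simp only [MulAut.conj_apply, inv_inv, wy]; group) w
  rw [MulAut.conj_apply, inv_inv, mul_assoc, this]; group

include hs in
lemma Sat.rels : Rels M (fun i => φ (wx i)) (fun i => φ (ws i)) (phl φ) := by
  have hA := fun p hp => hs.A (p := p) hp
  simp only [relA, List.forall_mem_cons, map_mul, map_one] at hA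
  obtain ⟨a1, a2, a3, a4, a5, a6, -⟩ := hA
  -- Each relation with positive indices is carried from one index to the next by conjugation with
  -- `x 0`.
  have hl : ∀ i w, MulAut.conj (φ (wx 0))⁻¹ (phl φ (i + 1) w) = phl φ (i + 2) w :=
    fun i w => (phl_succ φ (i + 1) (by omega) w).symm
  have hsg : ∀ i, MulAut.conj (φ (wx 0))⁻¹ (φ (ws (i + 1))) = φ (ws (i + 2)) :=
    fun i => (phi_succ φ (some none) (i + 1) (by omega)).symm
  have hx : ∀ i, MulAut.conj (φ (wx 0))⁻¹ (φ (wx (i + 1))) = φ (wx (i + 2)) :=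
    fun i => (phi_succ φ none (i + 1) (by omega)).symm
  have σσ : ∀ i, φ (ws i) * φ (ws i) = 1 := by
    rintro (_ | i)
    · exact a1
    · induction i with
      | zero => exact a2
      | succ i ih =>
        have := congrArg (MulAut.conj (φ (wx 0))⁻¹) ih
        rwa [map_mul, map_one, hsg] at this
  have σl : ∀ i s, φ (ws i) * φ (wl s i) = φ (wl s (i + 1)) * φ (ws i) := by
    intro i s
    have hS := fun p hp => hs.L s (p := p) hp
    simp only [relS, List.forall_mem_cons, map_mul] at hS
    rcases i with _ | i
    · exact hS.2.2.1
    · induction i with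
      | zero => exact hS.2.2.2.1
      | succ i ih =>
        have := congrArg (MulAut.conj (φ (wx 0))⁻¹) ih
        rw [map_mul, map_mul, hsg] at this
        simpa only [← phl_of, hl] using this
  have σl' : ∀ i w, φ (ws i) * phl φ i w = phl φ (i + 1) w * φ (ws i) := fun i w =>
    (semiconj_lift (phl φ (i + 1)) (phl φ i) (φ (ws i))
      (fun s => by simp [σl i s]) w).symm
  have ll : ∀ i j w w', i < j → phl φ i w * phl φ j w' = phl φ j w' * phl φ i w := by
    intro i j w w' hij
    refine semiconj_lift _ _ _ (fun s => ?_) w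
    rw [phl_of]
    exact (semiconj_lift (phl φ j) (phl φ j) _ (fun t => by
      rw [phl_of]; exact (hs.far_l s (some (some t)) i j hij).symm) w').symm
  have lσ : ∀ i j w, i < j → phl φ i w * φ (ws j) = φ (ws j) * phl φ i w :=
    fun i j w hij => semiconj_lift _ _ _ (fun s => by
      rw [phl_of]; exact hs.far_l s (some none) i j hij) w
  refine
    { xx := fun i j h => hs.shift none i j h
      σx := fun i j h => hs.shift (some none) i j h
      lx := fun i j w h => semiconj_lift _ _ _ (fun s => by
        rw [phl_of, phl_of]; exact hs.shift (some (some s)) i j h) w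
      σσ := σσ
      braid := ?_
      σσ_far := fun i j h => hs.far_s (some none) i j h
      σx_far := fun i j h => hs.far_s none i j h
      σl_far := fun i j w h => (semiconj_lift _ _ _ (fun s => by
        rw [phl_of]; exact (hs.far_s (some (some s)) i j h).symm) w).symm
      ll_far := ll
      lσ_far := lσ
      lx_far := fun i j w h => semiconj_lift _ _ _ (fun s => by
        rw [phl_of]; exact hs.far_l s none i j h) w
      σx_same := ?_
      σl_same := σl'
      lx_same := ?_ }
  · rintro (_ | i)
    · exact a3
    · induction i with
      | zero => exact a4
      | succ i ih =>
        have := congrArg (MulAut.conj (φ (wx 0))⁻¹) ih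
        simpa only [map_mul, hsg] using this
  · rintro (_ | i)
    · exact a5
    · induction i with
      | zero => exact a6
      | succ i ih =>
        have := congrArg (MulAut.conj (φ (wx 0))⁻¹) ih
        simpa only [map_mul, hsg, hx] using this
  · intro i w
    have base : ∀ i s, φ (wl s i) * φ (wx i) = φ (wx i) * ((if M.flip s then φ (ws i) else 1) *
        phl φ i (M.secF s false) * phl φ (i + 1) (M.secF s true)) := by
      intro i s
      have hS := fun p hp => hs.L s (p := p) hp
      simp only [relS, List.forall_mem_cons, map_mul] at hS
      rcases i with _ | i
      · have := hS.1
        rw [apply_ite φ, map_one] at this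
        exact this
      · induction i with
        | zero =>
          have := hS.2.1
          rw [apply_ite φ, map_one] at this
          exact this
        | succ i ih =>
          have := congrArg (MulAut.conj (φ (wx 0))⁻¹) ih
          rw [map_mul, map_mul, map_mul, map_mul, hl, hl, hx] at this
          rw [apply_ite (MulAut.conj (φ (wx 0))⁻¹), map_one, hsg] at this
          rw [← phl_of, hl, phl_of] at this
          exact this
    have ss : ∀ a, φ (ws i) * (φ (ws i) * a) = a := fun a => by rw [← mul_assoc, σσ, one_mul]
    have sl0 : ∀ w a, φ (ws i) * (phl φ i w * a) = phl φ (i + 1) w * (φ (ws i) * a) :=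
      fun w a => by rw [← mul_assoc, σl', mul_assoc]
    have sl1 : ∀ w, φ (ws i) * phl φ (i + 1) w = phl φ i w * φ (ws i) := fun w => by
      have := congrArg (fun t => φ (ws i) * t * φ (ws i)) (σl' i w)
      simp only [mul_assoc, ss, σσ, mul_one] at this
      exact this.symm
    have sl1' : ∀ w a, φ (ws i) * (phl φ (i + 1) w * a) = phl φ i w * (φ (ws i) * a) :=
      fun w a => by rw [← mul_assoc, sl1, mul_assoc]
    have cm : ∀ w w', phl φ (i + 1) w' * phl φ i w = phl φ i w * phl φ (i + 1) w' :=
      fun w w' => (ll i (i + 1) w w' (by omega)).symm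
    have cm' : ∀ w w' a, phl φ (i + 1) w' * (phl φ i w * a) = phl φ i w * (phl φ (i + 1) w' * a) :=
      fun w w' a => by rw [← mul_assoc, cm, mul_assoc]
    induction w using FreeGroup.induction_on with
    | C1 => simp
    | of s => simpa using base i s
    | inv_of s ih =>
      have hb := M.bit_inv_bit (FreeGroup.of s)
      have hsec := M.sec1_inv' (FreeGroup.of s)
      have h1 : φ (wx i) = phl φ i (FreeGroup.of s)⁻¹ * (φ (wx i) *
          ((if M.bit (FreeGroup.of s) false then φ (ws i) else 1) *
          phl φ i (M.sec1 (FreeGroup.of s) false) *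
          phl φ (i + 1) (M.sec1 (FreeGroup.of s) true))) := by
        rw [← ih, ← mul_assoc, ← map_mul]; simp
      have h2 : phl φ i (FreeGroup.of s)⁻¹ * φ (wx i) = φ (wx i) *
          ((if M.bit (FreeGroup.of s) false then φ (ws i) else 1) *
          phl φ i (M.sec1 (FreeGroup.of s) false) *
          phl φ (i + 1) (M.sec1 (FreeGroup.of s) true))⁻¹ := by
        conv_rhs => rw [h1]
        group
      rw [h2]
      congr 1
      rw [inv_eq_iff_mul_eq_one]
      have hb0 := hb false
      have hb1 := hb true
      have hbi := M.bit_eq (FreeGroup.of s)⁻¹ true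
      rw [hsec false, hsec true]
      have kl : ∀ j w a, phl φ j w * (phl φ j w⁻¹ * a) = a := fun j w a => by
        rw [← mul_assoc, ← map_mul]; simp
      have kl' : ∀ j w, phl φ j w * phl φ j w⁻¹ = 1 := fun j w => by
        rw [← map_mul]; simp
      rw [M.bit_eq (FreeGroup.of s)] at hb0 hb1
      cases hf : M.bit (FreeGroup.of s) false <;>
        simp only [hf] at hb0 hb1 <;> simp only [Bool.xor_false, Bool.xor_true, Bool.not_false,
          Bool.not_true] at hb0 hb1 <;>
        simp only [hb0, hb1, mul_assoc, cm', sl0, sl1, sl1', σσ, σl', kl, kl', if_true,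
          Bool.false_eq_true, if_false, one_mul]
    | mul w1 w2 h1 h2 =>
      have hb2 := M.bit_eq w2 true
      have hb1 := M.bit_eq w1 true
      rw [map_mul, mul_assoc, h2, ← mul_assoc, h1, M.sec1_mul, M.sec1_mul, M.bit_mul]
      rw [hb2, map_mul, map_mul]
      cases hf : M.bit w2 false <;> cases hf1 : M.bit w1 false <;>
        simp [hf1, hb1, mul_assoc, cm, cm', sl0, sl1, sl1', σσ, σl']

end consequences
end Words
end TP

namespace TP

/-! ### The finitely presented group and its action by germs -/

section
variable {S : Type} {M : Automaton S}

lemma Sat.crels {G : Type} [Group G] {φ : FreeGroup (Gen S) →* G} (hs : Sat M φ) :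
    CRels (fun i => φ (wx i)) (fun i => φ (ws i)) (phl φ) (φ wc) := by
  have hA := fun p hp => hs.A (p := p) hp
  simp only [relA, List.forall_mem_cons, map_mul, map_one, map_inv] at hA
  obtain ⟨-, -, -, -, -, -, a1, a2, a3, a4, a5, a6, a7, -⟩ := hA
  refine ⟨a1, a2, a3, a4, a5, fun w => ?_, fun w => ?_, a6, a7⟩
  · have := semiconj_lift (phl φ 1) (phl φ 0) (φ wc * φ (wx 0)) (fun s => by
      have hS := fun p hp => hs.L s (p := p) hp
      simp only [relS, List.forall_mem_cons, map_mul] at hS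
      have := congrArg (φ wc * ·) hS.2.2.2.2.1
      simp only [← mul_assoc, a1, one_mul] at this
      simpa only [phl_of, ← mul_assoc] using this) w
    have h2 := congrArg (φ wc * ·) this
    simp only [← mul_assoc, a1, one_mul] at h2
    exact h2
  · have := semiconj_lift (phl φ 2) (phl φ 1) (φ wc * φ (wx 0) * φ (wx 1)) (fun s => by
      have hS := fun p hp => hs.L s (p := p) hp
      simp only [relS, List.forall_mem_cons, map_mul] at hS
      have := congrArg (φ wc * ·) hS.2.2.2.2.2.1
      simp only [← mul_assoc, a1, one_mul] at this
      simpa only [phl_of, ← mul_assoc] using this) w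
    have h2 := congrArg (φ wc * ·) this
    simp only [← mul_assoc, a1, one_mul] at h2
    exact h2

/-- The homomorphism sending words in the generators to germs. -/
def psi (M : Automaton S) : FreeGroup (Gen S) →* Germ S :=
  FreeGroup.lift (Sum.elim ![gX 0, gX 1, gS 0, gS 1, gC]
    fun p => gL M (if p.2 then 1 else 0) (FreeGroup.of p.1))

lemma psi_fam (a b : Gen S) (y : ℕ → Germ S) (h0 : psi M (FreeGroup.of a) = y 0)
    (h1 : psi M (FreeGroup.of b) = y 1)
    (hy : ∀ n, 1 ≤ n → y n * gX 0 = gX 0 * y (n + 1)) (n : ℕ) : psi M (fam a b n) = y n := by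
  rcases n with _ | n
  · exact h0
  · induction n with
    | zero => exact h1
    | succ n ih =>
      rw [fam, map_mul, map_mul, ih, map_inv, mul_assoc, inv_mul_eq_iff_eq_mul]
      exact hy _ (by omega)

@[simp] lemma psi_wx (n : ℕ) : psi M (wx n) = gX n :=
  psi_fam _ _ gX (by simp [psi]) (by simp [psi])
    (fun n hn => (germ_rels M).xx 0 n (by omega)) n
@[simp] lemma psi_ws (n : ℕ) : psi M (ws n) = gS n :=
  psi_fam _ _ gS (by simp [psi]) (by simp [psi])
    (fun n hn => (germ_rels M).σx 0 n (by omega)) n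
@[simp] lemma psi_wl (s : S) (n : ℕ) : psi M (wl s n) = gL M n (FreeGroup.of s) :=
  psi_fam _ _ (fun n => gL M n (FreeGroup.of s)) (by simp [psi]) (by simp [psi])
    (fun n hn => (germ_rels M).lx 0 n _ (by omega)) n
@[simp] lemma psi_wlh (n : ℕ) (w : FreeGroup S) : psi M (wlh n w) = gL M n w := by
  have : (psi M).comp (wlh n) = gL M n := by
    ext s; simp [wlh]
  exact DFunLike.congr_fun this w
@[simp] lemma psi_wc : psi M wc = gC := by
  simp [psi, wc]

lemma phl_psi (n : ℕ) : phl (psi M) n = gL M n := by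
  ext w; simp

/-- The defining relations hold for germs. -/
lemma psi_sat : Sat M (psi M) := by
  have h := germ_rels M
  have hc := germ_crels M
  have e0 : ∀ s, M.bit (FreeGroup.of s) false = M.flip s := fun s => by simp
  rintro ⟨u, v⟩ (((hp | hp) | hp) | hp)
  · simp only [Set.mem_ofPred_eq, relA, List.mem_cons, Prod.mk.injEq, List.not_mem_nil,
      or_false] at hp
    rcases hp with ⟨rfl, rfl⟩ | ⟨rfl, rfl⟩ | ⟨rfl, rfl⟩ | ⟨rfl, rfl⟩ | ⟨rfl, rfl⟩ | ⟨rfl, rfl⟩ |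
      ⟨rfl, rfl⟩ | ⟨rfl, rfl⟩ | ⟨rfl, rfl⟩ | ⟨rfl, rfl⟩ | ⟨rfl, rfl⟩ | ⟨rfl, rfl⟩ | ⟨rfl, rfl⟩ <;>
      simp only [map_mul, map_one, map_inv, psi_wx, psi_ws, psi_wc]
    exacts [h.σσ 0, h.σσ 1, h.braid 0, h.braid 1, h.σx_same 0, h.σx_same 1, hc.cc, hc.x1, hc.x2,
      hc.s1, hc.s2, hc.xs, hc.s0]
  · simp only [Set.mem_iUnion, Set.mem_ofPred_eq, relS, List.mem_cons, Prod.mk.injEq,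
      List.not_mem_nil, or_false] at hp
    obtain ⟨s, hp⟩ := hp
    rcases hp with ⟨rfl, rfl⟩ | ⟨rfl, rfl⟩ | ⟨rfl, rfl⟩ | ⟨rfl, rfl⟩ | ⟨rfl, rfl⟩ | ⟨rfl, rfl⟩ <;>
      simp only [map_mul, map_one, psi_wx, psi_ws, psi_wc, psi_wl, psi_wlh,
        apply_ite (psi M)]
    · simpa using h.lx_same 0 (FreeGroup.of s)
    · simpa using h.lx_same 1 (FreeGroup.of s)
    · exact h.σl_same 0 _
    · exact h.σl_same 1 _
    · exact hc.l1 _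
    · exact hc.l2 _
  · simp only [Set.mem_iUnion, Set.mem_ofPred_eq, relY, List.mem_cons, Prod.mk.injEq,
      List.not_mem_nil, or_false] at hp
    obtain ⟨y, hp⟩ := hp
    rcases y with _ | _ | s <;>
    rcases hp with ⟨rfl, rfl⟩ | ⟨rfl, rfl⟩ | ⟨rfl, rfl⟩ | ⟨rfl, rfl⟩ | ⟨rfl, rfl⟩ | ⟨rfl, rfl⟩ <;>
      simp only [map_mul, wy, psi_wx, psi_ws, psi_wl]
    exacts [h.xx 1 2 (by omega), h.xx 1 3 (by omega), h.σx_far 0 2 (by omega),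
      h.σx_far 0 3 (by omega), h.σx_far 1 3 (by omega), h.σx_far 1 4 (by omega),
      h.σx 1 2 (by omega), h.σx 1 3 (by omega), h.σσ_far 0 2 (by omega),
      h.σσ_far 0 3 (by omega), h.σσ_far 1 3 (by omega), h.σσ_far 1 4 (by omega),
      h.lx 1 2 _ (by omega), h.lx 1 3 _ (by omega), h.σl_far 0 2 _ (by omega),
      h.σl_far 0 3 _ (by omega), h.σl_far 1 3 _ (by omega), h.σl_far 1 4 _ (by omega)]
  · simp only [Set.mem_iUnion, Set.mem_ofPred_eq, relYS, List.mem_cons, Prod.mk.injEq,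
      List.not_mem_nil, or_false] at hp
    obtain ⟨s, y, hp⟩ := hp
    rcases y with _ | _ | t <;>
    rcases hp with ⟨rfl, rfl⟩ | ⟨rfl, rfl⟩ | ⟨rfl, rfl⟩ | ⟨rfl, rfl⟩ <;>
      simp only [map_mul, wy, psi_wx, psi_ws, psi_wl]
    exacts [h.lx_far 0 1 _ (by omega), h.lx_far 0 2 _ (by omega), h.lx_far 1 2 _ (by omega),
      h.lx_far 1 3 _ (by omega), h.lσ_far 0 1 _ (by omega), h.lσ_far 0 2 _ (by omega),
      h.lσ_far 1 2 _ (by omega), h.lσ_far 1 3 _ (by omega), h.ll_far 0 1 _ _ (by omega),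
      h.ll_far 0 2 _ _ (by omega), h.ll_far 1 2 _ _ (by omega), h.ll_far 1 3 _ _ (by omega)]

/-- The relators. -/
def relators (M : Automaton S) : Set (FreeGroup (Gen S)) :=
  (fun p => p.1 * p.2⁻¹) '' relSet M

lemma relators_finite [Finite S] : (relators M).Finite := (relSet_finite M).image _

/-- The finitely presented group defined by the relators. -/
abbrev PG (M : Automaton S) := PresentedGroup (relators M)

lemma mk_sat : Sat M (PresentedGroup.mk (relators M)) := by
  intro p hp
  rw [← mul_inv_eq_one, ← map_inv, ← map_mul]
  exact PresentedGroup.one_of_mem (Set.mem_image_of_mem _ hp)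

/-- The homomorphism from the presented group to germs. -/
def theta (M : Automaton S) : PG M →* Germ S :=
  QuotientGroup.lift (Subgroup.normalClosure (relators M)) (psi M) (by
    refine Subgroup.normalClosure_le_normal ?_
    rintro _ ⟨p, hp, rfl⟩
    change psi M _ = 1
    rw [map_mul, map_inv, mul_inv_eq_one]
    exact psi_sat p hp)

@[simp] lemma theta_mk (w : FreeGroup (Gen S)) :
    theta M (PresentedGroup.mk (relators M) w) = psi M w := rfl

end
end TP

namespace TP

/-! ### Fractions over the positive monoid -/

section Fractions

variable {S : Type} {M : Automaton S} {G : Type} [Group G] {x σ : ℕ → G}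
  {ℓ : ℕ → FreeGroup S →* G} (h : Rels M x σ ℓ)

include h

lemma Rels.ss (i : ℕ) (a : G) : σ i * (σ i * a) = a := by
  rw [← mul_assoc, h.σσ, one_mul]

lemma Rels.σ_inv (i : ℕ) : (σ i)⁻¹ = σ i := inv_eq_of_mul_eq_one_left (h.σσ i)

lemma Rels.σx_next (i : ℕ) : σ i * x (i + 1) = x i * (σ (i + 1) * σ i) := by
  have h1 := congrArg (fun t => σ i * t * (σ (i + 1) * σ i)) (h.σx_same i)
  simp only [mul_assoc, h.ss, h.σσ, mul_one] at h1
  exact h1.symm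

lemma Rels.σl_next (i : ℕ) (w : FreeGroup S) : σ i * ℓ (i + 1) w = ℓ i w * σ i := by
  have h1 := congrArg (fun t => σ i * t * σ i) (h.σl_same i w)
  simp only [mul_assoc, h.ss, h.σσ, mul_one] at h1
  exact h1.symm

omit h

/-- The monoid of positive words in the `x i`. -/
def posX (x : ℕ → G) : Submonoid G := Submonoid.closure (Set.range x)

lemma x_mem (x : ℕ → G) (i : ℕ) : x i ∈ posX x := Submonoid.subset_closure ⟨i, rfl⟩

/-- The elements of `Λ` can be moved to the right past the `x j`. -/
def Push (x : ℕ → G) (Λ : Subgroup G) : Prop :=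
  ∀ t ∈ Λ, ∀ j, ∃ k, ∃ u ∈ Λ, t * x j = x k * u

/-- It is enough to push generators past generators. -/
lemma push_closure (x : ℕ → G) (T : Set G) (hT : ∀ t ∈ T, t⁻¹ ∈ T)
    (hp : ∀ t ∈ T, ∀ j, ∃ j', ∃ t' ∈ Subgroup.closure T, t * x j = x j' * t') :
    Push x (Subgroup.closure T) := by
  intro t ht
  induction ht using Subgroup.closure_induction'' with
  | one => exact fun j => ⟨j, 1, one_mem _, by simp⟩
  | mem t ht => exact hp t ht
  | inv_mem t ht => exact hp _ (hT t ht)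
  | mul a b _ _ ha hb =>
    intro j
    obtain ⟨j1, t1, ht1, e1⟩ := hb j
    obtain ⟨j2, t2, ht2, e2⟩ := ha j1
    exact ⟨j2, t2 * t1, mul_mem ht2 ht1, by rw [mul_assoc, e1, ← mul_assoc, e2, mul_assoc]⟩

lemma Push.mem {Λ : Subgroup G} (hp : Push x Λ) {t f : G} (ht : t ∈ Λ) (hf : f ∈ posX x) :
    ∃ f' ∈ posX x, ∃ t' ∈ Λ, t * f = f' * t' := by
  induction hf using Submonoid.closure_induction generalizing t with
  | one => exact ⟨1, one_mem _, t, ht, by simp⟩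
  | mem _ hx =>
    obtain ⟨j, rfl⟩ := hx
    obtain ⟨j', t', ht', e⟩ := hp t ht j
    exact ⟨_, x_mem x j', t', ht', e⟩
  | mul f g _ _ hf hg =>
    obtain ⟨f', hf', t', ht', e⟩ := hf ht
    obtain ⟨g', hg', t'', ht'', e'⟩ := hg ht'
    exact ⟨f' * g', mul_mem hf' hg', t'', ht'', by
      rw [← mul_assoc, e, mul_assoc, e', mul_assoc]⟩

include h

/-- Right multiples of a generator and of a positive word always meet. -/
lemma Rels.ore_gen {g : G} (hg : g ∈ posX x) : ∀ f, (f = 1 ∨ ∃ i, f = x i) →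
    ∃ v ∈ posX x, ∃ u, (u = 1 ∨ ∃ k, u = x k) ∧ f * v = g * u := by
  induction hg using Submonoid.closure_induction with
  | one => exact fun f hf => ⟨1, one_mem _, f, hf, by simp⟩
  | mem _ hx =>
    obtain ⟨a, rfl⟩ := hx
    rintro f (rfl | ⟨i, rfl⟩)
    · exact ⟨x a, x_mem x a, 1, Or.inl rfl, by simp⟩
    · rcases lt_trichotomy i a with hia | rfl | hia
      · exact ⟨x (a + 1), x_mem x _, x i, Or.inr ⟨i, rfl⟩, (h.xx i a hia).symm⟩
      · exact ⟨1, one_mem _, 1, Or.inl rfl, rfl⟩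
      · exact ⟨x a, x_mem x _, x (i + 1), Or.inr ⟨_, rfl⟩, h.xx a i hia⟩
  | mul g1 g2 _ _ h1 h2 =>
    intro f hf
    obtain ⟨v, hv, u, hu, e⟩ := h1 f hf
    obtain ⟨v', hv', u', hu', e'⟩ := h2 u hu
    exact ⟨v * v', mul_mem hv hv', u', hu', by
      rw [← mul_assoc, e, mul_assoc, e', mul_assoc]⟩

lemma Rels.ore {f g : G} (hf : f ∈ posX x) (hg : g ∈ posX x) :
    ∃ u ∈ posX x, ∃ v ∈ posX x, f * u = g * v := by
  induction hf using Submonoid.closure_induction generalizing g with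
  | one => exact ⟨g, hg, 1, one_mem _, by simp⟩
  | mem f hf =>
    obtain ⟨i, rfl⟩ := hf
    obtain ⟨v, hv, u, hu, e⟩ := h.ore_gen hg _ (Or.inr ⟨i, rfl⟩)
    refine ⟨v, hv, u, ?_, e⟩
    rcases hu with rfl | ⟨k, rfl⟩
    exacts [one_mem _, x_mem x k]
  | mul f1 f2 _ _ h1 h2 =>
    obtain ⟨u, hu, v, hv, e⟩ := h1 hg
    obtain ⟨a, ha, b, hb, e'⟩ := h2 hu
    exact ⟨a, ha, v * b, mul_mem hv hb, by rw [mul_assoc, e', ← mul_assoc, e, mul_assoc]⟩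

/-- The subgroup of the fractions `f * t * g⁻¹` with `f, g` positive and `t ∈ Λ`. -/
def Rels.frac (Λ : Subgroup G) (hp : Push x Λ) : Subgroup G where
  carrier := {b | ∃ f ∈ posX x, ∃ t ∈ Λ, ∃ g ∈ posX x, b = f * t * g⁻¹}
  one_mem' := ⟨1, one_mem _, 1, one_mem _, 1, one_mem _, by simp⟩
  inv_mem' := by
    rintro _ ⟨f, hf, t, ht, g, hg, rfl⟩
    exact ⟨g, hg, t⁻¹, inv_mem ht, f, hf, by group⟩
  mul_mem' := by
    rintro _ _ ⟨f, hf, t, ht, g, hg, rfl⟩ ⟨f2, hf2, t2, ht2, g2, hg2, rfl⟩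
    obtain ⟨u, hu, v, hv, e⟩ := h.ore hg hf2
    obtain ⟨u', hu', t', ht', e1⟩ := hp.mem ht hu
    obtain ⟨v', hv', t2', ht2', e2⟩ := hp.mem (inv_mem ht2) hv
    refine ⟨f * u', mul_mem hf hu', t' * t2'⁻¹, mul_mem ht' (inv_mem ht2'), g2 * v',
      mul_mem hg2 hv', ?_⟩
    have e3 : g⁻¹ * f2 = u * v⁻¹ := by
      rw [inv_mul_eq_iff_eq_mul, ← mul_assoc, e]; group
    have e4 : v⁻¹ * t2 = t2'⁻¹ * v'⁻¹ := by
      have := congrArg (·⁻¹) e2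
      simpa using this
    calc f * t * g⁻¹ * (f2 * t2 * g2⁻¹) = f * t * (g⁻¹ * f2) * t2 * g2⁻¹ := by group
      _ = f * (t * u) * (v⁻¹ * t2) * g2⁻¹ := by rw [e3]; group
      _ = f * u' * (t' * t2'⁻¹) * (g2 * v')⁻¹ := by rw [e1, e4]; group

omit h

/-- The group of strand permutations. -/
def sig (σ : ℕ → G) : Subgroup G := Subgroup.closure (Set.range σ)

/-- The group of labelled strand permutations. -/
def lam (σ : ℕ → G) (ℓ : ℕ → FreeGroup S →* G) : Subgroup G :=
  Subgroup.closure (Set.range σ ∪ {g | ∃ i w, g = ℓ i w})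

lemma s_mem_sig (σ : ℕ → G) (i : ℕ) : σ i ∈ sig σ := Subgroup.subset_closure ⟨i, rfl⟩
lemma s_mem_lam (σ : ℕ → G) (ℓ : ℕ → FreeGroup S →* G) (i : ℕ) : σ i ∈ lam σ ℓ :=
  Subgroup.subset_closure (Or.inl ⟨i, rfl⟩)
lemma l_mem_lam (σ : ℕ → G) (ℓ : ℕ → FreeGroup S →* G) (i : ℕ) (w) : ℓ i w ∈ lam σ ℓ :=
  Subgroup.subset_closure (Or.inr ⟨i, w, rfl⟩)
lemma sig_le_lam (σ : ℕ → G) (ℓ : ℕ → FreeGroup S →* G) : sig σ ≤ lam σ ℓ :=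
  Subgroup.closure_mono Set.subset_union_left

include h

lemma Rels.push_s {Λ : Subgroup G} (hΛ : ∀ i, σ i ∈ Λ) (i j : ℕ) :
    ∃ j', ∃ t' ∈ Λ, σ i * x j = x j' * t' := by
  rcases lt_trichotomy j i with hij | rfl | hij
  · exact ⟨j, _, hΛ _, h.σx j i hij⟩
  · exact ⟨_, _, mul_mem (hΛ _) (hΛ _), h.σx_same j⟩
  · rcases Nat.lt_or_ge j (i + 2) with h2 | h2
    · obtain rfl : j = i + 1 := by omega
      exact ⟨_, _, mul_mem (hΛ _) (hΛ _), h.σx_next i⟩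
    · exact ⟨j, _, hΛ _, h.σx_far i j h2⟩

lemma Rels.push_sig : Push x (sig σ) := by
  refine push_closure x _ ?_ ?_
  · rintro _ ⟨i, rfl⟩; exact ⟨i, (h.σ_inv i).symm⟩
  · rintro _ ⟨i, rfl⟩ j; exact h.push_s (s_mem_sig σ) i j

lemma Rels.push_lam : Push x (lam σ ℓ) := by
  refine push_closure x _ ?_ ?_
  · rintro _ (⟨i, rfl⟩ | ⟨i, w, rfl⟩)
    · exact Or.inl ⟨i, (h.σ_inv i).symm⟩
    · exact Or.inr ⟨i, w⁻¹, by simp⟩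
  · rintro _ (⟨i, rfl⟩ | ⟨i, w, rfl⟩) j
    · exact h.push_s (s_mem_lam σ ℓ) i j
    · rcases lt_trichotomy j i with hij | rfl | hij
      · exact ⟨j, _, l_mem_lam σ ℓ _ w, h.lx j i w hij⟩
      · refine ⟨j, _, ?_, h.lx_same j w⟩
        refine mul_mem (mul_mem ?_ (l_mem_lam σ ℓ _ _)) (l_mem_lam σ ℓ _ _)
        split_ifs
        exacts [s_mem_lam σ ℓ _, one_mem _]
      · exact ⟨j, _, l_mem_lam σ ℓ _ w, h.lx_far i j w hij⟩

/-- The subgroup of the fractions `f * t * g⁻¹` with `f, g` positive and `t` a labelled strand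
permutation. Their germs fix the end `1^ω`, see `Rels.B_fixEnd`. -/
def Rels.B : Subgroup G := h.frac (lam σ ℓ) h.push_lam

/-- The label-free part of `B`. -/
def Rels.H : Subgroup G := h.frac (sig σ) h.push_sig

lemma Rels.H_le_B : h.H ≤ h.B := by
  rintro _ ⟨f, hf, t, ht, g, hg, rfl⟩
  exact ⟨f, hf, t, sig_le_lam σ ℓ ht, g, hg, rfl⟩

lemma Rels.sig_le_H : sig σ ≤ h.H := fun t ht => ⟨1, one_mem _, t, ht, 1, one_mem _, by simp⟩
lemma Rels.lam_le_B : lam σ ℓ ≤ h.B := fun t ht => ⟨1, one_mem _, t, ht, 1, one_mem _, by simp⟩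
lemma Rels.posX_le_H {f : G} (hf : f ∈ posX x) : f ∈ h.H :=
  ⟨f, hf, 1, one_mem _, 1, one_mem _, by simp⟩

/-- A label all of whose deep sections are trivial is a fraction without labels. -/
lemma Rels.dies_mem_H {w : FreeGroup S} (hw : M.Dies w) (i : ℕ) : ℓ i w ∈ h.H := by
  obtain ⟨N, hN⟩ := hw
  induction N generalizing w i with
  | zero =>
    have : w = 1 := hN [] rfl
    rw [this, map_one]; exact one_mem _
  | succ N ih =>
    have e : ℓ i w = x i * ((if M.bit w false then σ i else 1) * ℓ i (M.sec1 w false) *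
        ℓ (i + 1) (M.sec1 w true)) * (x i)⁻¹ := by
      rw [← h.lx_same i w]; group
    rw [e]
    have hx := h.posX_le_H (x_mem x i)
    refine mul_mem (mul_mem hx (mul_mem (mul_mem ?_ ?_) ?_)) (inv_mem hx)
    · split_ifs
      exacts [h.sig_le_H (s_mem_sig σ i), one_mem _]
    · exact ih i fun v hv => hN (false :: v) (by simp [hv])
    · exact ih (i + 1) fun v hv => hN (true :: v) (by simp [hv])

omit h
/-- The product of the labels `W i` on the strands `i < n`. -/
def diag (ℓ : ℕ → FreeGroup S →* G) (W : ℕ → FreeGroup S) : ℕ → G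
  | 0 => 1
  | n + 1 => diag ℓ W n * ℓ n (W n)

lemma diag_congr {W W' : ℕ → FreeGroup S} {n : ℕ} (hW : ∀ i < n, W i = W' i) :
    diag ℓ W n = diag ℓ W' n := by
  induction n with
  | zero => rfl
  | succ n ih => rw [diag, diag, ih fun i hi => hW i (by omega), hW n (by omega)]

lemma diag_extend {W : ℕ → FreeGroup S} {n m : ℕ} (hnm : n ≤ m) (hW : ∀ i, n ≤ i → W i = 1) :
    diag ℓ W m = diag ℓ W n := by
  induction m, hnm using Nat.le_induction with
  | base => rfl
  | succ m hm ih => rw [diag, hW m hm, map_one, mul_one, ih]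

include h

lemma Rels.diag_comm (W : ℕ → FreeGroup S) {n j : ℕ} (hj : n ≤ j) (w : FreeGroup S) :
    ℓ j w * diag ℓ W n = diag ℓ W n * ℓ j w := by
  induction n with
  | zero => simp [diag]
  | succ n ih =>
    rw [diag, ← mul_assoc, ih (by omega), mul_assoc, mul_assoc,
      h.ll_far n j _ _ (by omega)]

lemma Rels.l_mul_diag (W : ℕ → FreeGroup S) {n j : ℕ} (hj : j < n)
    (w : FreeGroup S) :
    ℓ j w * diag ℓ W n = diag ℓ (Function.update W j (w * W j)) n := by
  induction n with
  | zero => omega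
  | succ n ih =>
    rcases Nat.lt_or_ge j n with hjn | hjn
    · rw [diag, diag, ← mul_assoc, ih hjn, Function.update_of_ne (by omega)]
    · obtain rfl : j = n := by omega
      rw [diag, diag, ← mul_assoc, h.diag_comm W le_rfl, Function.update_self, map_mul, mul_assoc]
      congr 1
      exact diag_congr fun i hi => by rw [Function.update_of_ne (by omega)]

lemma Rels.s_mul_diag (W : ℕ → FreeGroup S) {n j : ℕ} (hj : j + 1 < n) :
    σ j * diag ℓ W n = diag ℓ (W ∘ Equiv.swap j (j + 1)) n * σ j := by
  have small : ∀ m, m ≤ j → σ j * diag ℓ W m = diag ℓ W m * σ j := by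
    intro m hm
    induction m with
    | zero => simp [diag]
    | succ m ih =>
      rw [diag, ← mul_assoc, ih (by omega), mul_assoc, mul_assoc, h.lσ_far m j _ (by omega)]
  induction n with
  | zero => omega
  | succ n ih =>
    rcases Nat.lt_or_ge (j + 1) n with hjn | hjn
    · rw [diag, diag, ← mul_assoc, ih hjn, mul_assoc, mul_assoc, h.σl_far j n _ (by omega)]
      simp only [Function.comp]
      rw [Equiv.swap_apply_of_ne_of_ne (by omega) (by omega)]
    · obtain rfl : n = j + 1 := by omega
      have e : diag ℓ (W ∘ Equiv.swap j (j + 1)) j = diag ℓ W j := diag_congr fun i hi => by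
        simp only [Function.comp]
        rw [Equiv.swap_apply_of_ne_of_ne (by omega) (by omega)]
      simp only [diag, Function.comp, Equiv.swap_apply_left, Equiv.swap_apply_right]
      rw [e]
      simp only [← mul_assoc]
      rw [small j le_rfl, mul_assoc (diag ℓ W j), h.σl_same, mul_assoc, mul_assoc, h.σl_next,
        ← mul_assoc (ℓ (j + 1) (W j)), ← h.ll_far j (j + 1) _ _ (by omega)]
      simp only [mul_assoc]

/-- Every labelled strand permutation is a product of labels and a strand permutation. -/
lemma Rels.lam_decomp {t : G} (ht : t ∈ lam σ ℓ) :
    ∃ (n : ℕ) (W : ℕ → FreeGroup S), (∀ i, n ≤ i → W i = 1) ∧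
      ∃ p ∈ sig σ, t = diag ℓ W n * p := by
  have gen : ∀ g ∈ Set.range σ ∪ {g | ∃ i w, g = ℓ i w}, ∀ t : G,
      (∃ (n : ℕ) (W : ℕ → FreeGroup S), (∀ i, n ≤ i → W i = 1) ∧
        ∃ p ∈ sig σ, t = diag ℓ W n * p) →
      ∃ (n : ℕ) (W : ℕ → FreeGroup S), (∀ i, n ≤ i → W i = 1) ∧
        ∃ p ∈ sig σ, g * t = diag ℓ W n * p := by
    rintro g hg t ⟨n, W, hW, p, hp, rfl⟩
    rcases hg with ⟨j, rfl⟩ | ⟨j, w, rfl⟩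
    · refine ⟨max n (j + 2), W ∘ Equiv.swap j (j + 1), ?_, σ j * p,
        mul_mem (s_mem_sig σ j) hp, ?_⟩
      · intro i hi
        simp only [Function.comp]
        rw [Equiv.swap_apply_of_ne_of_ne (by omega) (by omega)]
        exact hW i (by omega)
      · rw [← diag_extend (le_max_left n (j + 2)) hW, ← mul_assoc, ← mul_assoc,
          h.s_mul_diag W (by omega)]
    · refine ⟨max n (j + 1), Function.update W j (w * W j), ?_, p, hp, ?_⟩
      · intro i hi
        rw [Function.update_of_ne (by omega)]
        exact hW i (by omega)
      · rw [← diag_extend (le_max_left n (j + 1)) hW, ← mul_assoc, h.l_mul_diag W (by omega)]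
  induction ht using Subgroup.closure_induction_left with
  | one => exact ⟨0, fun _ => 1, fun _ _ => rfl, 1, one_mem _, by simp [diag]⟩
  | mul_left g hg t _ ih => exact gen g hg t ih
  | inv_mul_cancel g hg t _ ih =>
    refine gen g⁻¹ ?_ t ih
    rcases hg with ⟨i, rfl⟩ | ⟨i, w, rfl⟩
    · exact Or.inl ⟨i, (h.σ_inv i).symm⟩
    · exact Or.inr ⟨i, w⁻¹, by simp⟩

end Fractions
end TP

namespace TP

/-! ### Faithfulness of germs on the subgroup fixing the end `1^ω` -/

section Faithful

variable {S : Type}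

/-- Germs represented by permutations not changing the labels of long words. -/
def LabelPres (S : Type) : Subgroup (Germ S) where
  carrier := {γ | ∃ p : BD S, germ p = γ ∧ ∃ N, ∀ v h, N ≤ v.length → (p.1 (v, h)).2 = h}
  one_mem' := ⟨1, map_one _, 0, fun v h _ => rfl⟩
  mul_mem' := by
    rintro _ _ ⟨p, rfl, N, hN⟩ ⟨q, rfl, N', hN'⟩
    obtain ⟨D, hD⟩ := BD_bound q.2
    refine ⟨p * q, map_mul _ _ _, N' + N + D, fun v h hv => ?_⟩
    have h1 := hN' v h (by omega)
    have h2 := hN (q.1 (v, h)).1 (q.1 (v, h)).2 (by have := (hD v h).1; omega)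
    exact h2.trans h1
  inv_mem' := by
    rintro _ ⟨p, rfl, N, hN⟩
    obtain ⟨D, hD⟩ := BD_bound (inv_mem p.2)
    refine ⟨p⁻¹, map_inv _ _, N + D, fun v h hv => ?_⟩
    have h2 := hN (p.1⁻¹ (v, h)).1 (p.1⁻¹ (v, h)).2 (by have := (hD v h).1; omega)
    have h3 : p.1 (p.1⁻¹ (v, h)) = (v, h) := p.1.apply_symm_apply _
    rw [Prod.mk.eta, h3] at h2
    exact h2.symm

lemma U_label {p : BD S} (hp : ∀ v h, (p.1 (v, h)).2 = h) (i : ℕ) :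
    ∀ v h, ((U i p).1 (v, h)).2 = h := by
  induction i with
  | zero => exact hp
  | succ i ih =>
    rintro (_ | ⟨_ | _, v⟩) h
    · simp [U_succ]
    · simp [U_succ]
    · simpa [U_succ] using ih v h

lemma gX_labelPres (i : ℕ) : gX i ∈ LabelPres S := by
  refine ⟨U i x0B, rfl, 0, fun v h _ => U_label ?_ i v h⟩
  rintro (_ | ⟨_ | _, _ | ⟨_ | _, v⟩⟩) h <;> rfl

lemma gS_labelPres (i : ℕ) : gS i ∈ LabelPres S := by
  refine ⟨U i s0B, rfl, 0, fun v h _ => U_label ?_ i v h⟩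
  rintro (_ | ⟨_ | _, _ | ⟨_ | _, v⟩⟩) h <;> rfl

/-- The lexicographic order of incomparable words. -/
def LexLt (v w : List Bool) : Prop := ∃ p a b, v = p ++ false :: a ∧ w = p ++ true :: b

@[simp] lemma LexLt_nil_left (w : List Bool) : ¬ LexLt [] w := by
  rintro ⟨p, a, b, h, -⟩; simp at h
@[simp] lemma LexLt_nil_right (w : List Bool) : ¬ LexLt w [] := by
  rintro ⟨p, a, b, -, h⟩; simp at h
lemma LexLt_cons (a b : Bool) (v w : List Bool) :
    LexLt (a :: v) (b :: w) ↔ (a = false ∧ b = true) ∨ (a = b ∧ LexLt v w) := by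
  constructor
  · rintro ⟨_ | ⟨e, p⟩, u, u', h, h'⟩
    · simp only [List.nil_append, List.cons.injEq] at h h'
      exact Or.inl ⟨h.1, h'.1⟩
    · simp only [List.cons_append, List.cons.injEq] at h h'
      exact Or.inr ⟨h.1.trans h'.1.symm, p, u, u', h.2, h'.2⟩
  · rintro (⟨rfl, rfl⟩ | ⟨rfl, p, u, u', rfl, rfl⟩)
    · exact ⟨[], v, w, rfl, rfl⟩
    · exact ⟨a :: p, u, u', rfl, rfl⟩

lemma LexLt.asymm {v w : List Bool} (h : LexLt v w) : ¬ LexLt w v := by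
  induction v generalizing w with
  | nil => simp at h
  | cons a v ih =>
    cases w with
    | nil => simp at h
    | cons b w =>
      rw [LexLt_cons] at h ⊢
      rcases h with ⟨rfl, rfl⟩ | ⟨rfl, h⟩
      · simp
      · have := ih h
        simp [this]

lemma LexLt_ones {i j : ℕ} (hij : i < j) (u u' : List Bool) :
    LexLt (ones i (false :: u)) (ones j (false :: u')) := by
  obtain ⟨k, rfl⟩ : ∃ k, j = i + (k + 1) := ⟨j - i - 1, by omega⟩
  exact ⟨List.replicate i true, u, ones k (false :: u'), rfl, by rw [ones_add]; rfl⟩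

/-- Germs represented by permutations that are order preserving on long words. -/
def OrderPres (S : Type) : Submonoid (Germ S) where
  carrier := {γ | ∃ p : BD S, germ p = γ ∧ ∃ N, ∀ v w h h', N ≤ v.length → N ≤ w.length →
    LexLt v w → LexLt (p.1 (v, h)).1 (p.1 (w, h')).1}
  one_mem' := ⟨1, map_one _, 0, fun v w h h' _ _ hl => hl⟩
  mul_mem' := by
    rintro _ _ ⟨p, rfl, N, hN⟩ ⟨q, rfl, N', hN'⟩
    obtain ⟨D, hD⟩ := BD_bound q.2
    refine ⟨p * q, map_mul _ _ _, N' + N + D, fun v w h h' hv hw hl => ?_⟩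
    have h1 := hN' v w h h' (by omega) (by omega) hl
    exact hN (q.1 (v, h)).1 (q.1 (w, h')).1 (q.1 (v, h)).2 (q.1 (w, h')).2 (by have := (hD v h).1; omega)
      (by have := (hD w h').1; omega) h1

lemma gX_orderPres (i : ℕ) : gX i ∈ OrderPres S := by
  refine ⟨U i x0B, rfl, i + 2, ?_⟩
  induction i with
  | zero =>
    rintro (_ | ⟨_ | _, _ | ⟨_ | _, v⟩⟩) (_ | ⟨_ | _, _ | ⟨_ | _, w⟩⟩) h h' hv hw hl <;>
      simp at hv <;> simp at hw <;> simp_all [LexLt_cons, x0B, x0P]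
  | succ i ih =>
    rintro (_ | ⟨_ | _, v⟩) (_ | ⟨_ | _, w⟩) h h' hv hw hl
    · simp at hl
    · simp at hl
    · simp at hl
    · simp at hl
    · simpa [U_succ] using hl
    · simp [U_succ, LexLt_cons]
    · simp at hl
    · simp [LexLt_cons] at hl
    · have := ih v w h h' (by simp at hv; omega) (by simp at hw; omega)
        (by simpa [LexLt_cons] using hl)
      simpa [U_succ, LexLt_cons] using this

/-- The germ `γ` permutes the strands according to `τ`. -/
def StrandPerm (γ : Germ S) (τ : Equiv.Perm ℕ) : Prop :=
  ∃ p : BD S, germ p = γ ∧ ∀ i u h, p.1 (ones i (false :: u), h) = (ones (τ i) (false :: u), h)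

lemma StrandPerm.one : StrandPerm (1 : Germ S) 1 := ⟨1, map_one _, fun _ _ _ => rfl⟩

lemma StrandPerm.mul {γ γ' : Germ S} {τ τ' : Equiv.Perm ℕ} (h : StrandPerm γ τ)
    (h' : StrandPerm γ' τ') : StrandPerm (γ * γ') (τ * τ') := by
  obtain ⟨p, rfl, hp⟩ := h
  obtain ⟨q, rfl, hq⟩ := h'
  refine ⟨p * q, map_mul _ _ _, fun i u h => ?_⟩
  change p.1 (q.1 _) = _
  rw [hq, hp]; rfl

lemma StrandPerm.inv {γ : Germ S} {τ : Equiv.Perm ℕ} (h : StrandPerm γ τ) :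
    StrandPerm γ⁻¹ τ⁻¹ := by
  obtain ⟨p, rfl, hp⟩ := h
  refine ⟨p⁻¹, map_inv _ _, fun i u h => ?_⟩
  change p.1⁻¹ _ = _
  rw [Equiv.Perm.inv_eq_iff_eq, hp]
  simp

lemma U_s0_strand (i j : ℕ) (u : List Bool) (h : FreeGroup S) :
    (U i s0B).1 (ones j (false :: u), h) = (ones (Equiv.swap i (i + 1) j) (false :: u), h) := by
  rcases lt_trichotomy j i with hji | rfl | hji
  · rw [U_strand hji, Equiv.swap_apply_of_ne_of_ne (by omega) (by omega)]
  · rw [U_ones, Equiv.swap_apply_left, ones_add]; rfl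
  · obtain ⟨k, rfl⟩ : ∃ k, j = i + (k + 1) := ⟨j - i - 1, by omega⟩
    rw [ones_add, U_ones]
    cases k with
    | zero => rw [Equiv.swap_apply_right]; rfl
    | succ k =>
      rw [Equiv.swap_apply_of_ne_of_ne (by omega) (by omega), ones_succ, ones_succ,
        ones_add i (k + 1 + 1)]
      rfl

lemma gS_strandPerm (i : ℕ) : StrandPerm (gS i : Germ S) (Equiv.swap i (i + 1)) :=
  ⟨U i s0B, rfl, U_s0_strand i⟩

lemma ones_inj {i j : ℕ} {u u' : List Bool}
    (h : ones i (false :: u) = ones j (false :: u')) : i = j ∧ u = u' := by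
  induction i generalizing j with
  | zero =>
    cases j with
    | zero => simpa using h
    | succ j => simp at h
  | succ i ih =>
    cases j with
    | zero => simp at h
    | succ j =>
      have := ih (j := j) (by simpa using h)
      exact ⟨by omega, this.2⟩

lemma StrandPerm.unique {γ : Germ S} {τ τ' : Equiv.Perm ℕ} (h : StrandPerm γ τ)
    (h' : StrandPerm γ τ') : τ = τ' := by
  obtain ⟨p, rfl, hp⟩ := h
  obtain ⟨q, hq', hq⟩ := h'
  obtain ⟨N, hN⟩ := germ_eq.1 hq'
  ext i
  have := hN (ones i (false :: List.replicate N true)) 1 (by simp; omega)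
  rw [hp, hq] at this
  exact (ones_inj (congrArg Prod.fst this)).1.symm

variable {M : Automaton S} {G : Type} [Group G] {x σ : ℕ → G}
  {ℓ : ℕ → FreeGroup S →* G} (h : Rels M x σ ℓ)

/-- The product `σ a * σ (a + 1) * ⋯ * σ (a + k - 1)`. -/
def desc (σ : ℕ → G) : ℕ → ℕ → G
  | _, 0 => 1
  | a, k + 1 => σ a * desc σ (a + 1) k

/-- The permutations of the strands `0, …, n`. -/
def sigN (σ : ℕ → G) (n : ℕ) : Subgroup G := Subgroup.closure (σ '' Set.Iio n)

lemma s_mem_sigN {n j : ℕ} (hj : j < n) : σ j ∈ sigN σ n := Subgroup.subset_closure ⟨j, hj, rfl⟩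

lemma sigN_mono {m n : ℕ} (hmn : m ≤ n) : sigN σ m ≤ sigN σ n :=
  Subgroup.closure_mono (Set.image_mono (Set.Iio_subset_Iio hmn))

lemma exists_sigN {p : G} (hp : p ∈ sig σ) : ∃ n, p ∈ sigN σ n := by
  induction hp using Subgroup.closure_induction with
  | mem _ hx =>
    obtain ⟨i, rfl⟩ := hx
    exact ⟨i + 1, s_mem_sigN (Nat.lt_succ_self i)⟩
  | one => exact ⟨0, one_mem _⟩
  | mul a b _ _ ha hb =>
    obtain ⟨m, hm⟩ := ha
    obtain ⟨n, hn⟩ := hb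
    exact ⟨max m n, mul_mem (sigN_mono (le_max_left _ _) hm) (sigN_mono (le_max_right _ _) hn)⟩
  | inv a _ ha => exact ha.imp fun _ h => inv_mem h

include h

lemma Rels.s_desc_comm {j a : ℕ} (hja : j + 1 < a) (k : ℕ) :
    σ j * desc σ a k = desc σ a k * σ j := by
  induction k generalizing a with
  | zero => simp [desc]
  | succ k ih => rw [desc, ← mul_assoc, h.σσ_far j a (by omega), mul_assoc, ih (by omega),
      mul_assoc]

lemma Rels.s_desc {j a k : ℕ} (h1 : a < j) (h2 : j < a + k) :
    σ j * desc σ a k = desc σ a k * σ (j - 1) := by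
  induction k generalizing a with
  | zero => omega
  | succ k ih =>
    rcases Nat.lt_or_ge (a + 1) j with h3 | h3
    · rw [desc, ← mul_assoc, ← h.σσ_far a j (by omega), mul_assoc, ih h3 (by omega), mul_assoc]
    · obtain rfl : j = a + 1 := by omega
      obtain ⟨k, rfl⟩ : ∃ k', k = k' + 1 := ⟨k - 1, by omega⟩
      have hb := h.braid a
      have hc := h.s_desc_comm (j := a) (a := a + 1 + 1) (by omega) k
      simp only [desc, Nat.add_sub_cancel]
      calc σ (a + 1) * (σ a * (σ (a + 1) * desc σ (a + 1 + 1) k))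
          = σ (a + 1) * σ a * σ (a + 1) * desc σ (a + 1 + 1) k := by simp only [mul_assoc]
        _ = σ a * σ (a + 1) * (σ a * desc σ (a + 1 + 1) k) := by
          rw [← hb]; simp only [mul_assoc]
        _ = _ := by rw [hc]; simp only [mul_assoc]

lemma Rels.sigN_decomp {n : ℕ} {p : G} (hp : p ∈ sigN σ (n + 1)) :
    ∃ a k, a + k = n + 1 ∧ ∃ q ∈ sigN σ n, p = desc σ a k * q := by
  have gen : ∀ j < n + 1, ∀ p : G, (∃ a k, a + k = n + 1 ∧ ∃ q ∈ sigN σ n, p = desc σ a k * q) →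
      ∃ a k, a + k = n + 1 ∧ ∃ q ∈ sigN σ n, σ j * p = desc σ a k * q := by
    rintro j hj _ ⟨a, k, hak, q, hq, rfl⟩
    rcases lt_trichotomy j a with hja | rfl | hja
    · rcases Nat.lt_or_ge (j + 1) a with h3 | h3
      · exact ⟨a, k, hak, _, mul_mem (s_mem_sigN (j := j) (by omega)) hq, by
          rw [← mul_assoc, h.s_desc_comm h3, mul_assoc]⟩
      · obtain rfl : a = j + 1 := by omega
        exact ⟨j, k + 1, by omega, q, hq, by rw [desc, mul_assoc]⟩
    · obtain ⟨k, rfl⟩ : ∃ k', k = k' + 1 := ⟨k - 1, by omega⟩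
      exact ⟨j + 1, k, by omega, q, hq, by rw [desc, mul_assoc, h.ss]⟩
    · exact ⟨a, k, hak, _, mul_mem (s_mem_sigN (j := j - 1) (by omega)) hq, by
        rw [← mul_assoc, h.s_desc hja (by omega), mul_assoc]⟩
  induction hp using Subgroup.closure_induction_left with
  | one => exact ⟨n + 1, 0, rfl, 1, one_mem _, by simp [desc]⟩
  | mul_left g hg t _ ih =>
    obtain ⟨j, hj, rfl⟩ := hg
    exact gen j hj t ih
  | inv_mul_cancel g hg t _ ih =>
    obtain ⟨j, hj, rfl⟩ := hg
    rw [h.σ_inv]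
    exact gen j hj t ih

variable (θ : G →* Germ S)

omit h

lemma sigN_perm (hs : ∀ i, θ (σ i) = gS i) {n : ℕ} {p : G} (hp : p ∈ sigN σ n) :
    ∃ τ, StrandPerm (θ p) τ ∧ ∀ i, n < i → τ i = i := by
  induction hp using Subgroup.closure_induction with
  | mem _ hx =>
    obtain ⟨j, hj, rfl⟩ := hx
    have : j < n := hj
    exact ⟨_, hs j ▸ gS_strandPerm j, fun i hi =>
      Equiv.swap_apply_of_ne_of_ne (by omega) (by omega)⟩
  | one => exact ⟨1, by rw [map_one]; exact StrandPerm.one, fun _ _ => rfl⟩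
  | mul a b _ _ ha hb =>
    obtain ⟨t, ht, h1⟩ := ha
    obtain ⟨t', ht', h2⟩ := hb
    exact ⟨t * t', by rw [map_mul]; exact ht.mul ht', fun i hi => by
      rw [Equiv.Perm.mul_apply, h2 i hi, h1 i hi]⟩
  | inv a _ ha =>
    obtain ⟨t, ht, h1⟩ := ha
    exact ⟨t⁻¹, by rw [map_inv]; exact ht.inv, fun i hi => by
      rw [Equiv.Perm.inv_eq_iff_eq, h1 i hi]⟩

lemma desc_perm (hs : ∀ i, θ (σ i) = gS i) (a k : ℕ) :
    ∃ τ, StrandPerm (θ (desc σ a k)) τ ∧ τ (a + k) = a := by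
  induction k generalizing a with
  | zero => exact ⟨1, by simp only [desc, map_one]; exact StrandPerm.one, rfl⟩
  | succ k ih =>
    obtain ⟨t, ht, h1⟩ := ih (a + 1)
    refine ⟨Equiv.swap a (a + 1) * t, ?_, ?_⟩
    · rw [desc, map_mul, hs]
      exact (gS_strandPerm a).mul ht
    · rw [Equiv.Perm.mul_apply, show a + (k + 1) = a + 1 + k by omega, h1, Equiv.swap_apply_right]

include h

/-- Faithfulness of the action of `sig σ` on the strands: the Coxeter relations present the
finitary symmetric group. -/
lemma Rels.sig_faithful (hs : ∀ i, θ (σ i) = gS i) {p : G} (hp : p ∈ sig σ)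
    (h1 : StrandPerm (θ p) 1) : p = 1 := by
  obtain ⟨n, hn⟩ := exists_sigN hp
  clear hp
  induction n with
  | zero => simpa [sigN] using hn
  | succ n ih =>
    obtain ⟨a, k, hak, q, hq, rfl⟩ := h.sigN_decomp hn
    obtain ⟨t, ht, e1⟩ := desc_perm θ hs a k
    obtain ⟨t', ht', e2⟩ := sigN_perm θ hs hq
    rw [map_mul] at h1
    have e3 := h1.unique (ht.mul ht')
    have e4 := Equiv.congr_fun e3 (n + 1)
    rw [Equiv.Perm.mul_apply, e2 (n + 1) (Nat.lt_succ_self n), ← hak, e1] at e4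
    obtain rfl : k = 0 := by
      change a + k = a at e4; omega
    refine ih ?_
    simpa [desc] using hq

/-- Positive words can be sorted. -/
lemma Rels.sort_cons (l : List ℕ) (hl : l.Pairwise (· ≤ ·)) (j : ℕ) :
    ∃ l' : List ℕ, l'.Pairwise (· ≤ ·) ∧ x j * (l.map x).prod = (l'.map x).prod ∧
      ∀ m, m ≤ j → (∀ i ∈ l, m ≤ i) → ∀ i ∈ l', m ≤ i := by
  induction l generalizing j with
  | nil => exact ⟨[j], by simp, by simp, by simp⟩
  | cons a l ih =>
    rw [List.pairwise_cons] at hl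
    rcases Nat.lt_or_ge a j with haj | haj
    · obtain ⟨l', h1, h2, h3⟩ := ih hl.2 (j + 1)
      refine ⟨a :: l', ?_, ?_, ?_⟩
      · rw [List.pairwise_cons]
        exact ⟨h3 a (by omega) hl.1, h1⟩
      · rw [List.map_cons, List.prod_cons, ← mul_assoc, h.xx a j haj, mul_assoc, h2,
          List.map_cons, List.prod_cons]
      · intro m hm hml i hi
        rw [List.mem_cons] at hi
        rcases hi with rfl | hi
        · exact hml _ (by simp)
        · exact h3 m (by omega) (fun i hi => hml i (by simp [hi])) i hi
    · refine ⟨j :: a :: l, ?_, by simp, ?_⟩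
      · rw [List.pairwise_cons, List.pairwise_cons]
        refine ⟨fun i hi => ?_, hl⟩
        rw [List.mem_cons] at hi
        rcases hi with rfl | hi
        · exact haj
        · exact haj.trans (hl.1 i hi)
      · intro m hm hml i hi
        rw [List.mem_cons] at hi
        rcases hi with rfl | hi
        · exact hm
        · exact hml i hi

lemma Rels.posX_sorted {f : G} (hf : f ∈ posX x) :
    ∃ l : List ℕ, l.Pairwise (· ≤ ·) ∧ f = (l.map x).prod := by
  induction hf using Submonoid.closure_induction_left with
  | one => exact ⟨[], by simp, by simp⟩
  | mul_left g hg t _ ih =>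
    obtain ⟨j, rfl⟩ := hg
    obtain ⟨l, hl, rfl⟩ := ih
    obtain ⟨l', h1, h2, -⟩ := h.sort_cons l hl j
    exact ⟨l', h1, h2⟩

omit h

lemma x_count (hx : ∀ i, θ (x i) = gX i) (a : ℕ) (l : List ℕ) (hl : ∀ i ∈ l, a ≤ i) :
    ∃ q : BD S, germ q = θ (l.map x).prod ∧ ∀ u k, ∃ v,
      q.1 (ones a (false :: u), k) = (ones a (false :: v), k) ∧ v.length = u.length + l.count a := by
  induction l with
  | nil => exact ⟨1, by simp, fun u k => ⟨u, rfl, by simp⟩⟩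
  | cons j l ih =>
    obtain ⟨q, hq, h1⟩ := ih fun i hi => hl i (by simp [hi])
    refine ⟨U j x0B * q, by rw [map_mul, hq, List.map_cons, List.prod_cons, map_mul, hx]; rfl,
      fun u k => ?_⟩
    obtain ⟨v, h2, h3⟩ := h1 u k
    rcases (hl j (by simp)).lt_or_eq with h4 | rfl
    · refine ⟨v, ?_, ?_⟩
      · rw [Subgroup.coe_mul, Equiv.Perm.mul_apply, h2, U_strand h4]
      · rw [h3, List.count_cons_of_ne (by omega)]
    · refine ⟨false :: v, ?_, ?_⟩
      · rw [Subgroup.coe_mul, Equiv.Perm.mul_apply, h2, U_ones]; rfl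
      · rw [List.length_cons, h3, List.count_cons_self]; omega

lemma x_head (hx : ∀ i, θ (x i) = gX i) (a : ℕ) (l l' : List ℕ)
    (h1 : ∀ i ∈ l, a ≤ i) (h2 : ∀ i ∈ l', a < i)
    (e : θ (l.map x).prod = θ (l'.map x).prod) : a ∉ l := by
  obtain ⟨q, hq, h3⟩ := x_count θ hx a l h1
  obtain ⟨q', hq', h4⟩ := x_count θ hx a l' fun i hi => (h2 i hi).le
  obtain ⟨N, hN⟩ := germ_eq.1 (hq.trans (e.trans hq'.symm))
  obtain ⟨v, e1, e2⟩ := h3 (List.replicate N true) 1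
  obtain ⟨v', e3, e4⟩ := h4 (List.replicate N true) 1
  have := hN (ones a (false :: List.replicate N true)) 1 (by simp; omega)
  rw [e1, e3] at this
  have e5 := (ones_inj (congrArg Prod.fst this)).2
  have e6 : l'.count a = 0 := List.count_eq_zero_of_not_mem fun hm => (h2 a hm).false
  rw [← List.count_eq_zero]
  rw [e5, e4, e6] at e2
  omega

lemma sorted_faithful (hx : ∀ i, θ (x i) = gX i) (l l' : List ℕ) (hl : l.Pairwise (· ≤ ·))
    (hl' : l'.Pairwise (· ≤ ·)) (e : θ (l.map x).prod = θ (l'.map x).prod) : l = l' := by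
  induction l generalizing l' with
  | nil =>
    cases l' with
    | nil => rfl
    | cons b l' =>
      rw [List.pairwise_cons] at hl'
      refine absurd (List.mem_cons_self) (x_head θ hx b (b :: l') [] ?_ (by simp) e.symm)
      intro i hi
      rw [List.mem_cons] at hi
      rcases hi with rfl | hi
      exacts [le_rfl, hl'.1 i hi]
  | cons a l ih =>
    have ha : ∀ i ∈ a :: l, a ≤ i := by
      rw [List.pairwise_cons] at hl
      intro i hi
      rw [List.mem_cons] at hi
      rcases hi with rfl | hi
      exacts [le_rfl, hl.1 i hi]
    cases l' with
    | nil => exact absurd (List.mem_cons_self) (x_head θ hx a (a :: l) [] ha (by simp) e)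
    | cons b l' =>
      have hb : ∀ i ∈ b :: l', b ≤ i := by
        rw [List.pairwise_cons] at hl'
        intro i hi
        rw [List.mem_cons] at hi
        rcases hi with rfl | hi
        exacts [le_rfl, hl'.1 i hi]
      rcases lt_trichotomy a b with hab | rfl | hab
      · exact absurd (List.mem_cons_self)
          (x_head θ hx a (a :: l) (b :: l') ha (fun i hi => hab.trans_le (hb i hi)) e)
      · rw [List.pairwise_cons] at hl hl'
        rw [List.map_cons, List.prod_cons, List.map_cons, List.prod_cons, map_mul, map_mul,
          mul_right_inj] at e
        rw [ih l' hl.2 hl'.2 e]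
      · exact absurd (List.mem_cons_self)
          (x_head θ hx b (b :: l') (a :: l) hb (fun i hi => hab.trans_le (ha i hi)) e.symm)

lemma posX_map (hx : ∀ i, θ (x i) = gX i) (Q : Submonoid (Germ S)) (hQ : ∀ i, gX i ∈ Q) {f : G}
    (hf : f ∈ posX x) : θ f ∈ Q := by
  have : posX x ≤ Q.comap θ := (Submonoid.closure_le).2 (by
    rintro _ ⟨i, rfl⟩
    change θ (x i) ∈ Q
    rw [hx]; exact hQ i)
  exact this hf

lemma diag_act (hl : ∀ i w, θ (ℓ i w) = gL M i w) (W : ℕ → FreeGroup S) (n : ℕ) :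
    ∃ q : BD S, germ q = θ (diag ℓ W n) ∧ (∀ i u k, i < n → q.1 (ones i (false :: u), k) =
      (ones i (false :: M.out (W i) u), M.sect (W i) u * k)) ∧
      ∀ i u k, n ≤ i → q.1 (ones i (false :: u), k) = (ones i (false :: u), k) := by
  induction n with
  | zero => exact ⟨1, by simp [diag], fun i u k hi => by omega, fun i u k hi => rfl⟩
  | succ n ih =>
    obtain ⟨q, hq, h1, h2⟩ := ih
    refine ⟨q * U n (lB M (W n)), by rw [map_mul, hq, diag, map_mul, hl]; rfl,
      fun i u k hi => ?_, fun i u k hi => ?_⟩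
    · rw [Subgroup.coe_mul, Equiv.Perm.mul_apply]
      rcases Nat.lt_or_ge i n with hin | hin
      · rw [U_strand hin, h1 i u k hin]
      · obtain rfl : i = n := by omega
        rw [U_ones, lB_false, h2 _ _ _ le_rfl]
    · obtain ⟨j, rfl⟩ : ∃ j, i = n + (j + 1) := ⟨i - n - 1, by omega⟩
      rw [Subgroup.coe_mul, Equiv.Perm.mul_apply, ones_add, U_ones, ones_succ, lB_true,
        ← ones_succ, ← ones_add, h2 _ _ _ (by omega)]

include h

/-- The label-free part acts faithfully: if `f * p * g⁻¹` acts trivially, then `p` is an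
order-preserving permutation of the strands, hence trivial by the Coxeter relations, and `f = g`
since sorted positive words are determined by their germs. -/
lemma Rels.H_faithful (hx : ∀ i, θ (x i) = gX i) (hs : ∀ i, θ (σ i) = gS i) {b : G}
    (hb : b ∈ h.H) (e : θ b = 1) : b = 1 := by
  obtain ⟨f, hf, p, hp, g, hg, rfl⟩ := hb
  rw [map_mul, map_mul, map_inv, mul_inv_eq_one] at e
  obtain ⟨n, hn⟩ := exists_sigN hp
  obtain ⟨τ, hτ, -⟩ := sigN_perm θ hs hn
  -- Positive words preserve the lexicographic order, hence so does the permutation `τ` of the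
  -- strands.
  have hτ1 : τ = 1 := by
    obtain ⟨F, eF, N1, hF⟩ := posX_map θ hx (OrderPres S) gX_orderPres hf
    obtain ⟨G', eG, N2, hG⟩ := posX_map θ hx (OrderPres S) gX_orderPres hg
    obtain ⟨P, eP, hP⟩ := hτ
    have e2 : germ (F * P) = germ G' := by rw [map_mul, eF, eP, eG, e]
    obtain ⟨N3, hN3⟩ := germ_eq.1 e2
    have hmono : StrictMono τ := by
      intro i j hij
      by_contra hne
      have hlt : τ j < τ i := lt_of_le_of_ne (not_lt.1 hne) fun h' => by
        have := τ.injective h'; omega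
      set u := List.replicate (N1 + N2 + N3) true with hu
      have hul : u.length = N1 + N2 + N3 := by simp [hu]
      have a1 := hG _ _ 1 1 (by simp; omega) (by simp; omega) (LexLt_ones hij u u)
      have a2 := hF _ _ 1 1 (by simp; omega) (by simp; omega) (LexLt_ones hlt u u)
      rw [← hN3 _ _ (by simp; omega), ← hN3 _ _ (by simp; omega), Subgroup.coe_mul,
        Equiv.Perm.mul_apply, Equiv.Perm.mul_apply, hP, hP] at a1
      exact a2.asymm a1
    have : ∀ i, τ i = i := fun i => by
      have s : StrictMono (τ.symm) := fun a b hab => by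
        by_contra hne
        have := hmono.monotone (not_lt.1 hne)
        simp at this; omega
      have h1 := hmono.id_le i
      have h2 := s.id_le (τ i)
      simp at h1 h2
      omega
    ext i; simp [this]
  have hp1 : p = 1 := h.sig_faithful θ hs hp (hτ1 ▸ hτ)
  subst hp1
  obtain ⟨l, hl, rfl⟩ := h.posX_sorted hf
  obtain ⟨l', hl', rfl⟩ := h.posX_sorted hg
  rw [map_one, mul_one] at e
  rw [sorted_faithful θ hx l l' hl hl' e]
  simp

/-- The subgroup `B` acts faithfully: in an element acting trivially, the labels on all strands have
trivial deep sections, so that they can be replaced by label-free elements. -/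
lemma Rels.B_faithful (hx : ∀ i, θ (x i) = gX i) (hs : ∀ i, θ (σ i) = gS i)
    (hl : ∀ i w, θ (ℓ i w) = gL M i w) {b : G} (hb : b ∈ h.B) (e : θ b = 1) : b = 1 := by
  refine h.H_faithful θ hx hs ?_ e
  obtain ⟨f, hf, t, ht, g, hg, rfl⟩ := hb
  obtain ⟨n, W, hW, p, hp, rfl⟩ := h.lam_decomp ht
  suffices hd : diag ℓ W n ∈ h.H from
    mul_mem (mul_mem (h.posX_le_H hf) (mul_mem hd (h.sig_le_H hp))) (inv_mem (h.posX_le_H hg))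
  have hpos : ∀ f ∈ posX x, θ f ∈ LabelPres S :=
    fun f hf => posX_map θ hx (LabelPres S).toSubmonoid gX_labelPres hf
  have hsig : θ p ∈ LabelPres S := by
    have : sig σ ≤ (LabelPres S).comap θ := (Subgroup.closure_le _).2 (by
      rintro _ ⟨i, rfl⟩
      change θ (σ i) ∈ LabelPres S
      rw [hs]; exact gS_labelPres i)
    exact this hp
  -- The germ of the label part is a product of label-free ones, so it adds no labels to long words.
  have hD : θ (diag ℓ W n) ∈ LabelPres S := by
    have e2 : θ (diag ℓ W n) = (θ f)⁻¹ * θ g * (θ p)⁻¹ := by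
      rw [map_mul, map_mul, map_mul, map_inv] at e
      rw [mul_inv_eq_one] at e
      rw [← e]; group
    rw [e2]
    exact mul_mem (mul_mem (inv_mem (hpos f hf)) (hpos g hg)) (inv_mem hsig)
  obtain ⟨q, hq, h1, -⟩ := diag_act θ hl W n
  obtain ⟨q', hq', N, hN⟩ := hD
  obtain ⟨N', hN'⟩ := germ_eq.1 (hq.trans hq'.symm)
  have hdies : ∀ i < n, M.Dies (W i) := by
    refine fun i hi => ⟨N + N', fun v hv => ?_⟩
    have e1 := hN (ones i (false :: v)) 1 (by simp; omega)
    rw [← hN' _ _ (by simp; omega), h1 i v 1 hi] at e1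
    simpa using e1
  clear * - hdies h
  induction n with
  | zero => exact one_mem _
  | succ n ih =>
    exact mul_mem (ih fun i hi => hdies i (by omega)) (h.dies_mem_H (hdies n (by omega)) n)

end Faithful
end TP

namespace TP

/-! ### The double coset decomposition `B ∪ B c B` -/

section Double

variable {S : Type} {M : Automaton S} {G : Type} [Group G] {x σ : ℕ → G}
  {ℓ : ℕ → FreeGroup S →* G} {c : G} (h : Rels M x σ ℓ) (hc : CRels x σ ℓ c)

/-- The product `σ (a - 1) * ⋯ * σ 0`, moving strand `0` to strand `a`. -/
def asc (σ : ℕ → G) : ℕ → G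
  | 0 => 1
  | a + 1 => σ a * asc σ a

/-- Elements of `B` whose germs fix the point `01^ω`. -/
def stabGens (x σ : ℕ → G) (ℓ : ℕ → FreeGroup S →* G) : Set G :=
  {x 1, x 2, σ 1, σ 2, x 0 * σ 0} ∪ {g | ∃ w, g = ℓ 1 w ∨ g = ℓ 2 w}

/-- The subgroup generated by `stabGens`, in the role of the stabilizer of the point `01^ω` in `B`. -/
def stab (x σ : ℕ → G) (ℓ : ℕ → FreeGroup S →* G) : Subgroup G :=
  Subgroup.closure (stabGens x σ ℓ)

lemma stab_aux {y : ℕ → G} {K : Subgroup G} (hx : x 1 ∈ K)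
    (hy : ∀ j, 1 < j → y j * x 1 = x 1 * y (j + 1)) (h1 : y 1 ∈ K) (h2 : y 2 ∈ K) :
    ∀ j, 1 ≤ j → y j ∈ K := by
  have key : ∀ j, y (j + 2) ∈ K := by
    intro j
    induction j with
    | zero => exact h2
    | succ j ih =>
      have e : y (j + 1 + 2) = (x 1)⁻¹ * (y (j + 2) * x 1) := by rw [hy (j + 2) (by omega)]; group
      rw [e]
      exact mul_mem (inv_mem hx) (mul_mem ih hx)
  intro j hj
  rcases hj.eq_or_lt with rfl | hj
  · exact h1
  · obtain ⟨i, rfl⟩ := Nat.exists_eq_add_of_le' hj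
    exact key i

lemma mem_stab {g : G} (hg : g ∈ stabGens x σ ℓ) : g ∈ stab x σ ℓ := Subgroup.subset_closure hg

lemma x0s0_stab : x 0 * σ 0 ∈ stab x σ ℓ := mem_stab (Or.inl (by simp))

include h

lemma Rels.x_stab {j : ℕ} (hj : 1 ≤ j) : x j ∈ stab x σ ℓ :=
  stab_aux (x := x) (mem_stab (Or.inl (by simp))) (fun j hj => h.xx 1 j hj)
    (mem_stab (Or.inl (by simp))) (mem_stab (Or.inl (by simp))) j hj

lemma Rels.s_stab {j : ℕ} (hj : 1 ≤ j) : σ j ∈ stab x σ ℓ :=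
  stab_aux (x := x) (mem_stab (Or.inl (by simp))) (fun j hj => h.σx 1 j hj)
    (mem_stab (Or.inl (by simp))) (mem_stab (Or.inl (by simp))) j hj

lemma Rels.l_stab {j : ℕ} (hj : 1 ≤ j) (w : FreeGroup S) : ℓ j w ∈ stab x σ ℓ :=
  stab_aux (x := x) (y := fun j => ℓ j w) (mem_stab (Or.inl (by simp)))
    (fun j hj => h.lx 1 j w hj)
    (mem_stab (Or.inr ⟨w, Or.inl rfl⟩)) (mem_stab (Or.inr ⟨w, Or.inr rfl⟩)) j hj

lemma Rels.x_asc_far {j a : ℕ} (hja : a < j) : x j * asc σ a = asc σ a * x j := by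
  induction a with
  | zero => simp [asc]
  | succ a ih => rw [asc, ← mul_assoc, ← h.σx_far a j (by omega), mul_assoc, ih (by omega),
      mul_assoc]

lemma Rels.s_asc_far {j a : ℕ} (hja : a < j) : σ j * asc σ a = asc σ a * σ j := by
  induction a with
  | zero => simp [asc]
  | succ a ih => rw [asc, ← mul_assoc, ← h.σσ_far a j (by omega), mul_assoc, ih (by omega),
      mul_assoc]

lemma Rels.l_asc_far {j a : ℕ} (hja : a < j) (w : FreeGroup S) :
    ℓ j w * asc σ a = asc σ a * ℓ j w := by
  induction a with
  | zero => simp [asc]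
  | succ a ih => rw [asc, ← mul_assoc, ← h.σl_far a j w (by omega), mul_assoc, ih (by omega),
      mul_assoc]

lemma Rels.x_asc {j a : ℕ} (hja : j < a) : x j * asc σ (a + 1) = asc σ a * x (j + 1) := by
  induction a, hja using Nat.le_induction with
  | base =>
    have := h.x_asc_far (a := j) (j := j + 1) (by omega)
    simp only [asc]
    rw [mul_assoc, ← this, ← mul_assoc (σ j), h.σx_next]
    simp only [mul_assoc]
  | succ a hja ih =>
    rw [asc, ← mul_assoc, ← h.σx j a hja, mul_assoc, ih, asc, mul_assoc]

lemma Rels.x_asc_same (a : ℕ) : (asc σ a)⁻¹ * x a * asc σ (a + 1) ∈ stab x σ ℓ := by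
  induction a with
  | zero => simpa [asc] using x0s0_stab
  | succ a ih =>
    have e1 := h.s_asc_far (a := a) (j := a + 1) (by omega)
    have e : (asc σ (a + 1))⁻¹ * x (a + 1) * asc σ (a + 1 + 1) =
        ((asc σ a)⁻¹ * x a * asc σ (a + 1)) * σ (a + 1) := by
      calc (asc σ (a + 1))⁻¹ * x (a + 1) * asc σ (a + 1 + 1)
          = (asc σ a)⁻¹ * ((σ a * x (a + 1)) * σ (a + 1) * σ a) * asc σ a := by
            simp only [asc, mul_inv_rev, h.σ_inv, mul_assoc]
        _ = (asc σ a)⁻¹ * x a * ((σ (a + 1) * σ a * σ (a + 1)) * σ a) * asc σ a := by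
            rw [h.σx_next]; simp only [mul_assoc]
        _ = (asc σ a)⁻¹ * x a * σ a * (σ (a + 1) * asc σ a) := by
            rw [← h.braid]; simp only [mul_assoc, h.ss]
        _ = _ := by rw [e1]; simp only [asc, mul_assoc]
    rw [e]
    exact mul_mem ih (h.s_stab (by omega))

lemma Rels.s_asc {j a : ℕ} (hja : j + 1 < a) : σ j * asc σ a = asc σ a * σ (j + 1) := by
  induction a, hja using Nat.le_induction with
  | base =>
    have e1 := h.s_asc_far (a := j) (j := j + 1) (by omega)
    simp only [asc]
    rw [mul_assoc, mul_assoc, ← e1, ← mul_assoc, ← mul_assoc, h.braid]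
    simp only [mul_assoc]
  | succ a hja ih => rw [asc, ← mul_assoc, h.σσ_far j a (by omega), mul_assoc, ih, mul_assoc]

lemma Rels.l_asc {j a : ℕ} (hja : j < a) (w : FreeGroup S) :
    ℓ j w * asc σ a = asc σ a * ℓ (j + 1) w := by
  induction a, hja using Nat.le_induction with
  | base =>
    have e1 := h.l_asc_far (a := j) (j := j + 1) (by omega) w
    simp only [asc]
    rw [mul_assoc, ← e1, ← mul_assoc, ← h.σl_next, mul_assoc]
  | succ a hja ih => rw [asc, ← mul_assoc, h.lσ_far j a w (by omega), mul_assoc, ih, mul_assoc]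

lemma Rels.asc_s (a j : ℕ) :
    ∃ a', ∃ k ∈ stab x σ ℓ, (asc σ a)⁻¹ * σ j = k * (asc σ a')⁻¹ := by
  have : ∃ a', ∃ k ∈ stab x σ ℓ, σ j * asc σ a = asc σ a' * k := by
    rcases lt_trichotomy j a with hja | rfl | hja
    · rcases Nat.lt_or_ge (j + 1) a with h2 | h2
      · exact ⟨a, _, h.s_stab (by omega), h.s_asc h2⟩
      · obtain rfl : a = j + 1 := by omega
        exact ⟨j, 1, one_mem _, by rw [asc, h.ss, mul_one]⟩
    · exact ⟨j + 1, 1, one_mem _, by rw [asc, mul_one]⟩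
    · exact ⟨a, _, h.s_stab (by omega), h.s_asc_far hja⟩
  obtain ⟨a', k, hk, e⟩ := this
  refine ⟨a', k⁻¹, inv_mem hk, ?_⟩
  have := congrArg (·⁻¹) e
  simpa [h.σ_inv] using this

lemma Rels.asc_sig {p : G} (hp : p ∈ sig σ) (a : ℕ) :
    ∃ a', ∃ k ∈ stab x σ ℓ, (asc σ a)⁻¹ * p = k * (asc σ a')⁻¹ := by
  induction hp using Subgroup.closure_induction'' generalizing a with
  | one => exact ⟨a, 1, one_mem _, by simp⟩
  | mem _ hx =>
    obtain ⟨j, rfl⟩ := hx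
    exact h.asc_s a j
  | inv_mem _ hx =>
    obtain ⟨j, rfl⟩ := hx
    rw [h.σ_inv]
    exact h.asc_s a j
  | mul p q _ _ hp hq =>
    obtain ⟨a', k, hk, e⟩ := hp a
    obtain ⟨a'', k', hk', e'⟩ := hq a'
    exact ⟨a'', k * k', mul_mem hk hk', by rw [← mul_assoc, e, mul_assoc, e', mul_assoc]⟩

lemma Rels.posX_asc {f : G} (hf : f ∈ posX x) (a : ℕ) :
    ∃ a', ∃ k ∈ stab x σ ℓ, f * asc σ a' = asc σ a * k := by
  induction hf using Submonoid.closure_induction generalizing a with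
  | one => exact ⟨a, 1, one_mem _, by simp⟩
  | mem _ hx =>
    obtain ⟨j, rfl⟩ := hx
    rcases lt_trichotomy j a with hja | rfl | hja
    · exact ⟨a + 1, _, h.x_stab (by omega), h.x_asc hja⟩
    · exact ⟨j + 1, _, h.x_asc_same j, by group⟩
    · exact ⟨a, _, h.x_stab (by omega), h.x_asc_far hja⟩
  | mul p q _ _ hp hq =>
    obtain ⟨a', k, hk, e⟩ := hp a
    obtain ⟨a'', k', hk', e'⟩ := hq a'
    exact ⟨a'', k * k', mul_mem hk hk', by rw [mul_assoc, e', ← mul_assoc, e, mul_assoc]⟩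

lemma Rels.asc_l_ne {a j : ℕ} (hja : j ≠ a) (w : FreeGroup S) :
    ∃ k ∈ stab x σ ℓ, (asc σ a)⁻¹ * ℓ j w = k * (asc σ a)⁻¹ := by
  rcases lt_or_gt_of_ne hja with h1 | h1
  · refine ⟨ℓ (j + 1) w, h.l_stab (by omega) w, ?_⟩
    rw [inv_mul_eq_iff_eq_mul, ← mul_assoc, ← h.l_asc h1]; group
  · refine ⟨ℓ j w, h.l_stab (by omega) w, ?_⟩
    rw [inv_mul_eq_iff_eq_mul, ← mul_assoc, ← h.l_asc_far h1]; group

lemma Rels.ll_comm {i j : ℕ} (hij : i ≠ j) (w w' : FreeGroup S) :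
    ℓ i w * ℓ j w' = ℓ j w' * ℓ i w := by
  rcases lt_or_gt_of_ne hij with h1 | h1
  · exact h.ll_far i j w w' h1
  · exact (h.ll_far j i w' w h1).symm

/-- A label moves the point `1^a 0 1^ω` to another point ending in `1^ω`. -/
lemma Rels.asc_l (n : ℕ) (w : FreeGroup S) (hw : M.sect w⁻¹ (List.replicate n true) = 1) (a : ℕ) :
    ∃ a', ∃ k ∈ stab x σ ℓ, ∃ g ∈ posX x,
      (asc σ a)⁻¹ * ℓ a w = k * (asc σ a')⁻¹ * g⁻¹ := by
  induction n generalizing w a with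
  | zero =>
    have : w = 1 := by simpa using hw
    exact ⟨a, 1, one_mem _, 1, one_mem _, by simp [this]⟩
  | succ n ih =>
    rw [List.replicate_succ, Automaton.sect_cons, M.sec1_inv'] at hw
    have hb := M.bit_bit_inv w true
    rw [M.bit_eq w] at hb
    -- The label is the product of its two sections and possibly an exchange of the two halves; only
    -- one of the sections acts on the point.
    have e0 := h.lx_same a w
    have e1 : ℓ a w = x a * ((if M.bit w false then σ a else 1) * ℓ a (M.sec1 w false) *
        ℓ (a + 1) (M.sec1 w true)) * (x a)⁻¹ := by rw [← e0]; group
    have hk0 := h.x_asc_same a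
    set k0 := (asc σ a)⁻¹ * x a * asc σ (a + 1) with hk0'
    have e2 : (asc σ a)⁻¹ * x a = k0 * (asc σ (a + 1))⁻¹ := by rw [hk0']; group
    cases hf : M.bit w false with
    | false =>
      rw [hf] at hb
      simp only [Bool.xor_false] at hb
      rw [hb] at hw
      obtain ⟨k1, hk1, e3⟩ := h.asc_l_ne (a := a + 1) (j := a) (by omega) (M.sec1 w false)
      obtain ⟨a', k, hk, g, hg, e4⟩ := ih _ hw (a + 1)
      refine ⟨a', k0 * k1 * k, mul_mem (mul_mem hk0 hk1) hk, x a * g, mul_mem (x_mem x a) hg, ?_⟩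
      rw [e1, hf]
      calc (asc σ a)⁻¹ * (x a * ((if false = true then σ a else 1) * ℓ a (M.sec1 w false) *
            ℓ (a + 1) (M.sec1 w true)) * (x a)⁻¹)
          = ((asc σ a)⁻¹ * x a) * ℓ a (M.sec1 w false) * ℓ (a + 1) (M.sec1 w true) * (x a)⁻¹ := by
            simp [mul_assoc]
        _ = k0 * ((asc σ (a + 1))⁻¹ * ℓ a (M.sec1 w false)) * ℓ (a + 1) (M.sec1 w true) *
            (x a)⁻¹ := by rw [e2]; simp only [mul_assoc]
        _ = k0 * k1 * ((asc σ (a + 1))⁻¹ * ℓ (a + 1) (M.sec1 w true)) * (x a)⁻¹ := by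
            rw [e3]; simp only [mul_assoc]
        _ = _ := by rw [e4]; simp only [mul_assoc, mul_inv_rev]
    | true =>
      rw [hf] at hb
      have hb' : M.bit w⁻¹ true = false := by simpa using hb
      rw [hb'] at hw
      obtain ⟨k1, hk1, e3⟩ := h.asc_l_ne (a := a) (j := a + 1) (by omega) (M.sec1 w true)
      obtain ⟨a', k, hk, g, hg, e4⟩ := ih _ hw a
      refine ⟨a', k0 * k1 * k, mul_mem (mul_mem hk0 hk1) hk, x a * g, mul_mem (x_mem x a) hg, ?_⟩
      have e5 : (asc σ (a + 1))⁻¹ * σ a = (asc σ a)⁻¹ := by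
        rw [asc, mul_inv_rev, inv_mul_cancel_right]
      rw [e1, hf]
      calc (asc σ a)⁻¹ * (x a * ((if true = true then σ a else 1) * ℓ a (M.sec1 w false) *
            ℓ (a + 1) (M.sec1 w true)) * (x a)⁻¹)
          = ((asc σ a)⁻¹ * x a) * σ a * (ℓ a (M.sec1 w false) * ℓ (a + 1) (M.sec1 w true)) *
            (x a)⁻¹ := by simp [mul_assoc]
        _ = k0 * ((asc σ (a + 1))⁻¹ * σ a) * (ℓ (a + 1) (M.sec1 w true) * ℓ a (M.sec1 w false)) *
            (x a)⁻¹ := by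
            rw [e2, h.ll_comm (i := a) (j := a + 1) (by omega)]; simp only [mul_assoc]
        _ = k0 * ((asc σ a)⁻¹ * ℓ (a + 1) (M.sec1 w true)) * ℓ a (M.sec1 w false) * (x a)⁻¹ := by
            rw [e5]; simp only [mul_assoc]
        _ = k0 * k1 * ((asc σ a)⁻¹ * ℓ a (M.sec1 w false)) * (x a)⁻¹ := by
            rw [e3]; simp only [mul_assoc]
        _ = _ := by rw [e4]; simp only [mul_assoc, mul_inv_rev]

lemma Rels.asc_diag (a : ℕ) (W : ℕ → FreeGroup S) (n : ℕ) : ∃ k ∈ stab x σ ℓ, ∃ w,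
    (asc σ a)⁻¹ * diag ℓ W n = k * (asc σ a)⁻¹ * ℓ a w := by
  induction n with
  | zero => exact ⟨1, one_mem _, 1, by simp [diag]⟩
  | succ n ih =>
    obtain ⟨k, hk, w, e⟩ := ih
    rcases eq_or_ne n a with rfl | hna
    · exact ⟨k, hk, w * W n, by rw [diag, ← mul_assoc, e, map_mul, mul_assoc, mul_assoc]⟩
    · obtain ⟨k', hk', e'⟩ := h.asc_l_ne hna (W n)
      refine ⟨k * k', mul_mem hk hk', w, ?_⟩
      rw [diag, ← mul_assoc, e, mul_assoc, h.ll_comm hna.symm, ← mul_assoc, mul_assoc k, e']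
      simp only [mul_assoc]

/-- The double cosets of `stab` in `B` are represented by `1` and `σ 0`: an element of `B` either
fixes the point `01^ω` or moves it to another point ending in `1^ω`. -/
lemma Rels.B_double (hdie : ∀ w : FreeGroup S, ∃ n, M.sect w (List.replicate n true) = 1) {b : G}
    (hb : b ∈ h.B) :
    b ∈ stab x σ ℓ ∨ ∃ k ∈ stab x σ ℓ, ∃ k' ∈ stab x σ ℓ, b = k * σ 0 * k' := by
  obtain ⟨f, hf, t, ht, g, hg, rfl⟩ := hb
  obtain ⟨n, W, hW, p, hp, rfl⟩ := h.lam_decomp ht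
  -- Each factor of `f * t * g⁻¹` in turn replaces the coset representative `(asc σ a)⁻¹` by
  -- another.
  obtain ⟨a, k1, hk1, e1⟩ := h.posX_asc hf 0
  obtain ⟨k2, hk2, w, e2⟩ := h.asc_diag a W n
  obtain ⟨m, hm⟩ := hdie w⁻¹
  obtain ⟨a3, k3, hk3, g3, hg3, e3⟩ := h.asc_l m w hm a
  obtain ⟨g4, hg4, p4, hp4, e4⟩ := h.push_sig.mem (inv_mem hp) hg3
  obtain ⟨a5, k5, hk5, e5⟩ := h.asc_sig (inv_mem hp4) a3
  obtain ⟨a6, k6, hk6, e6⟩ := h.posX_asc (mul_mem hg hg4) 0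
  have hasc : asc σ a6 ∈ sig σ := by
    generalize a6 = a
    induction a with
    | zero => exact one_mem _
    | succ a ih => exact mul_mem (s_mem_sig σ a) ih
  obtain ⟨a7, k7, hk7, e7⟩ := h.asc_sig hasc a5
  have e1' : f = k1 * (asc σ a)⁻¹ := by
    simp only [asc, one_mul] at e1
    rw [← e1]; group
  have e4' : g3⁻¹ * p = p4⁻¹ * g4⁻¹ := by
    have := congrArg (·⁻¹) e4
    simpa using this
  have e6' : g4⁻¹ * g⁻¹ = asc σ a6 * k6⁻¹ := by
    simp only [asc, one_mul] at e6
    rw [← e6]; group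
  have key : f * (diag ℓ W n * p) * g⁻¹ = k1 * k2 * k3 * k5 * k7 * (asc σ a7)⁻¹ * k6⁻¹ := by
    calc f * (diag ℓ W n * p) * g⁻¹ = k1 * ((asc σ a)⁻¹ * diag ℓ W n) * p * g⁻¹ := by
          rw [e1']; simp only [mul_assoc]
      _ = k1 * k2 * ((asc σ a)⁻¹ * ℓ a w) * p * g⁻¹ := by rw [e2]; simp only [mul_assoc]
      _ = k1 * k2 * k3 * (asc σ a3)⁻¹ * (g3⁻¹ * p) * g⁻¹ := by rw [e3]; simp only [mul_assoc]
      _ = k1 * k2 * k3 * ((asc σ a3)⁻¹ * p4⁻¹) * (g4⁻¹ * g⁻¹) := by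
          rw [e4']; simp only [mul_assoc]
      _ = k1 * k2 * k3 * k5 * ((asc σ a5)⁻¹ * asc σ a6) * k6⁻¹ := by
          rw [e5, e6']; simp only [mul_assoc]
      _ = _ := by rw [e7]; simp only [mul_assoc]
  have hK : k1 * k2 * k3 * k5 * k7 ∈ stab x σ ℓ :=
    mul_mem (mul_mem (mul_mem (mul_mem hk1 hk2) hk3) hk5) hk7
  rw [key]
  cases a7 with
  | zero => exact Or.inl (by simpa [asc] using mul_mem hK (inv_mem hk6))
  | succ a =>
    have : ∀ a, ∃ k ∈ stab x σ ℓ, asc σ (a + 1) = k * σ 0 := by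
      intro a
      induction a with
      | zero => exact ⟨1, one_mem _, by simp [asc]⟩
      | succ a ih =>
        obtain ⟨k, hk, e⟩ := ih
        exact ⟨σ (a + 1) * k, mul_mem (h.s_stab (by omega)) hk, by rw [asc, e, mul_assoc]⟩
    obtain ⟨k, hk, e⟩ := this a
    refine Or.inr ⟨_, hK, k⁻¹ * k6⁻¹, mul_mem (inv_mem hk) (inv_mem hk6), ?_⟩
    rw [e, mul_inv_rev, h.σ_inv]; simp only [mul_assoc]

include hc

/-- Exchanging the halves turns the point `01^ω` into the end `1^ω`. -/
lemma Rels.conj_stab {k : G} (hk : k ∈ stab x σ ℓ) : c * k * c ∈ h.B := by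
  have hxi : ∀ i, x i ∈ h.B := fun i => h.H_le_B (h.posX_le_H (x_mem x i))
  have hsi : ∀ i, σ i ∈ h.B := fun i => h.H_le_B (h.sig_le_H (s_mem_sig σ i))
  have hli : ∀ i w, ℓ i w ∈ h.B := fun i w => h.lam_le_B (l_mem_lam σ ℓ i w)
  have hcc := hc.cc
  have hci : c⁻¹ = c := inv_eq_of_mul_eq_one_left hcc
  have hle : stab x σ ℓ ≤ h.B.comap (MulAut.conj c).toMonoidHom := by
    refine (Subgroup.closure_le _).2 ?_
    have mm : ∀ {g : G}, c * g * c ∈ h.B → g ∈ h.B.comap (MulAut.conj c).toMonoidHom := by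
      intro g hg
      change c * g * c⁻¹ ∈ h.B
      rwa [hci]
    have cancel : ∀ {a b d : G}, b ∈ h.B → d ∈ h.B → a * b = d → a ∈ h.B := by
      intro a b d hb hd e
      rw [← eq_mul_inv_iff_mul_eq] at e
      rw [e]
      exact mul_mem hd (inv_mem hb)
    rintro g (hg | ⟨w, rfl | rfl⟩)
    · simp only [Set.mem_insert_iff, Set.mem_singleton_iff] at hg
      rcases hg with rfl | rfl | rfl | rfl | rfl <;> apply mm
      · exact cancel (hxi 0) (cancel (hxi 1) (mul_mem (hxi 0) (hxi 0)) hc.x1) rfl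
      · exact cancel (hxi 0) (cancel (hxi 1) (cancel (hxi 2)
          (mul_mem (mul_mem (hxi 0) (hxi 1)) (hxi 1)) hc.x2) rfl) rfl
      · exact cancel (hxi 0) (cancel (hxi 1)
          (mul_mem (mul_mem (hxi 0) (hxi 1)) (hsi 0)) hc.s1) rfl
      · exact cancel (hxi 0) (cancel (hxi 1) (cancel (hxi 2)
          (mul_mem (mul_mem (mul_mem (hxi 0) (hxi 1)) (hxi 2)) (hsi 1)) hc.s2) rfl) rfl
      · refine cancel (hxi 0) (cancel (hsi 0) (one_mem _) ?_) rfl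
        rw [← hc.xs]; simp only [mul_assoc]
    · exact mm (cancel (hxi 0) (mul_mem (hxi 0) (hli 0 w)) (hc.l1 w))
    · exact mm (cancel (hxi 0) (cancel (hxi 1)
        (mul_mem (mul_mem (hxi 0) (hxi 1)) (hli 1 w)) (hc.l2 w)) rfl)
  have := hle hk
  change c * k * c⁻¹ ∈ h.B at this
  rwa [hci] at this

/-- The whole group is the union of `B` and `B * c * B`. -/
lemma Rels.double (hdie : ∀ w : FreeGroup S, ∃ n, M.sect w (List.replicate n true) = 1)
    (hgen : Subgroup.closure (insert c (h.B : Set G)) = ⊤) (z : G) :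
    z ∈ h.B ∨ ∃ b ∈ h.B, ∃ b' ∈ h.B, z = b * c * b' := by
  have hx0 : x 0 ∈ h.B := h.H_le_B (h.posX_le_H (x_mem x 0))
  have hs0 : σ 0 ∈ h.B := h.H_le_B (h.sig_le_H (s_mem_sig σ 0))
  have hcc := hc.cc
  have hci : c⁻¹ = c := inv_eq_of_mul_eq_one_left hcc
  have hc2 : ∀ a, c * (c * a) = a := fun a => by rw [← mul_assoc, hcc, one_mul]
  -- The union is closed under multiplication by `c`, since `c * B * c` is contained in it.
  have conjB : ∀ b ∈ h.B, c * b * c ∈ h.B ∨ ∃ b1 ∈ h.B, ∃ b2 ∈ h.B, c * b * c = b1 * c * b2 := by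
    intro b hb
    rcases h.B_double hdie hb with hb | ⟨k, hk, k', hk', rfl⟩
    · exact Or.inl (h.conj_stab hc hb)
    · right
      have e : c * σ 0 * c = x 0 * σ 0 * (x 0)⁻¹ * c * (x 0)⁻¹ := by
        rw [← hc.s0]; group
      refine ⟨c * k * c * (x 0 * σ 0 * (x 0)⁻¹), mul_mem (h.conj_stab hc hk)
        (mul_mem (mul_mem hx0 hs0) (inv_mem hx0)), (x 0)⁻¹ * (c * k' * c),
        mul_mem (inv_mem hx0) (h.conj_stab hc hk'), ?_⟩
      calc c * (k * σ 0 * k') * c = c * k * c * (c * σ 0 * c) * (c * k' * c) := by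
            simp only [mul_assoc, hc2]
        _ = _ := by rw [e]; simp only [mul_assoc]
  have hz : z ∈ Subgroup.closure (insert c (h.B : Set G)) := hgen ▸ Subgroup.mem_top z
  have stepc : ∀ z, (z ∈ h.B ∨ ∃ b ∈ h.B, ∃ b' ∈ h.B, z = b * c * b') →
      (c * z ∈ h.B ∨ ∃ b ∈ h.B, ∃ b' ∈ h.B, c * z = b * c * b') := by
    rintro z (hz | ⟨b, hb, b', hb', rfl⟩)
    · exact Or.inr ⟨1, one_mem _, z, hz, by rw [one_mul]⟩
    · rcases conjB b hb with h1 | ⟨b1, hb1, b2, hb2, e⟩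
      · left
        have := mul_mem h1 hb'
        simpa only [mul_assoc] using this
      · exact Or.inr ⟨b1, hb1, b2 * b', mul_mem hb2 hb', by
          rw [← mul_assoc, ← mul_assoc, ← mul_assoc, e]⟩
  have stepb : ∀ a ∈ h.B, ∀ z, (z ∈ h.B ∨ ∃ b ∈ h.B, ∃ b' ∈ h.B, z = b * c * b') →
      (a * z ∈ h.B ∨ ∃ b ∈ h.B, ∃ b' ∈ h.B, a * z = b * c * b') := by
    rintro a ha z (hz | ⟨b, hb, b', hb', rfl⟩)
    · exact Or.inl (mul_mem ha hz)
    · exact Or.inr ⟨a * b, mul_mem ha hb, b', hb', by simp only [mul_assoc]⟩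
  induction hz using Subgroup.closure_induction_left with
  | one => exact Or.inl (one_mem _)
  | mul_left g hg t _ ih =>
    rcases hg with rfl | hg
    · exact stepc t ih
    · exact stepb g hg t ih
  | inv_mul_cancel g hg t _ ih =>
    rcases hg with rfl | hg
    · rw [hci]; exact stepc t ih
    · exact stepb _ (inv_mem hg) t ih

end Double
end TP

namespace TP

/-! ### Faithfulness of the presentation and triviality of the center -/

section Faithful

variable {S : Type}

/-- The germs that fix the end `1^ω` and act near it as `1^i v ↦ 1^j v`, without labels. -/
def FixEnd (S : Type) : Subgroup (Germ S) where
  carrier := {γ | ∃ p : BD S, germ p = γ ∧ ∃ i j N : ℕ, ∀ v h, N ≤ v.length →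
    p.1 (ones i v, h) = (ones j v, h)}
  one_mem' := ⟨1, map_one _, 0, 0, 0, fun _ _ _ => rfl⟩
  mul_mem' := by
    rintro _ _ ⟨p, rfl, i, j, N, hp⟩ ⟨q, rfl, i', j', N', hq⟩
    refine ⟨p * q, map_mul _ _ _, i' + i, j + j', N + N', fun v h hv => ?_⟩
    change p.1 (q.1 _) = _
    rw [ones_add, hq _ _ (by simp; omega), ← ones_add, add_comm j', ones_add,
      hp _ _ (by simp; omega), ← ones_add]
  inv_mem' := by
    rintro _ ⟨p, rfl, i, j, N, hp⟩
    refine ⟨p⁻¹, map_inv _ _, j, i, N, fun v h hv => ?_⟩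
    change p.1⁻¹ _ = _
    rw [Equiv.Perm.inv_eq_iff_eq, hp v h hv]

lemma gX_fixEnd (i : ℕ) : (gX i : Germ S) ∈ FixEnd S := by
  refine ⟨U i x0B, rfl, i + 2, i + 1, 0, fun v h _ => ?_⟩
  rw [ones_add, U_ones, ones_add]; rfl

lemma gS_fixEnd (i : ℕ) : (gS i : Germ S) ∈ FixEnd S := by
  refine ⟨U i s0B, rfl, i + 2, i + 2, 0, fun v h _ => ?_⟩
  rw [ones_add, U_ones]; rfl

lemma gL_fixEnd (M : Automaton S) (i : ℕ) (w : FreeGroup S) : gL M i w ∈ FixEnd S := by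
  refine ⟨U i (lB M w), rfl, i + 1, i + 1, 0, fun v h _ => ?_⟩
  rw [ones_add, U_ones, ones_succ, lB_true]

lemma gC_not_fixEnd : (gC : Germ S) ∉ FixEnd S := by
  rintro ⟨p, hpc, i, j, N, hp⟩
  obtain ⟨N', hN'⟩ := germ_eq.1 hpc
  have h1 := hp (true :: List.replicate (N + N') true) 1 (by simp; omega)
  rw [hN' _ _ (by simp; omega), ones_true, ones_true] at h1
  exact absurd h1 (by simp [cB, cP])

variable {M : Automaton S} {G : Type} [Group G] {x σ : ℕ → G}
  {ℓ : ℕ → FreeGroup S →* G} {c : G} (h : Rels M x σ ℓ) (hc : CRels x σ ℓ c)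
  {θ : G →* Germ S} (hx : ∀ i, θ (x i) = gX i) (hs : ∀ i, θ (σ i) = gS i)
  (hl : ∀ i w, θ (ℓ i w) = gL M i w) (hθc : θ c = gC)

include hx hs hl in
/-- Elements of `B` fix the end `1^ω`. -/
lemma Rels.B_fixEnd {b : G} (hb : b ∈ h.B) : θ b ∈ FixEnd S := by
  obtain ⟨f, hf, t, ht, g, hg, rfl⟩ := hb
  have hX := fun {f : G} => posX_map θ hx (FixEnd S).toSubmonoid gX_fixEnd (f := f)
  have hlam : lam σ ℓ ≤ (FixEnd S).comap θ := by
    refine (Subgroup.closure_le _).2 ?_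
    rintro _ (⟨i, rfl⟩ | ⟨i, w, rfl⟩)
    · change θ (σ i) ∈ FixEnd S; rw [hs]; exact gS_fixEnd i
    · change θ (ℓ i w) ∈ FixEnd S; rw [hl]; exact gL_fixEnd M i w
  rw [map_mul, map_mul, map_inv]
  exact mul_mem (mul_mem (hX hf) (hlam ht)) (inv_mem (hX hg))

include hc hx hs hl hθc in
/-- The action is faithful, since the elements of `B * c * B` move the end `1^ω`. -/
lemma Rels.injective (hdie : ∀ w : FreeGroup S, ∃ n, M.sect w (List.replicate n true) = 1)
    (hgen : Subgroup.closure (insert c (h.B : Set G)) = ⊤) : Function.Injective θ := by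
  rw [injective_iff_map_eq_one]
  intro z hz
  rcases h.double hc hdie hgen z with hb | ⟨b, hb, b', hb', rfl⟩
  · exact h.B_faithful θ hx hs hl hb hz
  · exfalso
    refine gC_not_fixEnd (S := S) ?_
    have e : gC = (θ b)⁻¹ * (θ b')⁻¹ := by
      rw [map_mul, map_mul, hθc, mul_eq_one_iff_eq_inv] at hz
      rw [← hz]; group
    rw [e]
    exact mul_mem (inv_mem (h.B_fixEnd hx hs hl hb)) (inv_mem (h.B_fixEnd hx hs hl hb'))

include hc hx hs hl hθc in
/-- The center is trivial, as an element commuting with all strand transpositions has trivial germ.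
-/
lemma Rels.center (hdie : ∀ w : FreeGroup S, ∃ n, M.sect w (List.replicate n true) = 1)
    (hgen : Subgroup.closure (insert c (h.B : Set G)) = ⊤) : Subgroup.center G = ⊥ := by
  rw [eq_bot_iff]
  intro z hz
  rw [Subgroup.mem_bot]
  have hz' : ∀ g, g * z = z * g := Subgroup.mem_center_iff.1 hz
  rcases h.double hc hdie hgen z with hb | ⟨b, hb, b', hb', rfl⟩
  · obtain ⟨p, hpz, i, j, N, hp⟩ := h.B_fixEnd hx hs hl hb
    have comm : ∀ k, ∃ N, ∀ v h, N ≤ v.length →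
        (U k s0B).1 (p.1 (v, h)) = p.1 ((U k s0B).1 (v, h)) := by
      intro k
      have e := congrArg θ (hz' (σ k))
      rw [map_mul, map_mul, hs, ← hpz, gS, ← map_mul, ← map_mul] at e
      exact germ_eq.1 e
    -- Commutation with `σ i` at the strand `1^i0` shows that `z` fixes `1^ω` with slope one.
    have hij : i = j := by
      obtain ⟨N', hN'⟩ := comm i
      have e := hN' (ones i (false :: List.replicate (N + N') true)) 1 (by simp; omega)
      rw [hp _ _ (by simp; omega), U_s0_strand, U_s0_strand, Equiv.swap_apply_left, ones_succ,
        ← ones_true, hp _ _ (by simp; omega), ones_true, ← ones_succ] at e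
      have e2 := (ones_inj (congrArg Prod.fst e)).1
      rw [Equiv.swap_apply_def] at e2
      split_ifs at e2 <;> omega
    subst hij
    -- A permutation that is trivial below `1^(k+1)` and commutes with `σ k` is trivial below `1^k`.
    have key : ∀ k, (∃ N, ∀ v h, N ≤ v.length → p.1 (ones k v, h) = (ones k v, h)) →
        (∃ N, ∀ v h, N ≤ v.length → p.1 (v, h) = (v, h)) := by
      intro k
      induction k with
      | zero => exact fun e => e
      | succ k ih =>
        rintro ⟨N, hN⟩
        refine ih ?_
        obtain ⟨N', hN'⟩ := comm k
        refine ⟨N + N' + 1, fun v h hv => ?_⟩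
        rcases v with _ | ⟨_ | _, v⟩
        · simp at hv
        · have e := hN' (ones (k + 1) (false :: v)) h (by simp at hv ⊢; omega)
          rw [hN _ _ (by simp at hv ⊢; omega), U_s0_strand, Equiv.swap_apply_right] at e
          exact e.symm
        · have := hN v h (by simp at hv; omega)
          rwa [ones_succ, ← ones_true] at this
    obtain ⟨K, hK⟩ := key i ⟨N, hp⟩
    refine h.injective hc hx hs hl hθc hdie hgen ?_
    rw [← hpz, map_one, ← map_one germ]
    exact germ_eq.2 ⟨K, hK⟩
  -- A conjugate of the element lies in `c * B`, so it sends `1^ω` to `01^ω` and is seen not to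
  -- commute with `σ (i + 1)`.
  · exfalso
    have e0 : c * (b' * b) = b * c * b' := by
      have := hz' b
      rw [mul_assoc] at this
      have e1 := mul_left_cancel (a := b) (b := b * c * b') (c := c * (b' * b)) (by
        rw [mul_assoc, this]; simp only [mul_assoc])
      exact e1.symm
    rw [← e0] at hz'
    obtain ⟨p, hpz, i, j, N, hp⟩ := h.B_fixEnd hx hs hl (mul_mem hb' hb)
    have hp1 : ∀ v h, N ≤ v.length → p.1 (ones (i + 1) v, h) = (ones (j + 1) v, h) := by
      intro v h hv
      rw [ones_succ, ← ones_true, hp _ _ (by simp; omega), ones_true, ones_succ]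
    have e := congrArg θ (hz' (σ (i + 1)))
    rw [map_mul, map_mul θ c, map_mul θ (c * (b' * b)), map_mul θ c, hs, hθc, ← hpz, gS, gC, ← map_mul, ← map_mul,
      ← map_mul] at e
    obtain ⟨N', hN'⟩ := germ_eq.1 e
    have e2 := hN' (ones (i + 1) (false :: List.replicate (N + N') true)) 1 (by simp; omega)
    change (U (i + 1) s0B).1 (cB.1 (p.1 _)) = cB.1 (p.1 ((U (i + 1) s0B).1 _)) at e2
    rw [hp1 _ _ (by simp; omega), U_s0_strand, Equiv.swap_apply_left, ones_succ (i + 1),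
        ← ones_true, hp1 _ _ (by simp; omega), ones_true] at e2
    have e3 : ∀ (k : ℕ) (v : List Bool) (h : FreeGroup S),
        cB.1 (ones (k + 1) v, h) = (ones 0 (false :: ones k v), h) := fun k v h => rfl
    rw [← ones_succ, e3, e3, U_s0_strand, Equiv.swap_apply_of_ne_of_ne (by omega) (by omega)] at e2
    have e4 := (ones_inj (congrArg Prod.fst e2)).2
    have := (ones_inj e4).1
    omega

/-- The subgroup `B` together with `c` generates the presented group. -/
lemma closure_B_eq_top (M : Automaton S) :
    Subgroup.closure (insert (PresentedGroup.mk (relators M) wc)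
      ((mk_sat (M := M)).rels.B : Set (PG M))) = ⊤ := by
  rw [eq_top_iff]
  rintro z -
  obtain ⟨w, rfl⟩ := PresentedGroup.mk_surjective (relators M) z
  set h := (mk_sat (M := M)).rels
  have hB : ∀ g ∈ h.B, g ∈ Subgroup.closure (insert (PresentedGroup.mk (relators M) wc)
      (h.B : Set (PG M))) := fun g hg => Subgroup.subset_closure (Or.inr hg)
  have hxi : ∀ i, PresentedGroup.mk (relators M) (wx i) ∈ h.B :=
    fun i => h.H_le_B (h.posX_le_H (x_mem (fun i => PresentedGroup.mk (relators M) (wx i)) i))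
  have hsi : ∀ i, PresentedGroup.mk (relators M) (ws i) ∈ h.B :=
    fun i => h.H_le_B (h.sig_le_H (s_mem_sig (fun i => PresentedGroup.mk (relators M) (ws i)) i))
  have hli : ∀ i s, PresentedGroup.mk (relators M) (wl s i) ∈ h.B := fun i s => by
    have := h.lam_le_B (l_mem_lam (fun i => PresentedGroup.mk (relators M) (ws i))
      (phl (PresentedGroup.mk (relators M))) i (FreeGroup.of s))
    rwa [phl_of] at this
  induction w using FreeGroup.induction_on with
  | C1 => rw [map_one]; exact one_mem _
  | of s =>
    rcases s with s | ⟨s, _ | _⟩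
    · fin_cases s
      · exact hB _ (hxi 0)
      · exact hB _ (hxi 1)
      · exact hB _ (hsi 0)
      · exact hB _ (hsi 1)
      · exact Subgroup.subset_closure (Or.inl rfl)
    · exact hB _ (hli 0 s)
    · exact hB _ (hli 1 s)
  | inv_of s ih => rw [map_inv]; exact inv_mem ih
  | mul a b ha hb => rw [map_mul]; exact mul_mem ha hb

/-- The finite presentation `PG M` is a presentation of the group of germs generated by `gX i`, `gS
i`, `gL M i w` and `gC`. -/
theorem theta_injective (M : Automaton S)
    (hdie : ∀ w : FreeGroup S, ∃ n, M.sect w (List.replicate n true) = 1) :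
    Function.Injective (theta M) :=
  (mk_sat (M := M)).rels.injective (mk_sat (M := M)).crels (by simp) (by simp)
    (fun i w => by simp [phl]) (by simp) hdie (closure_B_eq_top M)

theorem PG_center (M : Automaton S)
    (hdie : ∀ w : FreeGroup S, ∃ n, M.sect w (List.replicate n true) = 1) :
    Subgroup.center (PG M) = ⊥ :=
  (mk_sat (M := M)).rels.center (θ := theta M) (mk_sat (M := M)).crels (by simp) (by simp)
    (fun i w => by simp [phl]) (by simp) hdie (closure_B_eq_top M)

lemma psi_ker (M : Automaton S)
    (hdie : ∀ w : FreeGroup S, ∃ n, M.sect w (List.replicate n true) = 1) :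
    (psi M).ker = Subgroup.normalClosure (relators M) := by
  ext w
  rw [MonoidHom.mem_ker, ← theta_mk, ← map_one (theta M),
    (theta_injective M hdie).eq_iff]
  exact QuotientGroup.eq_one_iff w

end Faithful
end TP

namespace TP

/-! ### Absence of finite quotients -/

section Finite

variable {S : Type} {M : Automaton S} {G : Type} [Group G] {x σ : ℕ → G}
  {ℓ : ℕ → FreeGroup S →* G} {c : G} (h : Rels M x σ ℓ) (hc : CRels x σ ℓ c)

/-- A sequence shifted by conjugation with an element of finite order is eventually periodic. -/
lemma periodic_of_shift {y : ℕ → G} {a : G} (ha : ∀ j, 2 ≤ j → y j * a = a * y (j + 1)) {k : ℕ}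
    (hk : a ^ k = 1) {j : ℕ} (hj : 2 ≤ j) : y (j + k) = y j := by
  have : ∀ n, y j * a ^ n = a ^ n * y (j + n) := by
    intro n
    induction n with
    | zero => simp
    | succ n ih =>
      rw [pow_succ, ← mul_assoc, ih, mul_assoc, ha _ (by omega), ← mul_assoc, add_assoc]
  have := this k
  rw [hk, mul_one, one_mul] at this
  exact this.symm

include h in
/-- In a finite group the transpositions become trivial and the shifts coincide. -/
lemma Rels.finite_collapse [Finite G] : (∀ i, σ i = 1) ∧ ∀ i, x i = x 0 := by
  obtain ⟨k, hk3, hk⟩ : ∃ k, 3 ≤ k ∧ x 1 ^ k = 1 :=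
    ⟨3 * orderOf (x 1), by have := orderOf_pos (x 1); omega, by
      rw [mul_comm, pow_mul, pow_orderOf_eq_one, one_pow]⟩
  -- Conjugation by `x 1` shifts the `σ j` with `2 ≤ j`, so this sequence is periodic.
  have pσ : ∀ j, 2 ≤ j → σ (j + k) = σ j := fun j hj =>
    periodic_of_shift (fun j hj => h.σx 1 j (by omega)) hk hj
  -- By periodicity `σ (j + 1)` commutes with `σ j`, and then the braid relation makes them equal.
  have hσ : ∀ j, 2 ≤ j → σ (j + 1) = σ j := by
    intro j hj
    have cm := h.σσ_far (j + 1) (j + k) (by omega)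
    rw [pσ j hj] at cm
    have b := h.braid j
    rw [mul_assoc, cm, h.ss, mul_assoc, h.σσ, mul_one] at b
    exact b
  have hx2 : ∀ j, 2 ≤ j → σ j * x j = x (j + 1) := by
    intro j hj
    rw [h.σx_same j, hσ j hj, h.σσ, mul_one]
  have hx3 : ∀ j, 2 ≤ j → x (j + 2) = x j := by
    intro j hj
    rw [← hx2 (j + 1) (by omega), ← hx2 j hj, hσ j hj, h.ss]
  have hx4 : ∀ j, 2 ≤ j → x (j + 1) = x j := by
    intro j hj
    have := h.xx j (j + 1) (by omega)
    rw [hx3 j hj] at this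
    exact mul_right_cancel this
  have hσ2 : ∀ j, 2 ≤ j → σ j = 1 := by
    intro j hj
    have := hx2 j hj
    rw [hx4 j hj] at this
    exact mul_eq_right.1 this
  have s1 : σ 1 = 1 := by
    have := h.σx 0 1 (by omega)
    rw [hσ2 2 le_rfl, mul_one] at this
    exact mul_eq_right.1 this
  have s0 : σ 0 = 1 := by
    have := h.braid 0
    rw [zero_add, s1, mul_one, one_mul, mul_one] at this
    exact mul_eq_left.1 this
  have x12 : x 2 = x 1 := by
    have e1 := h.xx 0 1 (by omega)
    have e2 := h.xx 0 2 (by omega)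
    rw [hx4 2 le_rfl, ← e1] at e2
    exact mul_right_cancel e2
  have x01 : x 1 = x 0 := by
    have := h.σx_same 0
    rw [zero_add, s0, s1, mul_one, one_mul, mul_one] at this
    exact this.symm
  refine ⟨fun i => ?_, fun i => ?_⟩
  · rcases i with _ | _ | i
    exacts [s0, s1, hσ2 _ (by omega)]
  · induction i with
    | zero => rfl
    | succ i ih =>
      rcases i with _ | _ | i
      · exact x01
      · exact x12.trans x01
      · rw [hx4 _ (by omega), ih]

/-- The only homomorphism to a commutative group taking each state to the product of the values of
its two sections is the trivial one. -/
def SumZero (M : Automaton S) : Prop :=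
  ∀ (Q : Type) [CommGroup Q] (L : FreeGroup S →* Q),
    (∀ s, L (FreeGroup.of s) = L (M.secF s false) * L (M.secF s true)) →
    ∀ s, L (FreeGroup.of s) = 1

include h hc in
/-- In a finite group satisfying the relations all generators are trivial. The labels commute with
each other there and are products of their sections, so `SumZero` applies to them. -/
lemma Rels.finite_trivial [Finite G] (hM : SumZero M) :
    (∀ i, x i = 1) ∧ (∀ i, σ i = 1) ∧ c = 1 ∧ ∀ i w, ℓ i w = 1 := by
  obtain ⟨hσ, hx⟩ := h.finite_collapse
  have x0 : x 0 = 1 := by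
    have e := hc.x1
    rw [hx 1] at e
    have e2 : c * x 0 * c = 1 := by
      rw [mul_assoc (c * x 0 * c)] at e
      exact mul_eq_right.1 e
    have e3 : x 0 = c * (c * x 0 * c) * c := by
      simp only [mul_assoc, hc.cc, mul_one]
      rw [← mul_assoc, hc.cc, one_mul]
    rw [e3, e2, mul_one, hc.cc]
  have hx' : ∀ i, x i = 1 := fun i => (hx i).trans x0
  have hcc : c = 1 := by
    have := hc.s0
    simpa [hσ, hx', hc.cc] using this.symm
  have hl : ∀ i w, ℓ i w = ℓ 0 w := by
    intro i w
    induction i with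
    | zero => rfl
    | succ i ih =>
      have := h.σl_same i w
      rw [hσ, one_mul, mul_one] at this
      rw [← this, ih]
  -- As `ℓ 0` and `ℓ 1` coincide and have commuting values, the values form a commutative group.
  have h0 : ∀ s, ℓ 0 (FreeGroup.of s) = 1 := by
    let I : CommGroup (ℓ 0).range :=
      { (ℓ 0).range.toGroup with
        mul_comm := by
          rintro ⟨_, w, rfl⟩ ⟨_, w', rfl⟩
          have := h.ll_far 0 1 w w' (by omega)
          rw [hl 1] at this
          exact Subtype.ext this }
    have e := hM (ℓ 0).range (ℓ 0).rangeRestrict fun s => by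
      have := h.lx_same 0 (FreeGroup.of s)
      refine Subtype.ext ?_
      change ℓ 0 _ = ℓ 0 _ * ℓ 0 _
      simpa [hσ, hx', hl 1] using this
    exact fun s => congrArg Subtype.val (e s)
  refine ⟨hx', hσ, hcc, fun i w => ?_⟩
  rw [hl]
  have : ℓ 0 = 1 := by ext s; exact h0 s
  rw [this]; rfl

lemma Sat.trivial [Finite G] (hM : SumZero M) {φ : FreeGroup (Gen S) →* G} (hs : Sat M φ) :
    φ = 1 := by
  obtain ⟨e1, e2, e3, e4⟩ := hs.rels.finite_trivial hs.crels hM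
  ext s
  change φ _ = 1
  rcases s with s | ⟨s, _ | _⟩
  · fin_cases s
    exacts [e1 0, e1 1, e2 0, e2 1, e3]
  · have := e4 0 (FreeGroup.of s)
    rwa [phl_of] at this
  · have := e4 1 (FreeGroup.of s)
    rwa [phl_of] at this

/-- The normal core of a subgroup of finite index is everything, since the quotient by it is a
finite group satisfying the relations. -/
theorem PG_noFiniteQuotient (hM : SumZero M) (H : Subgroup (PG M)) (hH : H.index ≠ 0) :
    H = ⊤ := by
  have : H.FiniteIndex := ⟨hH⟩
  have hsat := (mk_sat (M := M)).comp (QuotientGroup.mk' H.normalCore)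
  have : Finite (PG M ⧸ H.normalCore) := Subgroup.finite_quotient_of_finiteIndex
  have e := hsat.trivial hM
  rw [eq_top_iff]
  rintro z -
  obtain ⟨w, rfl⟩ := PresentedGroup.mk_surjective (relators M) z
  have := DFunLike.congr_fun e w
  exact H.normalCore_le ((QuotientGroup.eq_one_iff _).1 this)

end Finite
end TP

namespace TP

/-! ### Automata reading blocks of six bits -/

section Block

/-- The states of a block automaton: a base letter together with the part of the current block
that has already been read. -/
abbrev SS (B : Type) := B × {u : List Bool // u.length ≤ 5}

variable {B : Type} (F : B → List Bool → Bool) (leaf : B → List Bool → Option (B × Bool))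

/-- The state `s` at the beginning of a block. -/
def rt (s : B) : SS B := (s, ⟨[], by simp⟩)

/-- The automaton which reads blocks of six bits: `F` says which bits are flipped, and `leaf` gives
the sections at complete blocks. -/
def blockAut : Automaton (SS B) where
  flip p := F p.1 p.2.1
  sec p b := if h : p.2.1.length < 5 then some ((p.1, ⟨p.2.1 ++ [b], by simp; omega⟩), true)
    else (leaf p.1 (p.2.1 ++ [b])).map fun t => (rt t.1, t.2)

/-- The word of a base letter. -/
def bl (s : B) : FreeGroup (SS B) := FreeGroup.of (rt s)

/-- The word of an optional signed base letter. -/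
def obl : Option (B × Bool) → FreeGroup (SS B)
  | none => 1
  | some (s, true) => bl s
  | some (s, false) => (bl s)⁻¹

lemma optWord_map (o : Option (B × Bool)) :
    optWord (o.map fun t => (rt t.1, t.2)) = obl o := by
  rcases o with _ | ⟨s, _ | _⟩ <;> rfl

lemma blockAut_secF_lt (p : SS B) (b : Bool) (h : p.2.1.length < 5) :
    (blockAut F leaf).secF p b = FreeGroup.of (p.1, ⟨p.2.1 ++ [b], by simp; omega⟩) := by
  simp only [Automaton.secF, blockAut, dif_pos h]; rfl

lemma blockAut_secF_ge (p : SS B) (b : Bool) (h : ¬ p.2.1.length < 5) :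
    (blockAut F leaf).secF p b = obl (leaf p.1 (p.2.1 ++ [b])) := by
  simp only [Automaton.secF, blockAut, dif_neg h]; exact optWord_map _

lemma block_out (s : B) (a b c d e f : Bool) :
    (blockAut F leaf).out (bl s) [a, b, c, d, e, f] =
      [a ^^ F s [], b ^^ F s [a], c ^^ F s [a, b], d ^^ F s [a, b, c], e ^^ F s [a, b, c, d],
        f ^^ F s [a, b, c, d, e]] := by
  simp [bl, rt, blockAut_secF_lt, Automaton.out_cons]
  simp [blockAut]

lemma block_sect (s : B) (a b c d e f : Bool) :
    (blockAut F leaf).sect (bl s) [a, b, c, d, e, f] = obl (leaf s [a, b, c, d, e, f]) := by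
  simp [bl, rt, blockAut_secF_lt, blockAut_secF_ge]

/-- Values of a homomorphism adding up over sections add up over blocks. -/
lemma block_sum {Q : Type} [CommGroup Q] (L : FreeGroup (SS B) →* Q)
    (hL : ∀ s, L (FreeGroup.of s) = L ((blockAut F leaf).secF s false) *
      L ((blockAut F leaf).secF s true))
    (h0 : ∀ s : B, (∏ a : Bool, ∏ b : Bool, ∏ c : Bool, ∏ d : Bool, ∏ e : Bool, ∏ f : Bool,
      L (obl (leaf s [a, b, c, d, e, f]))) = 1) (s : SS B) : L (FreeGroup.of s) = 1 := by
  have hroot : ∀ s : B, L (bl s) = 1 := by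
    intro s
    rw [← h0 s]
    simp only [Fintype.prod_bool]
    rw [bl, rt]
    simp only [hL, blockAut_secF_lt, blockAut_secF_ge, List.length_nil, List.length_cons, List.nil_append,
      List.cons_append, Nat.reduceAdd, Nat.reduceLT, not_false_eq_true]
    ac_rfl
  have hobl : ∀ o : Option (B × Bool), L (obl o) = 1 := by
    rintro (_ | ⟨s, _ | _⟩)
    · exact map_one L
    · rw [obl, map_inv, hroot, inv_one]
    · exact hroot s
  obtain ⟨s, u, hu⟩ := s
  obtain ⟨n, hn⟩ : ∃ n, u.length + n = 5 := ⟨5 - u.length, by omega⟩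
  induction n generalizing u with
  | zero => rw [hL, blockAut_secF_ge _ _ _ _ (by simp; omega),
      blockAut_secF_ge _ _ _ _ (by simp; omega), hobl, hobl, one_mul]
  | succ n ih => rw [hL, blockAut_secF_lt _ _ _ _ (by simp; omega),
      blockAut_secF_lt _ _ _ _ (by simp; omega), ih _ _ (by simp; omega),
      ih _ _ (by simp; omega), one_mul]

lemma sect_inv' {S : Type} (M : Automaton S) (w : FreeGroup S) (v : List Bool) :
    M.sect w⁻¹ v = (M.sect w (M.out w⁻¹ v))⁻¹ := by
  rw [← M.sect_inv, M.out_out_inv]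

/-- If all letters and their inverses have trivial sections at `111111`, then every word of states
has a trivial section at some power of `1`. -/
lemma block_die (h1 : ∀ s, leaf s [true, true, true, true, true, true] = none)
    (h2 : ∀ s a b c d e f, (blockAut F leaf).out (bl s) [a, b, c, d, e, f] =
      [true, true, true, true, true, true] → leaf s [a, b, c, d, e, f] = none)
    (w : FreeGroup (SS B)) : ∃ n, (blockAut F leaf).sect w (List.replicate n true) = 1 := by
  set M := blockAut F leaf
  let T : FreeGroup (SS B) → Prop := fun w => w = 1 ∨ ∃ s, w = FreeGroup.of s ∨ w = (FreeGroup.of s)⁻¹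
  have Tinv : ∀ w, T w → T w⁻¹ := by
    rintro w (rfl | ⟨s, rfl | rfl⟩)
    · exact Or.inl inv_one
    · exact Or.inr ⟨s, Or.inr rfl⟩
    · exact Or.inr ⟨s, Or.inl (inv_inv _)⟩
  have Tobl : ∀ o : Option (B × Bool), T (obl o) := by
    rintro (_ | ⟨s, _ | _⟩)
    · exact Or.inl rfl
    · exact Or.inr ⟨_, Or.inr rfl⟩
    · exact Or.inr ⟨_, Or.inl rfl⟩
  have TsecF : ∀ s b, T (M.secF s b) := by
    intro s b
    by_cases h : s.2.1.length < 5
    · exact Or.inr ⟨_, Or.inl (blockAut_secF_lt F leaf s b h)⟩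
    · rw [show M.secF s b = _ from blockAut_secF_ge F leaf s b h]; exact Tobl _
  have Tsec : ∀ w b, T w → T (M.sec1 w b) := by
    rintro w b (rfl | ⟨s, rfl | rfl⟩)
    · exact Or.inl (M.sec1_one b)
    · rw [M.sec1_of]; exact TsecF _ _
    · rw [M.sec1_inv', M.sec1_of]; exact Tinv _ (TsecF _ _)
  have Tsect : ∀ v w, T w → T (M.sect w v) := by
    intro v
    induction v with
    | nil => exact fun w hw => hw
    | cons b v ih => exact fun w hw => ih _ (Tsec w b hw)
  have inv1 : ∀ w v, M.sect w⁻¹ v = 1 ↔ M.sect w (M.out w⁻¹ v) = 1 := by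
    intro w v; rw [sect_inv', inv_eq_one]
  have hobl : ∀ o : Option (B × Bool), M.sect (obl o) (List.replicate 6 true) = 1 := by
    have key : ∀ s, M.sect (bl s) (List.replicate 6 true) = 1 := fun s => by
      rw [show M.sect (bl s) (List.replicate 6 true) = _ from block_sect F leaf s _ _ _ _ _ _, h1]
      rfl
    rintro (_ | ⟨s, _ | _⟩)
    · exact M.sect_one _
    · rw [obl, inv1]
      have heq := M.out_out_inv (bl s) (List.replicate 6 true)
      have hlen := M.length_out (bl s)⁻¹ (List.replicate 6 true)
      generalize M.out (bl s)⁻¹ (List.replicate 6 true) = v at heq hlen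
      obtain ⟨a, b, c, d, e', f, rfl⟩ : ∃ a b c d e f, v = [a, b, c, d, e, f] := by
        rcases v with _ | ⟨a, _ | ⟨b, _ | ⟨c, _ | ⟨d, _ | ⟨e, _ | ⟨f, _ | ⟨g, v⟩⟩⟩⟩⟩⟩⟩ <;>
          simp at hlen
        exact ⟨a, b, c, d, e, f, rfl⟩
      rw [show M.sect (bl s) _ = _ from block_sect F leaf s _ _ _ _ _ _, h2 _ _ _ _ _ _ _ heq]
      rfl
    · exact key s
  -- The remaining bits of a block lead to its last section, which then reads a block `111111`.
  have Tdie : ∀ w, T w → ∃ n, M.sect w (List.replicate n true) = 1 := by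
    have aux : ∀ n, ∀ s : SS B, s.2.1.length + n = 5 →
        M.sect (FreeGroup.of s) (List.replicate (n + 1 + 6) true) = 1 ∧
        M.sect (FreeGroup.of s)⁻¹ (List.replicate (n + 1 + 6) true) = 1 := by
      intro n
      have hinv : ∀ o : Option (B × Bool), M.sect (obl o)⁻¹ (List.replicate 6 true) = 1 := by
        intro o
        have : (obl o)⁻¹ = obl (o.map fun t => (t.1, !t.2)) := by
          rcases o with _ | ⟨s, _ | _⟩ <;> simp [obl]
        rw [this]; exact hobl _
      induction n with
      | zero =>
        intro s hs
        rw [zero_add, add_comm, List.replicate_succ, M.sect_cons, M.sect_cons, M.sec1_inv',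
          M.sec1_of, M.sec1_of]
        rw [show M.secF s _ = _ from blockAut_secF_ge F leaf s _ (by omega),
          show M.secF s _ = _ from blockAut_secF_ge F leaf s _ (by omega)]
        exact ⟨hobl _, hinv _⟩
      | succ n ih =>
        intro s hs
        rw [show n + 1 + 1 + 6 = (n + 1 + 6) + 1 by omega, List.replicate_succ, M.sect_cons,
          M.sect_cons, M.sec1_inv', M.sec1_of, M.sec1_of]
        rw [show M.secF s _ = _ from blockAut_secF_lt F leaf s _ (by omega),
          show M.secF s _ = _ from blockAut_secF_lt F leaf s _ (by omega)]
        exact ⟨(ih _ (by simp; omega)).1, (ih _ (by simp; omega)).2⟩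
    rintro w (rfl | ⟨s, rfl | rfl⟩)
    · exact ⟨0, rfl⟩
    · exact ⟨_, (aux (5 - s.2.1.length) s (by have := s.2.2; omega)).1⟩
    · exact ⟨_, (aux (5 - s.2.1.length) s (by have := s.2.2; omega)).2⟩
  -- Triviality at some power of `1` below every word is a property preserved by products.
  let P : FreeGroup (SS B) → Prop := fun w => ∀ v, ∃ n, M.sect w (v ++ List.replicate n true) = 1
  have TP : ∀ w, T w → P w := fun w hw v => by
    obtain ⟨n, hn⟩ := Tdie _ (Tsect v w hw)
    exact ⟨n, by rw [M.sect_append, hn]⟩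
  have Pw : P w := by
    induction w using FreeGroup.induction_on with
    | C1 => exact TP _ (Or.inl rfl)
    | of s => exact TP _ (Or.inr ⟨s, Or.inl rfl⟩)
    | inv_of s => exact TP _ (Or.inr ⟨s, Or.inr rfl⟩)
    | mul w1 w2 h1 h2 =>
      intro v
      obtain ⟨n, hn⟩ := h2 v
      obtain ⟨m, hm⟩ := h1 (M.out w2 (v ++ List.replicate n true))
      refine ⟨n + m, ?_⟩
      have e1 : M.sect w2 (v ++ List.replicate n true ++ List.replicate m true) = 1 := by
        rw [M.sect_append w2 (v ++ List.replicate n true), hn, M.sect_one]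
      have e2 : M.out w2 (v ++ List.replicate n true ++ List.replicate m true) =
          M.out w2 (v ++ List.replicate n true) ++ List.replicate m true := by
        rw [M.out_append w2 (v ++ List.replicate n true), hn, M.out_one]
      rw [M.sect_mul, List.replicate_add, ← List.append_assoc, e1, e2, hm, one_mul]
  exact Pw []

end Block
end TP

namespace TP

/-! ### Orders of label germs -/

section Orders

variable {S : Type} (M : Automaton S)

/-- A label germ is trivial if and only if the label acts trivially and has trivial sections on all
long words. -/
lemma gL_eq_one {w : FreeGroup S} : gL M 0 w = 1 ↔
    ∃ N, ∀ v : List Bool, N ≤ v.length → M.out w v = v ∧ M.sect w v = 1 := by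
  rw [gL, MonoidHom.comp_apply, MonoidHom.comp_apply, U_zero, ← map_one germ, germ_eq]
  constructor
  · rintro ⟨N, hN⟩
    refine ⟨N, fun v hv => ?_⟩
    have := hN (false :: v) 1 (by simp; omega)
    rw [lB_false] at this
    simpa using this
  · rintro ⟨N, hN⟩
    refine ⟨N + 1, fun v h hv => ?_⟩
    rcases v with _ | ⟨_ | _, v⟩
    · rw [lB_nil]; rfl
    · rw [lB_false, (hN v (by simpa using hv)).1, (hN v (by simpa using hv)).2, one_mul]; rfl
    · rw [lB_true]; rfl

/-- The germ of a word fixing a level is trivial if and only if the germs of its sections are. -/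
lemma gL_eq_one_of_fix {w : FreeGroup S} (m : ℕ) (hw : ∀ v : List Bool, v.length = m → M.out w v = v) :
    gL M 0 w = 1 ↔ ∀ v : List Bool, v.length = m → gL M 0 (M.sect w v) = 1 := by
  constructor
  · intro h v hv
    obtain ⟨N, hN⟩ := (gL_eq_one M).1 h
    refine (gL_eq_one M).2 ⟨N, fun u hu => ?_⟩
    have := hN (v ++ u) (by simp; omega)
    rw [M.out_append, hw v hv, M.sect_append] at this
    simpa using this
  · intro h
    have key : ∃ N, ∀ v : List Bool, v.length = m → ∀ u : List Bool, N ≤ u.length →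
        M.out (M.sect w v) u = u ∧ M.sect (M.sect w v) u = 1 := by
      have h2 : ∀ v : {v : List Bool // v.length = m}, ∃ N, ∀ u : List Bool, N ≤ u.length →
          M.out (M.sect w v) u = u ∧ M.sect (M.sect w v) u = 1 :=
        fun v => (gL_eq_one M).1 (h v v.2)
      choose N hN using h2
      have : Finite {v : List Bool // v.length = m} := List.finite_length_eq Bool m
      obtain ⟨K, hK⟩ := (Set.finite_range N).bddAbove
      exact ⟨K, fun v hv u hu => hN ⟨v, hv⟩ u ((hK ⟨⟨v, hv⟩, rfl⟩).trans hu)⟩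
    obtain ⟨N, hN⟩ := key
    refine (gL_eq_one M).2 ⟨m + N, fun v hv => ?_⟩
    have h1 : (v.take m).length = m := by simp; omega
    have h2 := hN (v.take m) h1 (v.drop m) (by simp; omega)
    have h3 := M.out_append w (v.take m) (v.drop m)
    have h4 := M.sect_append w (v.take m) (v.drop m)
    rw [List.take_append_drop] at h3 h4
    rw [h3, h4, hw _ h1, h2.1, h2.2, List.take_append_drop]
    exact ⟨rfl, rfl⟩

lemma out_pow_of_fix {w : FreeGroup S} {v : List Bool} (h : M.out w v = v) (k : ℕ) :
    M.out (w ^ k) v = v := by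
  induction k with
  | zero => simp
  | succ k ih => rw [pow_succ, M.out_mul, h, ih]

lemma sect_pow_of_fix {w : FreeGroup S} {v : List Bool} (h : M.out w v = v) (k : ℕ) :
    M.sect (w ^ k) v = M.sect w v ^ k := by
  induction k with
  | zero => simp
  | succ k ih => rw [pow_succ, M.sect_mul, h, ih, pow_succ]

/-- The section at a point of an orbit of a commuting element is determined up to conjugation. -/
lemma out_of_conj {w u : FreeGroup S} (hc : Commute w u) {v : List Bool}
    (h : M.out w (M.out u v) = M.out u v) :
    M.out w v = v ∧ M.sect w v = (M.sect u v)⁻¹ * M.sect w (M.out u v) * M.sect u v := by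
  have e : w = u⁻¹ * (w * u) := by rw [hc.eq, inv_mul_cancel_left]
  constructor
  · conv_lhs => rw [e, M.out_mul, M.out_mul, h, M.out_inv_out]
  · conv_lhs => rw [e, M.sect_mul, M.sect_mul, M.out_mul, h, M.sect_inv, ← mul_assoc]

end Orders
end TP

namespace TP

/-! ### The automaton of a two-register machine -/

section Machine

variable {Q : Type}

/-- Instructions of a machine with two numerical registers. A state with instruction
`some (μ, a)` removes the lowest bit `i` from the right register (`μ = false`) or from the left
register (`μ = true`), appends the bit `(a i).1` to the other register, and passes to the state
`(a i).2`. A state without instruction halts. -/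
abbrev Instr (Q : Type) := Q → Option (Bool × (Bool → Bool × Q))

variable (I : Instr Q)

/-- One step of the machine. -/
def mstep : Q × ℕ × ℕ → Option (Q × ℕ × ℕ) := fun c =>
  (I c.1).map fun t => if t.1 then
      ((t.2 (Nat.bodd c.2.1)).2, c.2.1.div2, Nat.bit (t.2 (Nat.bodd c.2.1)).1 c.2.2)
    else ((t.2 (Nat.bodd c.2.2)).2, Nat.bit (t.2 (Nat.bodd c.2.2)).1 c.2.1, c.2.2.div2)

/-- The flips of the machine automaton. In a block `p₀p₁p₂erd`, the first three bits form a counter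
modulo eight, increased by every machine state; the letters for the registers act on the
bit `r`; the bit `d` is flipped by a machine state at the counter values three and
seven unless `(e, r)` consists of the mode of the state and `false`. -/
def mF : Bool ⊕ Q → List Bool → Bool
  | .inr _, [] => true
  | .inr _, [p0] => p0
  | .inr _, [p0, p1] => p0 && p1
  | .inr q, [p0, p1, _, e, r] => p0 && p1 && (match I q with
      | none => true
      | some t => (e != t.1) || r)
  | .inl z, [p0, p1, _, e] => (p0 == p1) && (e == !z)
  | _, _ => false

/-- The optional letter of a register. -/
def oreg (z : Bool) (b : Bool) : Option (Bool ⊕ Q) := if b then some (.inl z) else none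

/-- The letter inserted at counter value zero. -/
def mα (t : Bool × (Bool → Bool × Q)) (r : Bool) : Option (Bool ⊕ Q) :=
  if t.1 then some (.inr (t.2 r).2) else oreg false (t.2 r).1

/-- The letter inserted at counter value two. -/
def mβ (t : Bool × (Bool → Bool × Q)) (r : Bool) : Option (Bool ⊕ Q) :=
  if t.1 then oreg true (t.2 r).1 else some (.inr (t.2 r).2)

/-- The sections of the machine automaton at complete blocks. -/
def mleaf : Bool ⊕ Q → List Bool → Option ((Bool ⊕ Q) × Bool)
  | .inl z, [p0, p1, p2, e, r, d] =>
    if e == !z then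
      if !p0 && !p1 && !p2 && d && r then some (.inl z, true)
      else if p0 && p1 && p2 && !d && !r then some (.inl z, false) else none
    else
      if (p0 != p1) && !p2 && d then some (.inl z, true)
      else if (p0 != p1) && p2 && !d then some (.inl z, false) else none
  | .inr q, [p0, p1, p2, e, r, d] => (I q).bind fun t =>
    if e == t.1 then
      if !p0 && !p1 && !p2 && d then (mα t r).map (·, true)
      else if !p0 && p1 && !p2 && d then (mβ t r).map (·, true)
      else if !p0 && !p1 && p2 && !d then (mβ t r).map (·, false)
      else if !p0 && p1 && p2 && !d then (mα t r).map (·, false) else none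
    else none
  | _, _ => none

/-- The automaton of a machine. -/
def mAut : Automaton (SS (Bool ⊕ Q)) := blockAut (mF I) (mleaf I)

/-- The nontrivial sections of each letter at the various blocks cancel in pairs. -/
lemma mAut_sumZero : SumZero (mAut I) := by
  intro G _ L hL
  refine block_sum (mF I) (mleaf I) L hL ?_
  rintro (z | q)
  · cases z <;> simp [mleaf, obl, ← mul_assoc]
  · rcases hq : I q with _ | t
    · simp [mleaf, obl, hq]
    · have h1 : ∀ o : Option (Bool ⊕ Q), L (obl (o.map (·, false))) = (L (obl (o.map (·, true))))⁻¹ := by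
        rintro (_ | s) <;> simp [obl]
      have h0 : L (obl (none : Option ((Bool ⊕ Q) × Bool))) = 1 := by simp [obl]
      rcases t with ⟨_ | _, a⟩ <;>
      · simp [mleaf, h0, hq, h1]
        generalize L (obl (Option.map (·, true) (mα _ false))) = A
        generalize L (obl (Option.map (·, true) (mα _ true))) = B
        generalize L (obl (Option.map (·, true) (mβ _ false))) = C
        generalize L (obl (Option.map (·, true) (mβ _ true))) = D
        rw [← mul_inv, ← mul_inv, mul_assoc, mul_inv_cancel_left, inv_mul_cancel]

/-- The block `111111` is not the source or target of a nontrivial section. -/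
lemma mAut_die (w : FreeGroup (SS (Bool ⊕ Q))) :
    ∃ n, (mAut I).sect w (List.replicate n true) = 1 := by
  refine block_die _ _ ?_ ?_ w
  · rintro (z | q)
    · cases z <;> simp [mleaf]
    · simp [mleaf]
  · rintro (z | q) a b c d e f h
    · rw [block_out] at h
      cases z <;> simp [mF] at h <;> obtain ⟨rfl, rfl, rfl, rfl, -, rfl⟩ := h <;> simp [mleaf]
    · rw [block_out] at h
      rcases a with _ | _ <;> simp [mF] at h
      obtain ⟨rfl, rfl, rfl, rfl, h⟩ := h
      subst h
      simp [mleaf]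

end Machine
end TP

namespace TP

/-! ### The sections of a configuration at the blocks -/

section Machine

variable {Q : Type} (I : Instr Q)

/-- The exponent of the section of a power of a register letter. -/
def regExp (z : Bool) (N : ℕ) (p0 p1 p2 e r d : Bool) : ℤ :=
  if e == !z then
    if !p0 && !p1 && !p2 && d then (((N + r.toNat) / 2 : ℕ) : ℤ)
    else if p0 && p1 && p2 && !d then -(((N + (!r).toNat) / 2 : ℕ) : ℤ) else 0
  else
    if (p0 != p1) && !p2 && d then N
    else if (p0 != p1) && p2 && !d then -N else 0

/-- The word of a register letter. -/
abbrev rg (Q : Type) (z : Bool) : FreeGroup (SS (Bool ⊕ Q)) := bl (.inl z)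

lemma out_rg (z : Bool) (N : ℕ) (p0 p1 p2 e r d : Bool) :
    (mAut I).out (rg Q z ^ N) [p0, p1, p2, e, r, d] =
      [p0, p1, p2, e, r ^^ ((p0 == p1) && (e == !z) && N.bodd), d] := by
  induction N with
  | zero => simp
  | succ N ih =>
    rw [pow_succ', Automaton.out_mul, ih, mAut, rg, block_out]
    simp only [mF, Bool.xor_false, List.cons.injEq, and_true, true_and, Nat.bodd_succ]
    cases (p0 == p1) <;> cases (e == !z) <;> cases N.bodd <;> simp

lemma obl_rg (z p0 p1 p2 e r d : Bool) : obl (mleaf I (.inl z) [p0, p1, p2, e, r, d]) =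
    rg Q z ^ (if e == !z then
      if !p0 && !p1 && !p2 && d && r then 1 else if p0 && p1 && p2 && !d && !r then -1 else 0
    else
      if (p0 != p1) && !p2 && d then 1
      else if (p0 != p1) && p2 && !d then -1 else 0 : ℤ) := by
  simp only [mleaf]
  split_ifs <;> simp [obl]

lemma sect_rg (z : Bool) (N : ℕ) (p0 p1 p2 e r d : Bool) :
    (mAut I).sect (rg Q z ^ N) [p0, p1, p2, e, r, d] = rg Q z ^ regExp z N p0 p1 p2 e r d := by
  induction N with
  | zero => cases z <;> cases r <;> simp [regExp]
  | succ N ih =>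
    rw [pow_succ', Automaton.sect_mul, ih, out_rg, mAut, rg, block_sect, obl_rg, ← zpow_add]
    congr 1
    have hN := N.bodd_add_div2
    rw [Nat.div2_val] at hN
    simp only [regExp]
    generalize (e == !z) = c
    cases c
    · simp only [Bool.false_eq_true, if_false]
      split_ifs <;> push_cast <;> ring
    · cases d <;> cases p0 <;> cases p1 <;> cases p2 <;> simp <;>
        cases hb : N.bodd <;> cases r <;> simp [hb] at hN ⊢ <;> omega

end Machine
end TP

namespace TP

/-! ### The section along the first half of a cycle of the counter -/

section Machine

variable {Q : Type} (I : Instr Q)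

/-- The word of a configuration. -/
def cw (c : Q × ℕ × ℕ) : FreeGroup (SS (Bool ⊕ Q)) :=
  bl (.inr c.1) * (rg Q false ^ c.2.1 * rg Q true ^ c.2.2)

/-- The section of a machine state at counter value zero. -/
def aα (q : Q) (e r : Bool) : FreeGroup (SS (Bool ⊕ Q)) :=
  match I q with
  | none => 1
  | some t => if e == t.1 then obl ((mα t r).map (·, true)) else 1

/-- The section of a machine state at counter value two. -/
def aβ (q : Q) (e r : Bool) : FreeGroup (SS (Bool ⊕ Q)) :=
  match I q with
  | none => 1
  | some t => if e == t.1 then obl ((mβ t r).map (·, true)) else 1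

/-- The criterion for a machine state to flip the last bit of a block at the counter values three
and seven. -/
def hf (q : Q) (e r : Bool) : Bool :=
  match I q with
  | none => true
  | some t => (e != t.1) || r

lemma obl_false (o : Option (Bool ⊕ Q)) : obl (o.map (·, false)) = (obl (o.map (·, true)))⁻¹ := by
  rcases o with _ | s <;> simp [obl]

lemma obl_state (q : Q) (p0 p1 p2 e r d : Bool) : obl (mleaf I (.inr q) [p0, p1, p2, e, r, d]) =
    if !p0 && !p1 && !p2 && d then aα I q e r
    else if !p0 && p1 && !p2 && d then aβ I q e r
    else if !p0 && !p1 && p2 && !d then (aβ I q e r)⁻¹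
    else if !p0 && p1 && p2 && !d then (aα I q e r)⁻¹ else 1 := by
  simp only [mleaf, aα, aβ]
  rcases I q with _ | t
  · simp [obl]
  · simp only [Option.bind_some]
    split_ifs <;> first | rfl | simp [obl_false]

lemma out_cw (c : Q × ℕ × ℕ) (p0 p1 p2 e r d : Bool) :
    (mAut I).out (cw c) [p0, p1, p2, e, r, d] =
      [!p0, p1 ^^ p0, p2 ^^ (p0 && p1), e,
        r ^^ ((p0 == p1) && (bif e then c.2.1 else c.2.2).bodd),
        d ^^ (p0 && p1 && hf I c.1 e (r ^^ ((p0 == p1) && (bif e then c.2.1 else c.2.2).bodd)))] := by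
  rw [cw, Automaton.out_mul, Automaton.out_mul, out_rg, out_rg, mAut, block_out]
  simp only [mF, hf]
  cases e <;> simp

lemma sect_cw (c : Q × ℕ × ℕ) (p0 p1 p2 e r d : Bool) :
    (mAut I).sect (cw c) [p0, p1, p2, e, r, d] =
      obl (mleaf I (.inr c.1) [p0, p1, p2, e,
        r ^^ ((p0 == p1) && (bif e then c.2.1 else c.2.2).bodd), d]) *
      (rg Q (!e) ^ regExp (!e) (bif e then c.2.1 else c.2.2) p0 p1 p2 e r d *
        rg Q e ^ regExp e (bif e then c.2.2 else c.2.1) p0 p1 p2 e r d) := by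
  rw [cw, Automaton.sect_mul, Automaton.sect_mul, Automaton.out_mul, out_rg, out_rg, sect_rg,
    sect_rg, mAut, block_sect]
  cases e
  · simp [regExp]
    cases (p0 != p1) <;> cases p2 <;> cases d <;> cases p0 <;> cases p1 <;> simp
  · simp

/-- The product of the sections along the first half of a cycle of the counter. -/
def hP (c : Q × ℕ × ℕ) (e r : Bool) : FreeGroup (SS (Bool ⊕ Q)) :=
  let N := bif e then c.2.1 else c.2.2
  let K := bif e then c.2.2 else c.2.1
  aβ I c.1 e (r ^^ N.bodd) * (rg Q e ^ K * (rg Q e ^ K * (aα I c.1 e (r ^^ N.bodd) *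
    rg Q (!e) ^ ((N + r.toNat) / 2))))

lemma cw4 (c : Q × ℕ × ℕ) (p2 e r d : Bool) :
    (mAut I).out (cw c ^ 4) [false, false, p2, e, r, d] =
      [false, false, !p2, e, r, d ^^ hf I c.1 e r] ∧
    (mAut I).sect (cw c ^ 4) [false, false, p2, e, r, d] =
      if d == p2 then 1 else if p2 then (hP I c e r)⁻¹ else hP I c e r := by
  have e4 : cw c ^ 4 = cw c * (cw c * (cw c * cw c)) := by simp [pow_succ, mul_assoc]
  generalize hN : (bif e then c.2.1 else c.2.2) = N
  generalize hK : (bif e then c.2.2 else c.2.1) = K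
  constructor
  · simp only [e4, Automaton.out_mul, out_cw, hN]
    simp
  · have hb := N.bodd_add_div2
    rw [Nat.div2_val] at hb
    simp only [e4, Automaton.out_mul, Automaton.sect_mul, out_cw, sect_cw, obl_state, regExp, hN, hK, hP]
    have h2 : (N + (!(r ^^ N.bodd)).toNat) / 2 = (N + r.toNat) / 2 := by
      cases r <;> cases hb' : N.bodd <;> simp [hb'] at hb ⊢ <;> omega
    cases p2 <;> cases d <;> simp [mul_assoc, -Nat.cast_div, -Int.natCast_ediv, h2]

end Machine
end TP

namespace TP

/-! ### The order of a configuration -/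

section Machine

variable {Q : Type} (I : Instr Q)

/-- A configuration advances the counter once around in eight steps; the section along this cycle is
trivial except at the blocks that carry the simulated step. -/
lemma cw8 (c : Q × ℕ × ℕ) (e r d : Bool) :
    (mAut I).out (cw c ^ 8) [false, false, false, e, r, d] = [false, false, false, e, r, d] ∧
    (mAut I).sect (cw c ^ 8) [false, false, false, e, r, d] =
      if hf I c.1 e r then 1 else if d then hP I c e r else (hP I c e r)⁻¹ := by
  have e8 : cw c ^ 8 = cw c ^ 4 * cw c ^ 4 := by rw [← pow_add]
  rw [e8, Automaton.out_mul, Automaton.sect_mul, (cw4 I c false e r d).1, (cw4 I c false e r d).2,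
    Bool.not_false, (cw4 I c true e r _).1, (cw4 I c true e r _).2]
  cases hf I c.1 e r <;> cases d <;> simp

lemma exists_chunk {v : List Bool} (hv : v.length = 6) :
    ∃ a b c d e f, v = [a, b, c, d, e, f] := by
  rcases v with _ | ⟨a, _ | ⟨b, _ | ⟨c, _ | ⟨d, _ | ⟨e, _ | ⟨f, _ | ⟨g, v⟩⟩⟩⟩⟩⟩⟩ <;>
    simp at hv
  exact ⟨a, b, c, d, e, f, rfl⟩

lemma exists_turn (c : Q × ℕ × ℕ) {v : List Bool} (hv : v.length = 6) :
    ∃ j, ∃ e r d : Bool, (mAut I).out (cw c ^ j) v = [false, false, false, e, r, d] := by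
  obtain ⟨p0, p1, p2, e, r, d, rfl⟩ := exists_chunk hv
  let j := (if p0 then 7 else 0) + (if p1 then 6 else 0) + (if p2 then 4 else 0)
  refine ⟨(if p0 then 7 else 0) + (if p1 then 6 else 0) + (if p2 then 4 else 0), e, ?_⟩
  cases p0 <;> cases p1 <;> cases p2 <;>
    simp only [if_true, if_false, Bool.false_eq_true, pow_zero, Automaton.out_one, pow_succ, one_mul,
      Automaton.out_mul, out_cw, Nat.reduceAdd] <;> simp

/-- The residue of the counter in a block. -/
def ph : List Bool → ZMod 8
  | p0 :: p1 :: p2 :: _ => p0.toNat + 2 * p1.toNat + 4 * p2.toNat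
  | _ => 0

lemma ph_cw (c : Q × ℕ × ℕ) {v : List Bool} (hv : v.length = 6) :
    ph ((mAut I).out (cw c) v) = ph v + 1 := by
  obtain ⟨p0, p1, p2, e, r, d, rfl⟩ := exists_chunk hv
  rw [out_cw]
  simp only [ph]
  clear hv
  revert p0 p1 p2
  decide

lemma ph_pow (c : Q × ℕ × ℕ) {v : List Bool} (hv : v.length = 6) (n : ℕ) :
    ph ((mAut I).out (cw c ^ n) v) = ph v + n := by
  induction n with
  | zero => simp
  | succ n ih =>
    rw [pow_succ', Automaton.out_mul, ph_cw I c (by simpa using hv), ih]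
    push_cast; ring

/-- Every configuration increases the counter of the first block by one. -/
lemma eight_dvd {c : Q × ℕ × ℕ} {n : ℕ} (h : gL (mAut I) 0 (cw c) ^ n = 1) : 8 ∣ n := by
  rw [← map_pow, gL_eq_one] at h
  obtain ⟨N, hN⟩ := h
  have h1 := (hN (List.replicate 6 false ++ List.replicate N false)
    (by rw [List.length_append, List.length_replicate, List.length_replicate]; exact Nat.le_add_left _ _)).1
  rw [Automaton.out_append] at h1
  have h2 := (List.append_inj h1 (by simp)).1
  have h3 := ph_pow I c (v := List.replicate 6 false) (by simp) n
  rw [h2, left_eq_add] at h3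
  exact (ZMod.natCast_eq_zero_iff n 8).1 h3

/-- The section at a fixed block is conjugate to the next configuration. -/
lemma hP_next {c c' : Q × ℕ × ℕ} (h : mstep I c = some c') :
    ∃ e, hf I c.1 e false = false ∧ (∀ e' r, hf I c.1 e' r = false → e' = e ∧ r = false) ∧
      ∃ u, hP I c e false = u * cw c' * u⁻¹ := by
  obtain ⟨q, L, R⟩ := c
  rw [mstep, Option.map_eq_some_iff] at h
  obtain ⟨⟨μ, a⟩, ht, rfl⟩ := h
  simp only at ht
  refine ⟨μ, by simp [hf, ht], fun e' r => by simp [hf, ht], ?_⟩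
  have hbl : ∀ z b, obl ((oreg (Q := Q) z b).map (·, true)) = rg Q z ^ b.toNat := by
    intro z b; cases b <;> simp [oreg, obl]
  have hst : ∀ q : Q, obl ((some (Sum.inr q : Bool ⊕ Q)).map (·, true)) = bl (.inr q) := fun _ => rfl
  have hbit : ∀ (b : Bool) (n : ℕ), Nat.bit b n = n + n + b.toNat := by
    intro b n; cases b <;> simp [Nat.bit] <;> omega
  cases μ
  · refine ⟨1, ?_⟩
    simp only [hP, cw, aα, aβ, ht, mα, mβ, hbl, hst, hbit, Nat.div2_val, cond_false, Bool.false_eq_true,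
      if_false, beq_self_eq_true, if_true, Bool.false_xor, Bool.not_false, Bool.toNat_false, add_zero,
      pow_add, one_mul, inv_one, mul_one, mul_assoc]
  · refine ⟨rg Q true ^ ((a L.bodd).1.toNat + R + R), ?_⟩
    simp only [hP, cw, aα, aβ, ht, mα, mβ, hbl, hst, hbit, Nat.div2_val, cond_true, beq_self_eq_true, if_true, Bool.false_xor, Bool.not_true, Bool.toNat_false, add_zero]
    rw [show R + R + (a L.bodd).1.toNat = (a L.bodd).1.toNat + R + R by omega]
    simp only [pow_add, mul_assoc, mul_inv_rev, mul_inv_cancel_left, mul_inv_cancel, mul_one]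

lemma hf_halt {c : Q × ℕ × ℕ} (h : mstep I c = none) (e r : Bool) : hf I c.1 e r = true := by
  rw [mstep, Option.map_eq_none_iff] at h
  simp [hf, h]

lemma cw8_fix (c : Q × ℕ × ℕ) {v : List Bool} (hv : v.length = 6) :
    (mAut I).out (cw c ^ 8) v = v ∧ ∃ u, ∃ e r d : Bool, (mAut I).sect (cw c ^ 8) v =
      u⁻¹ * (if hf I c.1 e r then 1 else if d then hP I c e r else (hP I c e r)⁻¹) * u := by
  obtain ⟨j, e, r, d, hj⟩ := exists_turn I c hv
  have := out_of_conj (mAut I) (w := cw c ^ 8) (u := cw c ^ j) (Commute.pow_pow_self _ _ _) (v := v)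
    (by rw [hj, (cw8 I c e r d).1])
  rw [hj, (cw8 I c e r d).2] at this
  exact ⟨this.1, _, e, r, d, this.2⟩

lemma pow8_eq_one_iff {c : Q × ℕ × ℕ} (k : ℕ) : gL (mAut I) 0 (cw c) ^ (8 * k) = 1 ↔
    ∀ v : List Bool, v.length = 6 → gL (mAut I) 0 ((mAut I).sect (cw c ^ 8) v) ^ k = 1 := by
  rw [← map_pow, pow_mul, gL_eq_one_of_fix (mAut I) (w := (cw c ^ 8) ^ k) 6
    fun v hv => out_pow_of_fix _ (cw8_fix I c hv).1 k]
  refine forall₂_congr fun v hv => ?_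
  rw [sect_pow_of_fix _ (cw8_fix I c hv).1, map_pow]

lemma pow8_halt {c : Q × ℕ × ℕ} (h : mstep I c = none) : gL (mAut I) 0 (cw c) ^ 8 = 1 := by
  rw [show 8 = 8 * 1 from rfl, pow8_eq_one_iff]
  intro v hv
  obtain ⟨-, u, e, r, d, hs⟩ := cw8_fix I c hv
  rw [hs, hf_halt I h]
  simp

/-- The eighth power of a configuration has as its nontrivial sections at blocks the conjugates of
the next configuration and of its inverse. -/
lemma pow8_next {c c' : Q × ℕ × ℕ} (h : mstep I c = some c') (k : ℕ) :
    gL (mAut I) 0 (cw c) ^ (8 * k) = 1 ↔ gL (mAut I) 0 (cw c') ^ k = 1 := by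
  obtain ⟨e, he, huniq, u, hu⟩ := hP_next I h
  have hc : ∀ (x : Germ (SS (Bool ⊕ Q))) y, (x * y * x⁻¹) ^ k = 1 ↔ y ^ k = 1 := by
    intro x y; rw [conj_pow, mul_inv_eq_one, mul_eq_left]
  rw [pow8_eq_one_iff]
  constructor
  · intro H
    have := H [false, false, false, e, false, true] rfl
    rw [(cw8 I c e false true).2, he, if_neg (by simp), if_pos rfl, hu, map_mul, map_mul, map_inv,
      hc] at this
    exact this
  · intro H v hv
    obtain ⟨-, w, e', r, d, hs⟩ := cw8_fix I c hv
    rw [hs]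
    cases hh : hf I c.1 e' r
    · obtain ⟨rfl, rfl⟩ := huniq _ _ hh
      have e1 : ∀ p, gL (mAut I) 0 (w⁻¹ * p * w) =
          (gL (mAut I) 0 w)⁻¹ * gL (mAut I) 0 p * (gL (mAut I) 0 w)⁻¹⁻¹ := by simp
      rw [if_neg (by simp), e1, hc]
      have h3 : gL (mAut I) 0 (hP I c e' false) ^ k = 1 := by
        rw [hu, map_mul, map_mul, map_inv, hc, H]
      cases d
      · simpa using h3
      · simpa using h3
    · simp

/-- A configuration has finite order if and only if the machine halts on it. -/
theorem finOrder_iff (c : Q × ℕ × ℕ) :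
    IsOfFinOrder (gL (mAut I) 0 (cw c)) ↔ (StateTransition.eval (mstep I) c).Dom := by
  have hdom : ∀ c c', mstep I c = some c' →
      ((StateTransition.eval (mstep I) c).Dom ↔ (StateTransition.eval (mstep I) c').Dom) := by
    intro c c' h
    rw [StateTransition.reaches_eval (Relation.ReflTransGen.single h)]
  rw [isOfFinOrder_iff_pow_eq_one]
  constructor
  · rintro ⟨n, hn, h⟩
    induction n using Nat.strong_induction_on generalizing c with
    | _ n ih =>
      rcases hs : mstep I c with _ | c'
      · exact Part.dom_iff_mem.2 ⟨c, StateTransition.mem_eval.2 ⟨Relation.ReflTransGen.refl, hs⟩⟩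
      · obtain ⟨k, rfl⟩ := eight_dvd I h
        rw [hdom c c' hs]
        exact ih k (by omega) c' (by omega) ((pow8_next I hs k).1 h)
  · intro h
    obtain ⟨b, hb⟩ := Part.dom_iff_mem.1 h
    refine StateTransition.evalInduction hb fun a _ IH => ?_
    rcases hs : mstep I a with _ | a'
    · exact ⟨8, by omega, pow8_halt I hs⟩
    · obtain ⟨n, hn, h1⟩ := IH a' hs
      exact ⟨8 * n, by omega, (pow8_next I hs n).2 h1⟩

end Machine
end TP

namespace TP

/-! ### A two-register machine with an undecidable halting problem -/

open Turing in
/-- Halting of a multi-stack machine `TM2` reduces to halting of a Turing machine on the alphabet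
`Bool`. -/
theorem exists_TM0 {K : Type} [DecidableEq K] [Fintype K] {Γ : K → Type} [∀ k, Fintype (Γ k)]
    {Λ σ : Type} [Inhabited Λ] [Inhabited σ] [Fintype σ]
    (M : Λ → TM2.Stmt Γ Λ σ) (S : Finset Λ) (hS : TM2.Supports M S) (k : K) :
    ∃ (Λ' : Type) (_ : Inhabited Λ') (N : TM0.Machine Bool Λ') (S' : Finset Λ')
      (enc : TM2to1.Γ' K Γ → List Bool), TM0.Supports N ↑S' ∧ ∀ L : List (Γ k),
        (StateTransition.eval (TM0.step N) ⟨default, Tape.mk' ∅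
          (ListBlank.mk ((TM2to1.trInit k L).flatMap enc))⟩).Dom ↔
        (StateTransition.eval (TM2.step M) (TM2.init k L)).Dom := by
  obtain ⟨n, enc, dec, henc, hdec⟩ := TM1to1.exists_enc_dec (Γ := TM2to1.Γ' K Γ)
  have s1 := TM2to1.tr_supports M hS
  have s2 := TM1to1.tr_supports enc dec (TM2to1.tr M) s1
  have s3 := TM1to0.tr_supports _ s2
  refine ⟨_, inferInstance, _, _, fun a => (enc a).toList, s3, fun L => ?_⟩
  rw [← StateTransition.tr_eval_dom (TM2to1.tr_respects M) (TM2to1.trCfg_init k L),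
    ← StateTransition.tr_eval_dom (TM1to1.tr_respects dec (TM2to1.tr M) (enc0 := henc) hdec) rfl,
    ← StateTransition.tr_eval_dom (TM1to0.tr_respects (TM1to1.tr enc dec (TM2to1.tr M))) rfl]
  rfl

open Turing PartrecToTM2 in
theorem code_TM2 (c : ToPartrec.Code) (v : List ℕ) :
    (StateTransition.eval (TM2.step tr) (init c v)).Dom ↔ (c.eval v).Dom := by
  rw [tr_eval]; rfl

open Turing PartrecToTM2 in
theorem trNat_two_pow (r : ℕ) : trNat (2 ^ r) = List.replicate r Γ'.bit0 ++ [Γ'.bit1] := by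
  have h : ∀ r : ℕ, ∃ p : PosNum, (p : ℕ) = 2 ^ r ∧
      trPosNum p = List.replicate r Γ'.bit0 ++ [Γ'.bit1] := by
    intro r
    induction r with
    | zero => exact ⟨PosNum.one, by simp, rfl⟩
    | succ r ih =>
      obtain ⟨p, h1, h2⟩ := ih
      refine ⟨PosNum.bit0 p, ?_, ?_⟩
      · rw [PosNum.cast_bit0, h1, pow_succ]; ring
      · simp [trPosNum, h2, List.replicate_succ]
  obtain ⟨p, h1, h2⟩ := h r
  have : ((2 ^ r : ℕ) : Num) = Num.pos p := by
    rw [← h1]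
    exact PosNum.of_to_nat p
  rw [trNat, this, trNum, h2]

open Turing in
/-- A partial recursive code whose halting on powers of two encodes the halting problem. -/
theorem exists_code_undecidable : ∃ c : ToPartrec.Code,
    ¬ ComputablePred fun r : ℕ => (c.eval [2 ^ r]).Dom := by
  have hr : Partrec fun m : ℕ => Nat.rfind fun k => (Part.some (decide (2 ^ k = m)) : Part Bool) := by
    refine Partrec.rfind ?_
    have : Primrec₂ fun m k : ℕ => decide (2 ^ k = m) := by
      have h2 : Primrec fun k : ℕ => 2 ^ k :=
        (Primrec.nat_rec₁ (f := fun _ x => 2 * x) 1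
          (Primrec.nat_mul.comp (Primrec.const 2) Primrec.snd)).of_eq fun n => by
            induction n with
            | zero => rfl
            | succ n ih => simp only [ih]; ring
      exact Primrec.eq.decide.comp (h2.comp Primrec.snd) Primrec.fst
    exact this.to_comp
  -- The input `2^k` is decoded to `k`, which is run as the code of a partial recursive function on
  -- the input zero.
  have hf : Partrec fun m : ℕ => (Nat.rfind fun k =>
      (Part.some (decide (2 ^ k = m)) : Part Bool)).bind
        fun k => Nat.Partrec.Code.eval (Denumerable.ofNat Nat.Partrec.Code k) 0 :=
    hr.bind ((Nat.Partrec.Code.eval_part.comp ((Computable.ofNat _).comp Computable.snd)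
      (Computable.const 0)))
  have hv : ∀ k : ℕ, (Nat.rfind fun j =>
      (Part.some (decide (2 ^ j = 2 ^ k)) : Part Bool)) = Part.some k := by
    intro k
    refine Part.eq_some_iff.2 (Nat.mem_rfind.2 ⟨by simp, fun hm => ?_⟩)
    simp [Nat.ne_of_lt hm]
  obtain ⟨c, hc⟩ := ToPartrec.Code.exists_code (Nat.Partrec'.part_iff₁.2 hf)
  refine ⟨c, fun h => ComputablePred.halting_problem 0 ?_⟩
  have hc' : ∀ k : ℕ, (c.eval [2 ^ k]).Dom ↔
      (Nat.Partrec.Code.eval (Denumerable.ofNat Nat.Partrec.Code k) 0).Dom := by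
    intro k
    have := hc (2 ^ k ::ᵥ List.Vector.nil)
    simp only [List.Vector.head_cons, hv, Part.bind_some] at this
    change c.eval [2 ^ k] = _ at this
    rw [this]
    rfl
  obtain ⟨q, hq, hq'⟩ := ComputablePred.computable_iff.1 h
  refine ComputablePred.computable_iff.2 ⟨fun c => q (Encodable.encode c),
    hq.comp Computable.encode, ?_⟩
  funext c
  have := congrFun hq' (Encodable.encode c)
  rw [← this, eq_iff_iff, hc', Denumerable.ofNat_encode]

open Turing in
/-- A Turing machine whose halting problem is undecidable on the inputs `E₀ E₁ ⋯ E₁`. -/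
theorem exists_TM0_undecidable : ∃ (Λ : Type) (_ : Inhabited Λ) (N : TM0.Machine Bool Λ)
    (S : Finset Λ) (E₀ E₁ : List Bool), TM0.Supports N ↑S ∧
      ¬ ComputablePred fun r : ℕ => (StateTransition.eval (TM0.step N) ⟨default, Tape.mk' ∅
          (ListBlank.mk (E₀ ++ (List.replicate r E₁).flatten))⟩).Dom := by
  obtain ⟨c, hc⟩ := exists_code_undecidable
  let _ : Fintype PartrecToTM2.K' := ⟨{.main, .rev, .aux, .stack}, by intro x; cases x <;> simp⟩
  let _ : Inhabited PartrecToTM2.Λ' := ⟨PartrecToTM2.trNormal c PartrecToTM2.Cont'.halt⟩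
  obtain ⟨Λ, iΛ, N, S, enc, hS, hN⟩ := exists_TM0 PartrecToTM2.tr _
    (PartrecToTM2.tr_supports c PartrecToTM2.Cont'.halt) PartrecToTM2.K'.main
  let g : PartrecToTM2.Γ' → TM2to1.Γ' PartrecToTM2.K' (fun _ => PartrecToTM2.Γ') :=
    fun a => (false, Function.update (fun _ => none) PartrecToTM2.K'.main (some a))
  refine ⟨Λ, iΛ, N, S, enc (true, (g .cons).2) ++ enc (g .bit1), enc (g .bit0), hS, ?_⟩
  convert hc using 3 with r
  rw [← code_TM2, ← eq_iff_iff]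
  have h1 := hN (PartrecToTM2.trList [2 ^ r])
  have h2 : TM2.init PartrecToTM2.K'.main (PartrecToTM2.trList [2 ^ r]) =
      PartrecToTM2.init c [2 ^ r] := by
    unfold TM2.init PartrecToTM2.init
    congr 1
    funext k
    cases k <;> simp [Function.update]
  rw [← h2, ← h1]
  -- The input `2^r` is the binary numeral `1` followed by `r` zeros; only its bottom cell on the
  -- stack carries the mark `true`.
  have h3 : TM2to1.trInit PartrecToTM2.K'.main (PartrecToTM2.trList [2 ^ r]) =
      (true, (g .cons).2) :: g .bit1 :: List.replicate r (g .bit0) := by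
    have h4 : (PartrecToTM2.trList [2 ^ r]).reverse =
        .cons :: .bit1 :: List.replicate r .bit0 := by
      rw [PartrecToTM2.trList, PartrecToTM2.trList, trNat_two_pow]
      simp
    unfold TM2to1.trInit
    rw [h4]
    change (true, (g .cons).2) :: (g .bit1 :: (List.replicate r _).map g) = _
    rw [List.map_replicate]
  have h5 : ∀ a b c : TM2to1.Γ' PartrecToTM2.K' (fun _ => PartrecToTM2.Γ'),
      List.flatMap enc (a :: b :: List.replicate r c) =
        enc a ++ enc b ++ (List.replicate r (enc c)).flatten := by
    intro a b c
    rw [List.flatMap_cons, List.flatMap_cons, List.append_assoc, List.flatMap, List.map_replicate]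
  rw [h3]
  exact (congrArg (fun l => (StateTransition.eval (TM0.step N) ⟨default, Tape.mk' ∅
    (ListBlank.mk l)⟩).Dom) (h5 _ _ _).symm)

end TP

namespace TP

/-! ### Simulation of a Turing machine by a register machine -/

open Turing

/-- The number `n` lists in binary, low bit first, the half-tape `B`. -/
def TapeNum (n : ℕ) (B : ListBlank Bool) : Prop := ∀ i, B.nth i = n.testBit i

theorem TapeNum.head {n : ℕ} {B : ListBlank Bool} (h : TapeNum n B) : n.bodd = B.head := by
  have := h 0
  rw [ListBlank.nth_zero, Nat.testBit_zero] at this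
  rw [this, Nat.mod_two_of_bodd]
  cases n.bodd <;> rfl

theorem TapeNum.tail {n : ℕ} {B : ListBlank Bool} (h : TapeNum n B) : TapeNum n.div2 B.tail := by
  intro i
  rw [← ListBlank.nth_succ, h, Nat.testBit_succ, Nat.div2_val]

theorem TapeNum.cons {n : ℕ} {B : ListBlank Bool} (h : TapeNum n B) (b : Bool) :
    TapeNum (Nat.bit b n) (B.cons b) := by
  intro i
  cases i with
  | zero => simp [ListBlank.nth_zero]
  | succ i => rw [ListBlank.nth_succ, ListBlank.tail_cons, h, Nat.testBit_bit_succ]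

theorem tapeNum_empty : TapeNum 0 ∅ := by
  intro i
  change (ListBlank.mk []).nth i = _
  rw [ListBlank.nth_mk, Nat.zero_testBit]
  simp [List.getI]

theorem tapeNum_mk (l : List Bool) : TapeNum (l.foldr Nat.bit 0) (ListBlank.mk l) := by
  induction l with
  | nil => exact tapeNum_empty
  | cons b l ih => rw [← ListBlank.cons_mk]; exact ih.cons b

section sim
variable {Λ : Type} [Inhabited Λ] (N : TM0.Machine Bool Λ) (S : Finset Λ)
  (hS : TM0.Supports N ↑S)

open Classical in
/-- Retraction of all labels onto the supported ones. -/
noncomputable def rho (q : Λ) : {q // q ∈ S} :=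
  if h : q ∈ S then ⟨q, h⟩ else ⟨default, hS.1⟩

/-- The states of the register machine simulating a Turing machine: the start state, a label
together with the scanned symbol, or the same while a written symbol waits for the return step. -/
abbrev SimQ := Option (({q // q ∈ S} × Bool) ⊕ ({q // q ∈ S} × Bool))

/-- The register machine simulating a Turing machine. The two registers hold the two half-tapes
on the sides of the scanned cell, whose content is part of the state. -/
noncomputable def simI : Instr (SimQ S)
  | none => some (false, fun b => (false, some (.inl (rho N S hS default, b))))
  | some (.inr p) => some (true, fun b => (b, some (.inl p)))
  | some (.inl (q, a)) => (N q a).map fun t => match t.2 with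
    | .write a' => (false, fun b => (b, some (.inr (rho N S hS t.1, a'))))
    | .move .right => (false, fun b => (a, some (.inl (rho N S hS t.1, b))))
    | .move .left => (true, fun b => (a, some (.inl (rho N S hS t.1, b))))

/-- A Turing machine configuration and the register configurations representing it. -/
def SimCfg (c : TM0.Cfg Bool Λ) (d : SimQ S × ℕ × ℕ) : Prop :=
  c.q ∈ S ∧ d.1 = some (.inl (rho N S hS c.q, c.Tape.head)) ∧
    TapeNum d.2.1 c.Tape.left ∧ TapeNum d.2.2 c.Tape.right

/-- The register machine simulates the Turing machine; a step that writes takes it two steps, in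
which a bit leaves the right register and returns to it. -/
theorem sim_respects : StateTransition.Respects (TM0.step N) (mstep (simI N S hS))
    (SimCfg N S hS) := by
  rintro ⟨q, T⟩ ⟨d, L, R⟩ ⟨hq, hd, hL, hR⟩
  dsimp only at hq hd hL hR
  subst hd
  have hrho : (rho N S hS q).1 = q := by simp [rho, hq]
  rcases hN : N q T.head with _ | ⟨q', s⟩
  · have h1 : TM0.step N ⟨q, T⟩ = none := by
      simp only [TM0.step, hN, Option.map_none]
    rw [h1]
    simp [mstep, simI, hrho, hN]
  · have hq' : q' ∈ S := hS.2 (by rw [hN]; rfl) hq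
    have hI : simI N S hS (some (.inl (rho N S hS q, T.head))) = some (match s with
    | .write a' => (false, fun b => (b, some (.inr (rho N S hS q', a'))))
    | .move .right => (false, fun b => (T.head, some (.inl (rho N S hS q', b))))
    | .move .left => (true, fun b => (T.head, some (.inl (rho N S hS q', b))))) := by
      simp only [simI, hrho, hN, Option.map_some]
      rcases s with (_ | _) | a' <;> rfl
    rcases s with (_ | _) | a'
    · have h1 : TM0.step N ⟨q, T⟩ = some ⟨q', T.move .left⟩ := by
        simp only [TM0.step, hN, Option.map_some]
      rw [h1]
      refine ⟨(some (.inl (rho N S hS q', L.bodd)), L.div2, Nat.bit T.head R), ⟨hq', ?_, ?_, ?_⟩,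
        Relation.TransGen.single ?_⟩
      · dsimp only; rw [hL.head]; rfl
      · exact hL.tail
      · exact hR.cons _
      · simp [mstep, hI]
    · have h1 : TM0.step N ⟨q, T⟩ = some ⟨q', T.move .right⟩ := by
        simp only [TM0.step, hN, Option.map_some]
      rw [h1]
      refine ⟨(some (.inl (rho N S hS q', R.bodd)), Nat.bit T.head L, R.div2), ⟨hq', ?_, ?_, ?_⟩,
        Relation.TransGen.single ?_⟩
      · dsimp only; rw [hR.head]; rfl
      · exact hL.cons _
      · exact hR.tail
      · simp [mstep, hI]
    · have h1 : TM0.step N ⟨q, T⟩ = some ⟨q', T.write a'⟩ := by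
        simp only [TM0.step, hN, Option.map_some]
      rw [h1]
      refine ⟨(some (.inl (rho N S hS q', a')), L, R), ⟨hq', rfl, hL, hR⟩,
        Relation.TransGen.tail (Relation.TransGen.single
          (b := (some (.inr (rho N S hS q', a')), Nat.bit R.bodd L, R.div2)) ?_) ?_⟩
      · simp [mstep, hI]
      · simp [mstep, simI, Nat.bit_bodd_div2]

theorem sim_start (R : ℕ) : (StateTransition.eval (mstep (simI N S hS)) (none, 0, R)).Dom ↔
    (StateTransition.eval (mstep (simI N S hS))
      (some (.inl (rho N S hS default, R.bodd)), 0, R.div2)).Dom := by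
  rw [StateTransition.reaches_eval (Relation.ReflTransGen.single _)]
  simp [mstep, simI]

end sim

theorem primrec_foldr_bit (l : List Bool) : Primrec fun x : ℕ => l.foldr Nat.bit x := by
  induction l with
  | nil => exact Primrec.id
  | cons b l ih =>
    have : Primrec fun x : ℕ => 2 * x + b.toNat :=
      Primrec.nat_add.comp (Primrec.nat_mul.comp (Primrec.const 2) Primrec.id) (Primrec.const _)
    refine (this.comp ih).of_eq fun x => ?_
    rw [List.foldr_cons, Nat.bit_val]

/-- A register machine with finitely many states, and a computable sequence of contents of the
second register, for which halting is undecidable. -/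
theorem exists_undecidable_machine : ∃ (Q : Type) (_ : Finite Q) (I : Instr Q) (q₀ : Q)
    (R : ℕ → ℕ), Computable R ∧
      ¬ ComputablePred fun r => (StateTransition.eval (mstep I) (q₀, 0, R r)).Dom := by
  obtain ⟨Λ, _, N, S, E₀, E₁, hS, hN⟩ := exists_TM0_undecidable
  refine ⟨SimQ S, inferInstance, simI N S hS, none,
    fun r => (E₀ ++ (List.replicate r E₁).flatten).foldr Nat.bit 0, ?_, ?_⟩
  · have h1 : Primrec fun r : ℕ => ((List.replicate r E₁).flatten).foldr Nat.bit 0 :=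
      (Primrec.nat_rec₁ (f := fun _ x => E₁.foldr Nat.bit x) 0 ((primrec_foldr_bit E₁).comp Primrec.snd)).of_eq fun r => by
        induction r with
        | zero => rfl
        | succ r ih => simp only [ih, List.replicate_succ, List.flatten_cons, List.foldr_append]
    exact (((primrec_foldr_bit E₀).comp h1).of_eq fun r => by rw [List.foldr_append]).to_comp
  · convert hN using 3 with r
    rw [sim_start]
    refine StateTransition.tr_eval_dom (sim_respects N S hS)
      (a₁ := ⟨default, Tape.mk' ∅ (ListBlank.mk (E₀ ++ (List.replicate r E₁).flatten))⟩)
      ⟨hS.1, ?_, ?_, ?_⟩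
    · rw [(tapeNum_mk _).head]; rfl
    · exact tapeNum_empty
    · exact (tapeNum_mk _).tail

end TP

namespace TP

/-! ### Deciding triviality of germs -/

section
variable {S : Type} (M : Automaton S)

/-- The permutations of labelled words representing the germs `psi M w`. -/
def psiB : FreeGroup (Gen S) →* BD S :=
  FreeGroup.lift (Sum.elim ![U 0 x0B, U 1 x0B, U 0 s0B, U 1 s0B, cB]
    fun p => U (if p.2 then 1 else 0) (lB M (FreeGroup.of p.1)))

lemma germ_psiB (w : FreeGroup (Gen S)) : germ (psiB M w) = psi M w := by
  have : (germ.comp (psiB M) : FreeGroup (Gen S) →* Germ S) = psi M := by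
    ext x
    rcases x with i | p
    · fin_cases i <;> simp [psiB, psi, gX, gS, gC]
    · simp [psiB, psi, gL]
  exact DFunLike.congr_fun this w

lemma exists_sec1 (o : Option (S × Bool)) (b : Bool) :
    ∃ o', M.sec1 (optWord o) b = optWord o' := by
  rcases o with _ | ⟨s, _ | _⟩
  · exact ⟨none, by simp [optWord]⟩
  · have h1 : optWord (some (s, false)) = (FreeGroup.of s)⁻¹ := by
      simp [optWord, FreeGroup.of, FreeGroup.inv_mk, FreeGroup.invRev]
    have h2 : ∀ c, (optWord (M.sec s c))⁻¹ = optWord ((M.sec s c).map fun p => (p.1, !p.2)) := by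
      intro c
      rcases M.sec s c with _ | p
      · simp [optWord]
      · simp [optWord, FreeGroup.inv_mk, FreeGroup.invRev]
    rw [h1]
    refine ⟨(M.sec s (M.bit (FreeGroup.of s)⁻¹ b)).map fun p => (p.1, !p.2), ?_⟩
    rw [← h2, M.sec1_inv', M.sec1_of]; rfl
  · exact ⟨M.sec s b, M.sec1_of s b⟩

lemma exists_sect (v : List Bool) (o : Option (S × Bool)) :
    ∃ p, M.sect (optWord o) v = optWord p := by
  induction v generalizing o with
  | nil => exact ⟨o, rfl⟩
  | cons b v ih =>
    obtain ⟨p, h⟩ := exists_sec1 M o b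
    rw [M.sect_cons, h]
    exact ih p

/-- A permutation acting on words with a prefix of length three by rewriting that prefix and
applying a label letter to the rest. -/
def Shallow (p : BD S) : Prop := ∀ a b c : Bool, ∃ (v' : List Bool) (o : Option (S × Bool)),
  2 ≤ v'.length ∧ ∀ (u : List Bool) (h : FreeGroup S), (p : Equiv.Perm (Pt S)) (a :: b :: c :: u, h) =
    (v' ++ M.out (optWord o) u, M.sect (optWord o) u * h)

lemma shallow_of {p : BD S} (h : ∀ a b c : Bool, 2 ≤ (p.1 ([a, b, c], 1)).1.length ∧
    ∀ (u : List Bool) (h : FreeGroup S), (p : Equiv.Perm (Pt S)) (a :: b :: c :: u, h) =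
      ((p.1 ([a, b, c], 1)).1 ++ u, h)) : Shallow M p := by
  intro a b c
  refine ⟨(p.1 ([a, b, c], 1)).1, none, (h a b c).1, fun u k => ?_⟩
  rw [(h a b c).2]
  simp [optWord]

lemma shallow_label (s : S × Bool) (i : Bool) :
    Shallow M (U (if i then 1 else 0) (lB M (optWord (some s)))) := by
  intro a b c
  cases i
  · simp only [Bool.false_eq_true, if_false, U_zero]
    cases a
    · obtain ⟨o, ho⟩ := exists_sect M [b, c] (some s)
      refine ⟨false :: M.out (optWord (some s)) [b, c], o, by simp, fun u h => ?_⟩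
      rw [lB_false, show b :: c :: u = [b, c] ++ u from rfl, M.out_append, M.sect_append, ho]
      rfl
    · refine ⟨[true, b, c], none, by simp, fun u h => ?_⟩
      rw [lB_true]; simp [optWord]
  · simp only [if_true]
    rcases a with _ | _
    · exact ⟨[false, b, c], none, by simp, fun u h => by simp [U_succ, optWord]⟩
    rcases b with _ | _
    · obtain ⟨o, ho⟩ := exists_sect M [c] (some s)
      refine ⟨true :: false :: M.out (optWord (some s)) [c], o, by simp, fun u h => ?_⟩
      rw [U_succ, coe_under, underP_same, U_zero, lB_false, show c :: u = [c] ++ u from rfl,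
        M.out_append, M.sect_append, ho]
      rfl
    · refine ⟨[true, true, c], none, by simp, fun u h => ?_⟩
      rw [U_succ, coe_under, underP_same, U_zero, lB_true]; simp [optWord]

/-- Each generator and its inverse acts by rewriting a prefix of length three and applying a label
letter. -/
lemma shallow_letter (y : Gen S × Bool) : Shallow M (psiB M (FreeGroup.mk [y])) := by
  obtain ⟨i | ⟨s, i⟩, e⟩ := y
  · have h : psiB M (FreeGroup.mk [(Sum.inl i, e)]) =
        cond e (![U 0 x0B, U 1 x0B, U 0 s0B, U 1 s0B, cB] i)
          (![U 0 x0B, U 1 x0B, U 0 s0B, U 1 s0B, cB] i)⁻¹ := by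
      simp [psiB]
    rw [h]
    apply shallow_of
    intro a b c
    fin_cases i <;> cases e <;> cases a <;> cases b <;> cases c <;>
      exact ⟨Nat.le_of_ble_eq_true rfl, fun u h => rfl⟩
  · have h : psiB M (FreeGroup.mk [(Sum.inr (s, i), e)]) =
        U (if i then 1 else 0) (lB M (optWord (some (s, e)))) := by
      have : optWord (some (s, e)) = cond e (FreeGroup.of s) (FreeGroup.of s)⁻¹ := by
        cases e <;> simp [optWord, FreeGroup.of, FreeGroup.inv_mk, FreeGroup.invRev]
      rw [this]
      cases e <;> simp [psiB]
    rw [h]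
    exact shallow_label M (s, e) i

end
end TP

namespace TP

/-! ### A computable bound for the level to be checked -/

section
variable {S : Type} (M : Automaton S)

/-- One letter of input processed by an optional label letter. -/
noncomputable def nxt (p : Option (S × Bool) × Bool) : Bool × Option (S × Bool) :=
  (M.bit (optWord p.1) p.2, (exists_sec1 M p.1 p.2).choose)

lemma nxt_spec (o : Option (S × Bool)) (b : Bool) :
    optWord (nxt M (o, b)).2 = M.sec1 (optWord o) b := (exists_sec1 M o b).choose_spec.symm

/-- The label letter `p.2` processing the word `u`, the output being appended to `p.1`. -/
noncomputable def rawRun (p : List Bool × Option (S × Bool)) (u : List Bool) :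
    List Bool × Option (S × Bool) :=
  u.foldl (fun p b => (p.1 ++ [(nxt M (p.2, b)).1], (nxt M (p.2, b)).2)) p

lemma rawRun_spec (p : List Bool × Option (S × Bool)) (u : List Bool) :
    (rawRun M p u).1 = p.1 ++ M.out (optWord p.2) u ∧
      optWord (rawRun M p u).2 = M.sect (optWord p.2) u := by
  induction u generalizing p with
  | nil => simp [rawRun]
  | cons b u ih =>
    have := ih (p.1 ++ [(nxt M (p.2, b)).1], (nxt M (p.2, b)).2)
    rw [nxt_spec] at this
    refine ⟨this.1.trans ?_, this.2⟩
    simp [nxt]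

/-- The rewriting of a prefix of length three by a letter, with the resulting label. -/
noncomputable def headAct (q : (Gen S × Bool) × Bool × Bool × Bool) :
    List Bool × Option (S × Bool) :=
  ((shallow_letter M q.1 q.2.1 q.2.2.1 q.2.2.2).choose,
    (shallow_letter M q.1 q.2.1 q.2.2.1 q.2.2.2).choose_spec.choose)

lemma headAct_spec (y : Gen S × Bool) (a b c : Bool) : 2 ≤ (headAct M (y, a, b, c)).1.length ∧
    ∀ (u : List Bool) (h : FreeGroup S),
      (psiB M (FreeGroup.mk [y]) : Equiv.Perm (Pt S)) (a :: b :: c :: u, h) =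
        ((headAct M (y, a, b, c)).1 ++ M.out (optWord (headAct M (y, a, b, c)).2) u,
          M.sect (optWord (headAct M (y, a, b, c)).2) u * h) :=
  (shallow_letter M y a b c).choose_spec.choose_spec

/-- The action of a letter on pairs consisting of a binary word and an unreduced word of labels. -/
noncomputable def act (y : Gen S × Bool) (p : List Bool × List (S × Bool)) :
    List Bool × List (S × Bool) :=
  ((rawRun M (headAct M (y, p.1.getD 0 false, p.1.getD 1 false, p.1.getD 2 false))
      (p.1.drop 3)).1,
    (rawRun M (headAct M (y, p.1.getD 0 false, p.1.getD 1 false, p.1.getD 2 false))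
      (p.1.drop 3)).2.toList ++ p.2)

lemma act_spec (y : Gen S × Bool) (v : List Bool) (l : List (S × Bool)) (hv : 3 ≤ v.length) :
    v.length ≤ (act M y (v, l)).1.length + 1 ∧ (act M y (v, l)).2.length ≤ l.length + 1 ∧
    ∀ (u : List Bool) (h : FreeGroup S), (psiB M (FreeGroup.mk [y]) : Equiv.Perm (Pt S))
      (v ++ M.out (FreeGroup.mk l) u, M.sect (FreeGroup.mk l) u * h) =
        ((act M y (v, l)).1 ++ M.out (FreeGroup.mk (act M y (v, l)).2) u,
          M.sect (FreeGroup.mk (act M y (v, l)).2) u * h) := by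
  obtain _ | ⟨a, _ | ⟨b, _ | ⟨c, t⟩⟩⟩ := v
  iterate 3 · simp at hv
  obtain ⟨h1, h2⟩ := headAct_spec M y a b c
  obtain ⟨h3, h4⟩ := rawRun_spec M (headAct M (y, a, b, c)) t
  have hact : act M y (a :: b :: c :: t, l) = ((rawRun M (headAct M (y, a, b, c)) t).1,
    (rawRun M (headAct M (y, a, b, c)) t).2.toList ++ l) := rfl
  rw [hact]
  generalize rawRun M (headAct M (y, a, b, c)) t = r at *
  have hr : FreeGroup.mk (r.2.toList ++ l) = optWord r.2 * FreeGroup.mk l := by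
    rcases r.2 with _ | p
    · simp [optWord]
    · simp [optWord, FreeGroup.mul_mk]
  refine ⟨?_, ?_, fun u h => ?_⟩
  · simp only [h3, List.length_cons, List.length_append, M.length_out]; omega
  · rcases r.2 with _ | p <;> simp
  · rw [List.cons_append, List.cons_append, List.cons_append, h2]
    dsimp only
    rw [hr, M.out_append, M.sect_append, ← h4, h3, M.out_mul, M.sect_mul, List.append_assoc,
      mul_assoc]

/-- The action of a word in the generators, its last letter acting first. -/
noncomputable def actW (w : List (Gen S × Bool)) (p : List Bool × List (S × Bool)) :
    List Bool × List (S × Bool) := w.foldr (act M) p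

/-- A word in the generators rewrites long prefixes and applies a label, of at most the same
length, to the rest. -/
lemma actW_spec (w : List (Gen S × Bool)) (v : List Bool) (hv : w.length + 3 ≤ v.length) :
    v.length ≤ (actW M w (v, [])).1.length + w.length ∧
    (actW M w (v, [])).2.length ≤ w.length ∧
    ∀ (u : List Bool) (h : FreeGroup S), (psiB M (FreeGroup.mk w) : Equiv.Perm (Pt S))
      (v ++ u, h) = ((actW M w (v, [])).1 ++ M.out (FreeGroup.mk (actW M w (v, [])).2) u,
          M.sect (FreeGroup.mk (actW M w (v, [])).2) u * h) := by
  induction w with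
  | nil =>
    refine ⟨le_rfl, le_rfl, fun u h => ?_⟩
    change (psiB M 1 : Equiv.Perm (Pt S)) (v ++ u, h) = (v ++ M.out 1 u, M.sect 1 u * h)
    simp
  | cons y w ih =>
    rw [List.length_cons] at hv
    obtain ⟨h1, h2, h3⟩ := ih (by omega)
    change _ ≤ (act M y (actW M w (v, []))).1.length + _ ∧
      (act M y (actW M w (v, []))).2.length ≤ _ ∧ ∀ u h, _ =
        ((act M y (actW M w (v, []))).1 ++ M.out (FreeGroup.mk (act M y (actW M w (v, []))).2) u,
          M.sect (FreeGroup.mk (act M y (actW M w (v, []))).2) u * h)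
    generalize actW M w (v, []) = p at h1 h2 h3 ⊢
    obtain ⟨v', l⟩ := p
    dsimp only at h1 h2 h3
    obtain ⟨k1, k2, k3⟩ := act_spec M y v' l (by omega)
    refine ⟨by rw [List.length_cons]; omega, by rw [List.length_cons]; omega, fun u h => ?_⟩
    rw [← k3, ← h3]
    have : (FreeGroup.mk (y :: w) : FreeGroup (Gen S)) = FreeGroup.mk [y] * FreeGroup.mk w := by
      rw [FreeGroup.mul_mk]; rfl
    rw [this, map_mul]
    rfl

/-- The sections of a product of labels are products of at most as many labels. -/
lemma exists_mk_sect (l : List (S × Bool)) (v : List Bool) :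
    ∃ l' : List (S × Bool), l'.length ≤ l.length ∧ M.sect (FreeGroup.mk l) v = FreeGroup.mk l' := by
  induction l generalizing v with
  | nil => exact ⟨[], le_rfl, M.sect_one v⟩
  | cons a l ih =>
    have h1 : (FreeGroup.mk (a :: l) : FreeGroup S) = optWord (some a) * FreeGroup.mk l := by
      rw [optWord, FreeGroup.mul_mk]; rfl
    obtain ⟨l', h2, h3⟩ := ih v
    obtain ⟨o, ho⟩ := exists_sect M (M.out (FreeGroup.mk l) v) (some a)
    rw [h1, M.sect_mul, ho, h3]
    refine ⟨o.toList ++ l', ?_, ?_⟩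
    · rcases o with _ | p <;> simp <;> omega
    · rcases o with _ | p
      · simp [optWord]
      · simp [optWord, FreeGroup.mul_mk]

/-- If the sections of a product of `n` labels are eventually trivial, they are trivial beyond a
level bounded in terms of `n`: a nontrivial section at a deeper level would repeat along its path
and hence recur at arbitrarily deep levels. -/
lemma sect_eq_one_of_long [Finite S] (l : List (S × Bool)) (N : ℕ)
    (h : ∀ u : List Bool, N ≤ u.length → M.sect (FreeGroup.mk l) u = 1) (u : List Bool)
    (hu : (Nat.card (S × Bool) + 1) ^ l.length ≤ u.length) : M.sect (FreeGroup.mk l) u = 1 := by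
  classical
  have := Fintype.ofFinite S
  set B := (Nat.card (S × Bool) + 1) ^ l.length
  choose L hL1 hL2 using fun v => exists_mk_sect M l v
  -- There are fewer words of at most `l.length` letters than prefixes of `u`, so the sections at
  -- two prefixes are given by the same word.
  obtain ⟨i, j, hij, hf⟩ := Fintype.exists_ne_map_eq_of_card_lt
    (fun (i : Fin (B + 1)) (k : Fin l.length) => (L (u.take i))[(k : ℕ)]?)
    (by simp [B])
  have hLL : L (u.take i) = L (u.take j) := by
    apply List.ext_getElem?
    intro k
    by_cases hk : k < l.length
    · exact congrFun hf ⟨k, hk⟩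
    · rw [List.getElem?_eq_none ((hL1 _).trans (not_lt.1 hk)),
        List.getElem?_eq_none ((hL1 _).trans (not_lt.1 hk))]
  wlog hlt : i < j generalizing i j
  · exact this j i hij.symm hf.symm hLL.symm (lt_of_le_of_ne (not_lt.1 hlt) hij.symm)
  have hsec : M.sect (FreeGroup.mk l) (u.take i) = M.sect (FreeGroup.mk l) (u.take j) := by
    rw [hL2, hL2, hLL]
  set g := M.sect (FreeGroup.mk l) (u.take i) with hg
  set c := (u.take j).drop i with hc
  have hju : (j : ℕ) ≤ u.length := by omega
  have hc1 : M.sect g c = g := by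
    rw [hg, ← M.sect_append, hc]
    have : u.take i = (u.take j).take i := by rw [List.take_take, min_eq_left (by omega)]
    rw [this, List.take_append_drop, ← hsec, hg, ← this]
  have hcl : 1 ≤ c.length := by
    rw [hc, List.length_drop, List.length_take, min_eq_left hju]; omega
  -- Reading the loop `c` any number of times leads back to the section `g`.
  have hpow : ∀ m : ℕ, M.sect g (List.replicate m c).flatten = g := by
    intro m
    induction m with
    | zero => rfl
    | succ m ih => rw [List.replicate_succ, List.flatten_cons, M.sect_append, hc1, ih]
  have hg1 : g = 1 := by
    rw [← hpow N, hg, ← M.sect_append]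
    apply h
    simp only [List.length_append, List.length_flatten, List.map_replicate, List.sum_replicate,
      smul_eq_mul]
    nlinarith
  rw [← List.take_append_drop i u, M.sect_append, ← hg, hg1, M.sect_one]

/-- A level at which the action of a word of length `n` decides whether its germ is trivial. -/
def level (a n : ℕ) : ℕ := n + 3 + (a + 1) ^ n

/-- The germ of a word in the generators is trivial if and only if the word fixes all binary words
of one computable level without producing labels there. -/
theorem psi_eq_one_iff [Finite S] (w : List (Gen S × Bool)) :
    psi M (FreeGroup.mk w) = 1 ↔ ∀ v : List Bool,
      v.length = level (Nat.card (S × Bool)) w.length →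
        (actW M w (v, [])).1 = v ∧ (FreeGroup.mk (actW M w (v, [])).2 : FreeGroup S) = 1 := by
  rw [← germ_psiB, ← map_one germ, germ_eq]
  constructor
  · rintro ⟨N, hN⟩ v hv
    rw [level] at hv
    set v₀ := v.take (w.length + 3) with hv₀
    set t := v.drop (w.length + 3) with ht
    have hvt : v = v₀ ++ t := (List.take_append_drop _ _).symm
    have hv₀l : v₀.length = w.length + 3 := by
      rw [hv₀, List.length_take]; omega
    obtain ⟨h1, h2, h3⟩ := actW_spec M w v₀ (by omega)
    set r := actW M w (v₀, []) with hr
    -- The word rewrites the prefix `v₀` to `r.1` and lets the label `r.2` act on the rest.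
    have key : ∀ u : List Bool, N ≤ u.length → r.1 ++ M.out (FreeGroup.mk r.2) u = v₀ ++ u ∧
        M.sect (FreeGroup.mk r.2) u = 1 := by
      intro u hu
      have := hN (v₀ ++ u) 1 (by rw [List.length_append]; omega)
      rw [h3, mul_one] at this
      exact ⟨congrArg Prod.fst this, congrArg Prod.snd this⟩
    have hlen : r.1.length = v₀.length := by
      have := congrArg List.length (key (List.replicate N true) (by simp)).1
      simpa using this
    have key2 : ∀ u : List Bool, r.1 = v₀ ∧ M.out (FreeGroup.mk r.2) u = u := by
      intro u
      have := (key (u ++ List.replicate N true) (by simp)).1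
      obtain ⟨h4, h5⟩ := List.append_inj this hlen
      refine ⟨h4, ?_⟩
      rw [M.out_append] at h5
      exact (List.append_inj h5 (by simp)).1
    -- The rest `t` is long enough for the section of the label to be trivial already.
    have hone : M.sect (FreeGroup.mk r.2) t = 1 := by
      refine sect_eq_one_of_long M r.2 N (fun u hu => (key u hu).2) t ?_
      calc _ ≤ (Nat.card (S × Bool) + 1) ^ w.length :=
            Nat.pow_le_pow_right (by omega) h2
        _ = t.length := by rw [ht, List.length_drop]; omega
    obtain ⟨-, -, k3⟩ := actW_spec M w v (by omega)
    have h6 := k3 [] 1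
    have h7 := h3 t 1
    rw [List.append_nil] at h6
    rw [← hvt, h6, (key2 t).2, (key2 t).1, hone, ← hvt] at h7
    simp only [M.out_nil, M.sect_nil, List.append_nil, mul_one] at h7
    exact ⟨congrArg Prod.fst h7, congrArg Prod.snd h7⟩
  · intro h
    refine ⟨level (Nat.card (S × Bool)) w.length, fun v k hv => ?_⟩
    have hl : (v.take (level (Nat.card (S × Bool)) w.length)).length =
      level (Nat.card (S × Bool)) w.length := by rw [List.length_take]; omega
    obtain ⟨h1, h2⟩ := h _ hl
    obtain ⟨-, -, h3⟩ := actW_spec M w (v.take (level (Nat.card (S × Bool)) w.length))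
      (by rw [hl, level]; omega)
    have h4 := h3 (v.drop (level (Nat.card (S × Bool)) w.length)) k
    rw [List.take_append_drop, h1, h2, M.out_one, M.sect_one, List.take_append_drop, one_mul] at h4
    rw [h4]
    rfl

end
end TP

namespace TP

/-! ### Computability of the word problem -/

section
variable {α : Type}

/-- One step of the free reduction of a word. -/
def redStep [DecidableEq α] (x : α × Bool) (l : List (α × Bool)) : List (α × Bool) :=
  List.casesOn l [x] fun hd tl => if x.1 = hd.1 ∧ x.2 = !hd.2 then tl else x :: hd :: tl

lemma reduce_eq_foldr [DecidableEq α] (l : List (α × Bool)) :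
    FreeGroup.reduce l = l.foldr redStep [] := by
  induction l with
  | nil => rfl
  | cons x l ih => rw [FreeGroup.reduce.cons, ih]; rfl

variable [Primcodable α]

lemma primrec_redStep [DecidableEq α] : Primrec₂ (redStep (α := α)) := by
  have hc : PrimrecPred fun p : (α × Bool) × (α × Bool) => p.1.1 = p.2.1 ∧ p.1.2 = !p.2.2 :=
    (Primrec.eq.comp (Primrec.fst.comp .fst) (Primrec.fst.comp .snd)).and
      (Primrec.eq.comp (Primrec.snd.comp .fst) (Primrec.not.comp (Primrec.snd.comp .snd)))
  have h1 : Primrec fun p : ((α × Bool) × List (α × Bool)) × ((α × Bool) × List (α × Bool)) =>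
      (p.1.1, p.2.1) := Primrec.pair (Primrec.fst.comp .fst) (Primrec.fst.comp .snd)
  have h2 : Primrec fun p : ((α × Bool) × List (α × Bool)) × ((α × Bool) × List (α × Bool)) =>
      if p.1.1.1 = p.2.1.1 ∧ p.1.1.2 = !p.2.1.2 then p.2.2 else p.1.1 :: p.2.1 :: p.2.2 :=
    Primrec.ite (hc.comp h1) (Primrec.snd.comp .snd)
      (Primrec.list_cons.comp (Primrec.fst.comp .fst)
        (Primrec.list_cons.comp (Primrec.fst.comp .snd) (Primrec.snd.comp .snd)))
  exact Primrec.list_casesOn (f := fun p : (α × Bool) × List (α × Bool) => p.2) Primrec.snd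
    (Primrec.list_cons.comp Primrec.fst (Primrec.const [])) h2.to₂

lemma primrecPred_mk_eq_one :
    PrimrecPred fun l : List (α × Bool) => (FreeGroup.mk l : FreeGroup α) = 1 := by
  classical
  have h : Primrec fun l : List (α × Bool) => l.foldr redStep [] :=
    Primrec.list_foldr Primrec.id (Primrec.const [])
      (primrec_redStep.comp (Primrec.fst.comp .snd) (Primrec.snd.comp .snd)).to₂
  refine (Primrec.eq.comp h (Primrec.const [])).of_eq fun l => ?_
  rw [← reduce_eq_foldr]
  constructor
  · intro h
    rw [FreeGroup.one_eq_mk]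
    exact FreeGroup.reduce.exact (by rw [h, FreeGroup.reduce_nil])
  · intro h
    rw [FreeGroup.one_eq_mk] at h
    exact FreeGroup.reduce.sound h
end

/-- The list of all binary words of length `n`. -/
def words (n : ℕ) : List (List Bool) :=
  Nat.rec [[]] (fun _ l => l.map (List.cons false) ++ l.map (List.cons true)) n

lemma mem_words {n : ℕ} {v : List Bool} : v ∈ words n ↔ v.length = n := by
  induction n generalizing v with
  | zero => simp [words]
  | succ n ih =>
    change v ∈ (words n).map (List.cons false) ++ (words n).map (List.cons true) ↔ _
    rw [List.mem_append, List.mem_map, List.mem_map]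
    obtain _ | ⟨b, v⟩ := v
    · simp
    · cases b <;> simp [ih]

lemma primrec_words : Primrec words := by
  refine Primrec.nat_rec₁ _ ?_
  have h (b : Bool) : Primrec fun l : List (List Bool) => l.map (List.cons b) :=
    Primrec.list_map Primrec.id (Primrec.list_cons.comp (Primrec.const b) Primrec.snd).to₂
  exact Primrec.list_append.comp ((h false).comp Primrec.snd) ((h true).comp Primrec.snd)

lemma primrec_level (a : ℕ) : Primrec (level a) := by
  have : Primrec fun n : ℕ => (a + 1) ^ n := by
    refine (Primrec.nat_rec₁ (f := fun _ x => x * (a + 1)) 1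
      (Primrec.nat_mul.comp Primrec.snd (Primrec.const _))).of_eq fun n => ?_
    induction n with
    | zero => rfl
    | succ n ih => rw [pow_succ, ← ih]
  exact Primrec.nat_add.comp (Primrec.nat_add.comp Primrec.id (Primrec.const 3)) this

section
variable {S : Type} [Primcodable S] [Finite S] (M : Automaton S)

lemma primrec_rawRun : Primrec₂ (rawRun M) := by
  have hn : Primrec (nxt M) := Primrec.dom_finite _
  have h1 : Primrec fun q : ((List Bool × Option (S × Bool)) × List Bool) ×
      (List Bool × Option (S × Bool)) × Bool => nxt M (q.2.1.2, q.2.2) :=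
    hn.comp (Primrec.pair (Primrec.snd.comp (Primrec.fst.comp .snd)) (Primrec.snd.comp .snd))
  exact Primrec.list_foldl Primrec.snd Primrec.fst
    (Primrec.pair (Primrec.list_concat.comp (Primrec.fst.comp (Primrec.fst.comp .snd))
      (Primrec.fst.comp h1)) (Primrec.snd.comp h1)).to₂

lemma primrec_act : Primrec₂ (act M) := by
  have hh : Primrec (headAct M) := Primrec.dom_finite _
  have hg (i : ℕ) : Primrec fun p : (Gen S × Bool) × List Bool × List (S × Bool) =>
      p.2.1.getD i false :=
    (Primrec.list_getD false).comp (Primrec.fst.comp .snd) (Primrec.const i)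
  have h1 := (primrec_rawRun M).comp
    (hh.comp (Primrec.pair Primrec.fst ((hg 0).pair ((hg 1).pair (hg 2)))))
    (Primrec.list_drop.comp (Primrec.const 3) (Primrec.fst.comp .snd))
  have h2 : Primrec (Option.toList : Option (S × Bool) → List (S × Bool)) := Primrec.dom_finite _
  exact Primrec.pair (Primrec.fst.comp h1)
    (Primrec.list_append.comp (h2.comp (Primrec.snd.comp h1)) (Primrec.snd.comp .snd))

lemma primrec_actW : Primrec₂ (actW M) :=
  Primrec.list_foldr Primrec.fst Primrec.snd
    ((primrec_act M).comp (Primrec.fst.comp .snd) (Primrec.snd.comp .snd)).to₂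

lemma primrecPred_psi :
    PrimrecPred fun w : List (Gen S × Bool) => psi M (FreeGroup.mk w) = 1 := by
  have ha : Primrec fun q : List Bool × List (Gen S × Bool) => actW M q.2 (q.1, []) :=
    (primrec_actW M).comp Primrec.snd (Primrec.pair Primrec.fst (Primrec.const []))
  have hR : PrimrecRel fun (v : List Bool) (w : List (Gen S × Bool)) =>
      (actW M w (v, [])).1 = v ∧ (FreeGroup.mk (actW M w (v, [])).2 : FreeGroup S) = 1 :=
    (Primrec.eq.comp (Primrec.fst.comp ha) Primrec.fst).and
      (primrecPred_mk_eq_one.comp (Primrec.snd.comp ha))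
  have hl : Primrec fun w : List (Gen S × Bool) =>
      words (level (Nat.card (S × Bool)) w.length) :=
    primrec_words.comp ((primrec_level _).comp Primrec.list_length)
  refine (hR.forall_mem_list.comp hl Primrec.id).of_eq fun w => ?_
  rw [psi_eq_one_iff]
  simp only [mem_words, id]

/-- The word problem of the image of `psi M`, with respect to any finite alphabet. -/
lemma exists_wp {A : Type} [Primcodable A] [Finite A] (e : A → Gen S) :
    ∃ p : List (A × Bool) → Bool, Computable p ∧
      ∀ w, p w = true ↔ psi M (FreeGroup.map e (FreeGroup.mk w)) = 1 := by
  classical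
  have he : Primrec fun y : A × Bool => (e y.1, y.2) := Primrec.dom_finite _
  have h := (primrecPred_psi M).comp
    (Primrec.list_map (Primrec.id (α := List (A × Bool))) (he.comp Primrec.snd).to₂)
  refine ⟨fun w => decide (psi M (FreeGroup.map e (FreeGroup.mk w)) = 1), ?_, fun w => decide_eq_true_iff⟩
  obtain ⟨_, h⟩ := h
  refine h.to_comp.of_eq fun w => ?_
  rw [FreeGroup.map.mk]
  simp
end

end TP

namespace TP

/-! ### The finite presentation and the sequence of words -/

lemma isFinitelyPresented_of_ker {A : Type} [Group A] {n : ℕ} {f : FreeGroup (Fin n) →* A}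
    (hf : Function.Surjective f) {R : Finset (FreeGroup (Fin n))}
    (hR : f.ker = Subgroup.normalClosure (R : Set (FreeGroup (Fin n)))) :
    IsFinitelyPresented A :=
  ⟨n, R, ⟨((QuotientGroup.quotientMulEquivOfEq hR.symm).trans
    (QuotientGroup.quotientKerEquivOfSurjective f hf)).symm⟩⟩

section
variable {S : Type} (M : Automaton S) {n : ℕ} (e : Gen S ≃ Fin n)

/-- The projection onto `PG M`, its generators being numbered by `e`. -/
def presHom : FreeGroup (Fin n) →* PG M :=
  (PresentedGroup.mk (relators M)).comp (FreeGroup.freeGroupCongr e.symm).toMonoidHom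

lemma presHom_surjective : Function.Surjective (presHom M e) :=
  (PresentedGroup.mk_surjective _).comp (FreeGroup.freeGroupCongr e.symm).surjective

lemma presHom_ker [Finite S] : ∃ R : Finset (FreeGroup (Fin n)),
    (presHom M e).ker = Subgroup.normalClosure (R : Set (FreeGroup (Fin n))) := by
  classical
  refine ⟨((relators_finite (M := M)).image (FreeGroup.freeGroupCongr e)).toFinset, ?_⟩
  rw [Set.Finite.coe_toFinset]
  have h1 : (presHom M e).ker = (Subgroup.normalClosure (relators M)).comap
      (FreeGroup.freeGroupCongr e.symm).toMonoidHom := by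
    rw [presHom, ← MonoidHom.comap_ker]
    congr 1
    exact QuotientGroup.ker_mk' _
  have h2 := Subgroup.map_normalClosure (relators M) (FreeGroup.freeGroupCongr e).toMonoidHom
    (FreeGroup.freeGroupCongr e).surjective
  rw [h1]
  refine Eq.trans ?_ h2
  exact (Subgroup.map_equiv_eq_comap_symm (FreeGroup.freeGroupCongr e) _).symm

lemma theta_presHom (w : FreeGroup (Fin n)) :
    theta M (presHom M e w) = psi M (FreeGroup.map e.symm w) := rfl

/-- The word problem is solvable: equality in the presented group is equality of germs. -/
lemma presHom_wp [Finite S] (hdie : ∀ w : FreeGroup S, ∃ n, M.sect w (List.replicate n true) = 1) :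
    ∃ p : List (Fin n × Bool) → Bool, Computable p ∧
      ∀ w : List (Fin n × Bool), p w = true ↔ FreeGroup.mk w ∈ (presHom M e).ker := by
  obtain ⟨m, ⟨i⟩⟩ := Finite.exists_equiv_fin S
  let _ : Primcodable S := Primcodable.ofEquiv (Fin m) i
  obtain ⟨p, hp, h⟩ := exists_wp M e.symm
  refine ⟨p, hp, fun w => ?_⟩
  rw [h, MonoidHom.mem_ker, ← map_eq_one_iff (theta M) (theta_injective M hdie), theta_presHom]
end

section
variable {Q : Type} (I : Instr Q) {n : ℕ} (e : Gen (SS (Bool ⊕ Q)) ≃ Fin n)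

/-- The word in the numbered generators that represents the configuration `(q, 0, r)`. -/
def cword (q : Q) (r : ℕ) : List (Fin n × Bool) :=
  (e (.inr (rt (.inr q), false)), true) ::
    List.replicate r (e (.inr (rt (.inl true), false)), true)

lemma computable_cword (q : Q) {R : ℕ → ℕ} (hR : Computable R) :
    Computable fun r => cword e q (R r) := by
  have h : Primrec fun r => cword e q r := by
    refine (Primrec.list_cons.comp (Primrec.const (e (.inr (rt (.inr q), false)), true))
      (Primrec.list_map Primrec.list_range
        (Primrec.const (e (.inr (rt (.inl true), false)), true)).to₂)).of_eq fun r => ?_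
    simp [cword, List.map_const']
  exact h.to_comp.comp hR

lemma mk_cword (q : Q) (r : ℕ) :
    FreeGroup.map e.symm (FreeGroup.mk (cword e q r)) = wlh 0 (cw (q, 0, r)) := by
  have hrep (a : Gen (SS (Bool ⊕ Q))) :
      (FreeGroup.mk (List.replicate r (a, true)) : FreeGroup (Gen (SS (Bool ⊕ Q)))) =
        FreeGroup.of a ^ r := by
    rw [FreeGroup.of, FreeGroup.pow_mk, List.flatten_replicate_singleton]
  have hb (s : Bool ⊕ Q) : wlh 0 (bl s) = FreeGroup.of (Sum.inr (rt s, false)) := by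
    simp [wlh, bl, wl, fam]
  rw [FreeGroup.map.mk, cword, List.map_cons, List.map_replicate, ← List.singleton_append,
    ← FreeGroup.mul_mk]
  simp only [Equiv.symm_apply_apply, hrep, cw, rg, map_mul, map_pow, hb, pow_zero, one_mul]
  rfl

/-- The order of a configuration word is finite if and only if the machine halts. -/
lemma isOfFinOrder_cword [Finite Q] (q : Q) (r : ℕ) :
    IsOfFinOrder (presHom (mAut I) e (FreeGroup.mk (cword e q r))) ↔
      (StateTransition.eval (mstep I) (q, 0, r)).Dom := by
  rw [← finOrder_iff, ← psi_wlh, ← mk_cword e, ← theta_presHom,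
    (theta_injective _ (mAut_die I)).isOfFinOrder_iff]
end

end TP

/-- There is a finitely presented NFQ group `A₁` with trivial center, given by a finite
presentation with surjection `f : FreeGroup (Fin n) →* A₁`, and a computable sequence `z`
of words, such that the word problem in `A₁` is solvable but the torsion problem for the
set of words `{z r}` is unsolvable. -/
theorem exists_solvable_wp_unsolvable_torsion :
    ∃ (A : Type) (instA : Group A), letI := instA;
      IsFinitelyPresented A ∧ NFQ A ∧ Subgroup.center A = ⊥ ∧
      ∃ (n : ℕ) (f : FreeGroup (Fin n) →* A),
        Function.Surjective f ∧
        (∃ R : Finset (FreeGroup (Fin n)),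
          f.ker = Subgroup.normalClosure (R : Set (FreeGroup (Fin n)))) ∧
        (∃ p : List (Fin n × Bool) → Bool, Computable p ∧
          ∀ w : List (Fin n × Bool), p w = true ↔ FreeGroup.mk w ∈ f.ker) ∧
        ∃ z : ℕ → List (Fin n × Bool), Computable z ∧
          ¬ ∃ q : ℕ → Bool, Computable q ∧
            ∀ r : ℕ, q r = true ↔ IsOfFinOrder (f (FreeGroup.mk (z r))) := by
  open TP in
  obtain ⟨Q, _, I, q₀, R, hR, hund⟩ := exists_undecidable_machine
  have : Finite (SS (Bool ⊕ Q)) := by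
    have : Finite {u : List Bool // u.length ≤ 5} := List.finite_length_le Bool 5
    infer_instance
  obtain ⟨n, ⟨e⟩⟩ := Finite.exists_equiv_fin (Gen (SS (Bool ⊕ Q)))
  have hdie := mAut_die I
  obtain ⟨R', hR'⟩ := presHom_ker (mAut I) e
  have hsurj := presHom_surjective (mAut I) e
  refine ⟨PG (mAut I), inferInstance, isFinitelyPresented_of_ker hsurj hR',
    PG_noFiniteQuotient (mAut_sumZero I), PG_center _ hdie, n, presHom (mAut I) e, hsurj,
    ⟨R', hR'⟩, presHom_wp _ e hdie, fun r => cword e q₀ (R r), computable_cword e q₀ hR, ?_⟩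
  rintro ⟨q, hq, h⟩
  refine hund (ComputablePred.computable_iff.2 ⟨q, hq, funext fun r => propext ?_⟩)
  rw [h, isOfFinOrder_cword]
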